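/- Assume the abc-conjecture. Let P ∈ ℤ[T] be a separable polynomial of even degree N ≥ 8 with no root in ℚ, and let a_N be its leading coefficient. Then there exists a constant C > 0, depending only on P, such that for every sufficiently large x, the number of squarefree integers d ∉ {0,1} with |d| ≤ x satisfying all of the following is at least C · x / log x: (i) for every prime p, either there exist t, y ∈ ℚ_p with y² = d·P(t), or d·a_N is a square in ℚ_p; (ii) either there exist t, y ∈ ℝ with y² = d·P(t), or d·a_N > 0; and (iii) there exist no t, y ∈ ℚ with y² = d·P(t), and d·a_N is not a square in ℚ. (That is, the twisted hyperelliptic curve y² = d·P(t) has points over every completion of ℚ but no ℚ-rational point, so it fails the Hasse principle.) -/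

import Mathlib

/-!
Let `d₀` be the signed squarefree part of the leading coefficient `a` of `P`, so that `d₀ a` is a
square. The twists that violate the Hasse principle are taken of the form `d = d₀ ℓ`, with `ℓ` a
large prime such that `ℓ ≡ 1` modulo a fixed highly divisible `Q` and `P` has a root modulo `ℓ`.

*Local points* (`locally_soluble`). At the primes `p` with `8 p ∣ Q`, which comprise all primes of bad
reduction and all small primes, `ℓ` is a square in `ℚ_p`, hence so is `d a`, and the points at
infinity are rational. At `p = ℓ` the root of `P` lifts by Hensel's lemma to a point with `y = 0`.
At any other `p`, the polynomial `d P` takes a nonzero square value modulo `p`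
(`exists_square_value`, an instance of the Hasse-Weil bound proved by Stepanov's method), and the
point lifts. Over `ℝ`, `d a > 0`. On the other hand `d a` is `ℓ` times a square, so it is not a
square in `ℚ`.

*Few twists have a rational point* (`count_rational_points`). Let `F` be the binary form of degree
`N` attached to `P`. The abc-conjecture, applied through a polynomial Belyi map that sends the roots
of `P` to `{0, 1}`, gives `rad F(u, v) ≫ max(|u|, |v|) ^ (N - 5/2)` for coprime `u, v`
(`rad_lower`). A rational point with `t = u / v` makes `d F(u, v)` a square, whence
`rad F(u, v) ^ 2 ≤ |d F(u, v)|` and the height of `t` is `O(|d| ^ (1/3))` because `N ≥ 8`. As `t`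
determines `ℓ`, at most `O(x ^ (2/3))` of the twists with `|d| ≤ x` have a rational point.

*Many primes `ℓ`* (`count_good_primes`). The conditions on `ℓ` hold for the large primes `ℓ` below a
prime ideal of degree one in the splitting field of `P` and of the `Q`-th cyclotomic polynomial. That
there are `≫ x / log x` of them follows from a Mertens estimate for degree-one primes (`mertens`),
obtained by factoring the product of the norms of the elements of a box of lattice points; this
product plays the role of a factorial.
-/

open Polynomial

/-- The radical of a natural number: the product of its distinct prime factors. -/
def radNat (m : ℕ) : ℕ := ∏ p ∈ m.primeFactors, p

/-- The abc-conjecture. -/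
def ABCConjecture : Prop :=
  ∀ ε : ℝ, 0 < ε → ∃ K : ℝ, 0 < K ∧
    ∀ a b c : ℕ, 0 < a → 0 < b → 0 < c → Nat.Coprime a b → a + b = c →
      (c : ℝ) ≤ K * (radNat (a * b * c) : ℝ) ^ ((1 : ℝ) + ε)

/-- `d` is a squarefree integer with `d ∉ {0,1}`. -/
def SqfInt (d : ℤ) : Prop :=
  d ≠ 0 ∧ d ≠ 1 ∧ ∀ p : ℕ, p.Prime → ¬ ((p : ℤ) ^ 2 ∣ d)

namespace HasseTwist

/-! ### Polynomial Belyi maps -/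

/-- A polynomial Belyi map: a nonconstant `f ∈ ℚ[X]` all of whose finite critical values lie in
`{0, 1}`. -/
def IsBelyi (f : ℚ[X]) : Prop :=
  0 < f.natDegree ∧ ∀ z : ℂ, aeval z (derivative f) = 0 → aeval z f = 0 ∨ aeval z f = 1

theorem IsBelyi.comp {f g : ℚ[X]} (hf : IsBelyi f) (hg : 0 < g.natDegree)
    (hc : ∀ z : ℂ, aeval z (derivative g) = 0 →
      aeval (aeval z g) f = 0 ∨ aeval (aeval z g) f = 1) : IsBelyi (f.comp g) := by
  refine ⟨by rw [natDegree_comp]; exact Nat.mul_pos hf.1 hg, fun z hz => ?_⟩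
  rw [derivative_comp, map_mul, aeval_comp, mul_eq_zero] at hz
  rw [aeval_comp]
  rcases hz with h | h
  · exact hc z h
  · exact hf.2 _ h

/-- Belyi's algorithm for rational points. If `a < c` are the extreme points of `S` and `b` is a third
one, a polynomial proportional to `(X - a) ^ m * (X - c) ^ n` with critical point `b` identifies
`a` with `c` and has rational critical values, so the number of points decreases. -/
theorem belyi_rat (k : ℕ) : ∀ S : Finset ℚ, S.card ≤ k →
    ∃ f : ℚ[X], IsBelyi f ∧ ∀ s ∈ S, f.eval s = 0 ∨ f.eval s = 1 := by
  induction k with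
  | zero =>
    intro S hS
    refine ⟨X, ⟨by simp, by simp⟩, ?_⟩
    have : S = ∅ := by simpa using hS
    simp [this]
  | succ k ih =>
    intro S hS
    by_cases hcard : S.card ≤ 2
    · -- at most two points: an affine map sends them into `{0, 1}`
      rcases S.eq_empty_or_nonempty with rfl | hne
      · exact ih ∅ (by simp)
      set a := S.min' hne
      set c := S.max' hne
      have hac : a ≤ c := S.min'_le_max' hne
      rcases hac.eq_or_lt with heq | hlt
      · refine ⟨X - C a, ⟨by simp, by simp⟩, fun s hs => ?_⟩
        have h1 := S.min'_le s hs
        have h2 := S.le_max' s hs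
        left
        have : s = a := le_antisymm (h2.trans heq.ge) h1
        simp [this]
      · have hca : c - a ≠ 0 := by linarith [hlt] |> fun (h : 0 < c - a) => h.ne'
        refine ⟨C (c - a)⁻¹ * (X - C a), ⟨?_, ?_⟩, fun s hs => ?_⟩
        · rw [natDegree_C_mul (inv_ne_zero hca)]; simp
        · intro z hz
          exfalso
          have h2 : ((c : ℂ) - (a : ℂ)) ≠ 0 := by exact_mod_cast hca
          simp at hz
          exact h2 hz
        · have hsub : ({a, c} : Finset ℚ) ⊆ S := by
            intro x hx
            simp only [Finset.mem_insert, Finset.mem_singleton] at hx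
            rcases hx with rfl | rfl
            · exact S.min'_mem hne
            · exact S.max'_mem hne
          have : ({a, c} : Finset ℚ) = S :=
            Finset.eq_of_subset_of_card_le hsub (by rw [Finset.card_pair hlt.ne]; exact hcard)
          rw [← this] at hs
          simp only [Finset.mem_insert, Finset.mem_singleton] at hs
          rcases hs with rfl | rfl
          · left; simp
          · right; simp [hca]
    · push Not at hcard
      have hne : S.Nonempty := Finset.card_pos.mp (by omega)
      set a := S.min' hne with ha
      set c := S.max' hne with hc
      have haS : a ∈ S := S.min'_mem hne
      have hcS : c ∈ S := S.max'_mem hne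
      obtain ⟨b, hbS, hba, hbc⟩ : ∃ b ∈ S, b ≠ a ∧ b ≠ c := by
        by_contra! h
        have : S ⊆ {a, c} := by
          intro x hx
          by_cases hxa : x = a
          · simp [hxa]
          · simp [h x hx hxa]
        have := (Finset.card_le_card this).trans Finset.card_le_two
        omega
      have hab : a < b := lt_of_le_of_ne (S.min'_le b hbS) hba.symm
      have hbc' : b < c := lt_of_le_of_ne (S.le_max' b hbS) hbc
      have hca : 0 < c - a := by linarith
      -- `b` divides the segment `[a, c]` in the ratio `m : n`
      obtain ⟨m, n, hm, hn, hmn⟩ : ∃ m n : ℕ, 0 < m ∧ 0 < n ∧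
          (m : ℚ) * (c - b) = n * (b - a) := by
        set r := (b - a) / (c - b)
        have hr : 0 < r := div_pos (by linarith) (by linarith)
        refine ⟨r.num.toNat, r.den, ?_, r.den_pos, ?_⟩
        · have := Rat.num_pos.mpr hr; omega
        · have h1 : ((r.num.toNat : ℤ) : ℚ) = r.num := by
            rw [Int.toNat_of_nonneg (Rat.num_pos.mpr hr).le]
          have h2 : (r.num : ℚ) = r * r.den := by rw [Rat.mul_den_eq_num]
          have h3 : r * (c - b) = b - a := div_mul_cancel₀ _ (by linarith)
          have h4 : (r.num.toNat : ℚ) = r * r.den := by rw [← h2, ← h1, Int.cast_natCast]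
          rw [h4]; linear_combination (r.den : ℚ) * h3
      set g : ℚ[X] := (X - C a) ^ m * (C c - X) ^ n with hg
      have hga : g.eval a = 0 := by simp [hg, hm.ne']
      have hgc : g.eval c = 0 := by simp [hg, hn.ne']
      have hgdeg : 0 < g.natDegree := by
        have h2 : (C c - X : ℚ[X]).natDegree = 1 := by
          rw [show (C c - X : ℚ[X]) = -(X - C c) by ring, natDegree_neg, natDegree_X_sub_C]
        have h3 : (C c - X : ℚ[X]) ≠ 0 := fun h => by simp [h] at h2
        rw [hg, natDegree_mul (pow_ne_zero _ (X_sub_C_ne_zero a)) (pow_ne_zero _ h3),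
          natDegree_pow, natDegree_pow, natDegree_X_sub_C]
        omega
      have hcrit : ∀ z : ℂ, aeval z (derivative g) = 0 → ∃ s ∈ S, z = (s : ℂ) := by
        intro z hz
        by_cases h1 : z = (a : ℂ)
        · exact ⟨a, haS, h1⟩
        by_cases h2 : z = (c : ℂ)
        · exact ⟨c, hcS, h2⟩
        refine ⟨b, hbS, ?_⟩
        have e1 : z - a ≠ 0 := sub_ne_zero.mpr h1
        have e2 : (c : ℂ) - z ≠ 0 := sub_ne_zero.mpr (Ne.symm h2)
        obtain ⟨m', rfl⟩ : ∃ m', m = m' + 1 := ⟨m - 1, by omega⟩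
        obtain ⟨n', rfl⟩ : ∃ n', n = n' + 1 := ⟨n - 1, by omega⟩
        have hz' : (z - a) ^ m' * (c - z) ^ n' *
            (((m' + 1 : ℕ) : ℂ) * (c - z) - ((n' + 1 : ℕ) : ℂ) * (z - a)) = 0 := by
          rw [← hz, hg]
          simp only [derivative_mul, derivative_pow, derivative_X, derivative_C,
            map_add, map_mul, map_pow, map_sub, map_natCast, aeval_X, aeval_C, map_one, map_zero,
            Nat.add_sub_cancel, eq_ratCast]
          push_cast
          ring
        have hz2 := (mul_eq_zero.mp hz').resolve_left
          (mul_ne_zero (pow_ne_zero _ e1) (pow_ne_zero _ e2))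
        have hmn' : ((m' + 1 : ℕ) : ℂ) * (c - b) = ((n' + 1 : ℕ) : ℂ) * (b - a) := by
          exact_mod_cast hmn
        have h5 : (((m' + 1 : ℕ) : ℂ) + ((n' + 1 : ℕ) : ℂ)) * (z - b) = 0 := by
          linear_combination hmn' - hz2
        have h6 : (((m' + 1 : ℕ) : ℂ) + ((n' + 1 : ℕ) : ℂ)) ≠ 0 := by
          norm_cast
        exact sub_eq_zero.mp ((mul_eq_zero.mp h5).resolve_left h6)
      have hlt : (S.image g.eval).card < S.card := by
        refine lt_of_le_of_ne Finset.card_image_le fun h => ?_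
        have hinj := Finset.card_image_iff.mp h
        have := hinj haS hcS (by simp only [hga, hgc])
        linarith
      obtain ⟨f, hf, hfS⟩ := ih (S.image g.eval) (by omega)
      refine ⟨f.comp g, hf.comp hgdeg fun z hz => ?_, fun s hs => ?_⟩
      · obtain ⟨s, hs, rfl⟩ := hcrit z hz
        have e : aeval (aeval (s : ℂ) g) f = ((f.eval (g.eval s) : ℚ) : ℂ) := by
          rw [show (s : ℂ) = algebraMap ℚ ℂ s by simp, aeval_algebraMap_apply_eq_algebraMap_eval,
            aeval_algebraMap_apply_eq_algebraMap_eval]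
          simp
        rw [e]
        exact_mod_cast hfS _ (Finset.mem_image_of_mem _ hs)
      · rw [eval_comp]
        exact hfS _ (Finset.mem_image_of_mem _ hs)

theorem isIntegral_aeval_rat {b : ℂ} (hb : IsIntegral ℚ b) (g : ℚ[X]) :
    IsIntegral ℚ (aeval b g) :=
  adjoin_le_integralClosure hb (aeval_mem_adjoin_singleton ℚ b)

theorem minpoly_aeval_natDegree_le {b : ℂ} (hb : IsIntegral ℚ b) (g : ℚ[X]) :
    (minpoly ℚ (aeval b g)).natDegree ≤ (minpoly ℚ b).natDegree := by
  have := IntermediateField.adjoin.finiteDimensional hb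
  have h : IntermediateField.adjoin ℚ {aeval b g} ≤ IntermediateField.adjoin ℚ {b} := by
    rw [IntermediateField.adjoin_simple_le_iff]
    exact IntermediateField.algebra_adjoin_le_adjoin _ _ (aeval_mem_adjoin_singleton ℚ b)
  rw [← IntermediateField.adjoin.finrank (isIntegral_aeval_rat hb g),
    ← IntermediateField.adjoin.finrank hb]
  exact LinearMap.finrank_le_finrank_of_injective
    (f := (IntermediateField.inclusion h).toLinearMap) (IntermediateField.inclusion h).injective

/-- Belyi's algorithm with polynomials. The induction is on the largest degree `n` of a point of
`S`, and on the number of points of that degree: composing with the minimal polynomial of one of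
them sends it to `0`, while the new critical values have degree less than `n`. -/
theorem belyi_alg (n : ℕ) : ∀ k : ℕ, ∀ S : Finset ℂ,
    (∀ s ∈ S, IsIntegral ℚ s ∧ (minpoly ℚ s).natDegree ≤ n) →
    (S.filter fun s => (minpoly ℚ s).natDegree = n).card ≤ k →
    ∃ f : ℚ[X], IsBelyi f ∧ ∀ s ∈ S, aeval s f = 0 ∨ aeval s f = 1 := by
  classical
  induction n with
  | zero =>
    intro k S hS _
    refine ⟨X, ⟨by simp, by simp⟩, fun s hs => ?_⟩
    have h1 := minpoly.natDegree_pos (hS s hs).1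
    have h2 := (hS s hs).2
    omega
  | succ n ihn =>
    rcases Nat.eq_zero_or_pos n with rfl | hn
    · intro k S hS _
      have hrat : ∀ s ∈ S, ∃ q : ℚ, (q : ℂ) = s := by
        intro s hs
        have h1 := minpoly.natDegree_pos (hS s hs).1
        have h2 := (hS s hs).2
        obtain ⟨q, hq⟩ := minpoly.natDegree_eq_one_iff.mp (by omega : (minpoly ℚ s).natDegree = 1)
        exact ⟨q, by simpa using hq⟩
      choose! q hq using hrat
      obtain ⟨f, hf, hfS⟩ := belyi_rat _ (S.image q) le_rfl
      refine ⟨f, hf, fun s hs => ?_⟩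
      have e : aeval s f = ((f.eval (q s) : ℚ) : ℂ) := by
        conv_lhs => rw [← hq s hs]
        rw [show (q s : ℂ) = algebraMap ℚ ℂ (q s) by simp,
          aeval_algebraMap_apply_eq_algebraMap_eval]
        simp
      rw [e]
      exact_mod_cast hfS _ (Finset.mem_image_of_mem _ hs)
    intro k
    have base : ∀ S : Finset ℂ,
        (∀ s ∈ S, IsIntegral ℚ s ∧ (minpoly ℚ s).natDegree ≤ n + 1) →
        (S.filter fun s => (minpoly ℚ s).natDegree = n + 1) = ∅ →
        ∃ f : ℚ[X], IsBelyi f ∧ ∀ s ∈ S, aeval s f = 0 ∨ aeval s f = 1 := by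
      intro S hS h0
      refine ihn _ S (fun s hs => ⟨(hS s hs).1, ?_⟩) le_rfl
      have h1 := (hS s hs).2
      have h2 : (minpoly ℚ s).natDegree ≠ n + 1 := fun h => by
        have : s ∈ (S.filter fun s => (minpoly ℚ s).natDegree = n + 1) := by simp [hs, h]
        simp [h0] at this
      omega
    induction k with
    | zero =>
      intro S hS h0
      exact base S hS (by simpa using h0)
    | succ k ihk =>
      intro S hS hk
      rcases (S.filter fun s => (minpoly ℚ s).natDegree = n + 1).eq_empty_or_nonempty with h0 | h0
      · exact base S hS h0
      obtain ⟨s0, hs0⟩ := h0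
      have hs0' := Finset.mem_filter.mp hs0
      set g := minpoly ℚ s0 with hg
      have hgdeg : g.natDegree = n + 1 := hs0'.2
      have hg' : derivative g ≠ 0 := by
        intro h
        have := derivative_eq_zero.mp h
        omega
      set T : Finset ℂ := (derivative g).rootSet_finite ℂ |>.toFinset with hT
      have hmemT : ∀ z, z ∈ T ↔ aeval z (derivative g) = 0 := by
        intro z
        simp [hT, mem_rootSet, hg']
      have hTint : ∀ z ∈ T, IsIntegral ℚ z := fun z hz =>
        IsAlgebraic.isIntegral ⟨derivative g, hg', (hmemT z).mp hz⟩
      have hTdeg : ∀ z ∈ T, (minpoly ℚ z).natDegree ≤ n := fun z hz => by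
        have h1 := natDegree_le_of_dvd (minpoly.dvd ℚ z ((hmemT z).mp hz)) hg'
        have h2 := natDegree_derivative_lt (p := g) (by omega)
        omega
      have hU : ∀ s ∈ S.image (fun z => aeval z g) ∪ T.image (fun z => aeval z g),
          IsIntegral ℚ s ∧ (minpoly ℚ s).natDegree ≤ n + 1 := by
        intro s hs
        rcases Finset.mem_union.mp hs with hs | hs
        · obtain ⟨z, hz, rfl⟩ := Finset.mem_image.mp hs
          exact ⟨isIntegral_aeval_rat (hS z hz).1 g,
            (minpoly_aeval_natDegree_le (hS z hz).1 g).trans (hS z hz).2⟩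
        · obtain ⟨z, hz, rfl⟩ := Finset.mem_image.mp hs
          exact ⟨isIntegral_aeval_rat (hTint z hz) g,
            (minpoly_aeval_natDegree_le (hTint z hz) g).trans ((hTdeg z hz).trans (by omega))⟩
      have hUc : ((S.image (fun z => aeval z g) ∪ T.image (fun z => aeval z g)).filter
          fun s => (minpoly ℚ s).natDegree = n + 1).card ≤ k := by
        have hsub : ((S.image (fun z => aeval z g) ∪ T.image (fun z => aeval z g)).filter
            fun s => (minpoly ℚ s).natDegree = n + 1) ⊆
            (((S.filter fun s => (minpoly ℚ s).natDegree = n + 1).erase s0).image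
              (fun z => aeval z g)) := by
          intro s hs
          obtain ⟨hs, hsd⟩ := Finset.mem_filter.mp hs
          rcases Finset.mem_union.mp hs with hs | hs
          · obtain ⟨z, hz, rfl⟩ := Finset.mem_image.mp hs
            refine Finset.mem_image_of_mem _ (Finset.mem_erase.mpr ⟨?_, Finset.mem_filter.mpr
              ⟨hz, ?_⟩⟩)
            · rintro rfl
              simp only [hg, minpoly.aeval] at hsd
              rw [minpoly.zero, natDegree_X] at hsd
              omega
            · have h1 := (hS z hz).2
              have h2 := minpoly_aeval_natDegree_le (hS z hz).1 g
              omega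
          · obtain ⟨z, hz, rfl⟩ := Finset.mem_image.mp hs
            have h1 := hTdeg z hz
            have h2 := minpoly_aeval_natDegree_le (hTint z hz) g
            omega
        have h1 := (Finset.card_le_card hsub).trans Finset.card_image_le
        rw [Finset.card_erase_of_mem hs0] at h1
        omega
      obtain ⟨f, hf, hfS⟩ := ihk _ hU hUc
      refine ⟨f.comp g, hf.comp (by omega) fun z hz => ?_, fun s hs => ?_⟩
      · exact hfS _ (Finset.mem_union_right _ (Finset.mem_image_of_mem _ ((hmemT z).mpr hz)))
      · rw [aeval_comp]
        exact hfS _ (Finset.mem_union_left _ (Finset.mem_image_of_mem _ hs))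

/-- Every nonzero polynomial over `ℚ` has a polynomial Belyi map sending all its roots to
`{0, 1}`. -/
theorem exists_belyi (Q : ℚ[X]) (hQ : Q ≠ 0) :
    ∃ f : ℚ[X], IsBelyi f ∧ ∀ z : ℂ, aeval z Q = 0 → aeval z f = 0 ∨ aeval z f = 1 := by
  classical
  set S : Finset ℂ := (Q.rootSet_finite ℂ).toFinset with hS
  have hmem : ∀ z, z ∈ S ↔ aeval z Q = 0 := by
    intro z
    simp [hS, mem_rootSet, hQ]
  obtain ⟨f, hf, hfS⟩ := belyi_alg Q.natDegree _ S (fun z hz =>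
    ⟨IsAlgebraic.isIntegral ⟨Q, hQ, (hmem z).mp hz⟩,
      natDegree_le_of_dvd (minpoly.dvd ℚ z ((hmem z).mp hz)) hQ⟩) le_rfl
  exact ⟨f, hf, fun z hz => hfS z ((hmem z).mpr hz)⟩

/-! ### Distinct roots of `f (f - 1)` for a Belyi polynomial `f` -/

/-- For a Belyi polynomial `f` of degree `D`, the product `f (f - 1)` has at most `D + 1` distinct
complex roots: the multiplicities in excess of `1` are accounted for by the `D - 1` roots
of `f'`. -/
theorem IsBelyi.natDegree_radical_le {f : ℚ[X]} (hf : IsBelyi f) :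
    (UniqueFactorizationMonoid.radical (f * (f - 1))).natDegree ≤ f.natDegree + 1 := by
  classical
  set h := f * (f - 1) with hh
  have hf0 : f ≠ 0 := fun h => by simpa [h] using hf.1
  have hdeg1 : (f - 1).natDegree = f.natDegree := by
    rw [← C_1, natDegree_sub_C]
  have hf1 : f - 1 ≠ 0 := fun h => by
    rw [h] at hdeg1; have := hf.1; simp at hdeg1; omega
  have hh0 : h ≠ 0 := mul_ne_zero hf0 hf1
  have hdegh : h.natDegree = 2 * f.natDegree := by
    rw [hh, natDegree_mul hf0 hf1, hdeg1]; ring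
  have hf' : derivative f ≠ 0 := by
    intro h; have := derivative_eq_zero.mp h; have := hf.1; omega
  set φ := algebraMap ℚ ℂ
  have inj : Function.Injective φ := φ.injective
  have m0 : ∀ {p : ℚ[X]}, p ≠ 0 → p.map φ ≠ 0 := fun hp => (Polynomial.map_ne_zero_iff inj).mpr hp
  have card : ∀ p : ℚ[X], (p.map φ).roots.card = p.natDegree := fun p => by
    rw [← (IsAlgClosed.splits (p.map φ)).natDegree_eq_card_roots, natDegree_map]
  -- the roots of `f'`, together with one copy of each root of `f (f - 1)`, make up all the roots
  have key : ((derivative f).map φ).roots + (h.map φ).roots.dedup = (h.map φ).roots := by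
    ext z
    rw [Multiset.count_add, Multiset.count_dedup, count_roots, count_roots]
    by_cases hz : z ∈ (h.map φ).roots
    · rw [if_pos hz]
      have hz' : (h.map φ).IsRoot z := (mem_roots (m0 hh0)).mp hz
      have hmul : h.map φ = f.map φ * (f - 1).map φ := by rw [hh, Polynomial.map_mul]
      rw [hmul, rootMultiplicity_mul (by rw [← hmul]; exact m0 hh0)]
      have hd1 : derivative (f - 1) = derivative f := by simp
      rw [hmul, IsRoot, eval_mul, mul_eq_zero] at hz'
      have hsub : (f - 1).map φ = f.map φ - 1 := by simp
      rcases hz' with h0 | h1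
      · have e1 : rootMultiplicity z ((f - 1).map φ) = 0 := by
          apply rootMultiplicity_eq_zero
          rw [IsRoot, hsub, eval_sub, h0]; simp
        have e2 := derivative_rootMultiplicity_of_root (p := f.map φ) (t := z) h0
        have e3 : 0 < rootMultiplicity z (f.map φ) := (rootMultiplicity_pos (m0 hf0)).mpr h0
        rw [derivative_map] at e2
        omega
      · have e1 : rootMultiplicity z (f.map φ) = 0 := by
          apply rootMultiplicity_eq_zero
          rw [hsub, eval_sub, sub_eq_zero] at h1
          rw [IsRoot, h1]; simp
        have e2 := derivative_rootMultiplicity_of_root (p := (f - 1).map φ) (t := z) h1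
        have e3 : 0 < rootMultiplicity z ((f - 1).map φ) := (rootMultiplicity_pos (m0 hf1)).mpr h1
        rw [derivative_map, hd1] at e2
        omega
    · rw [if_neg hz, rootMultiplicity_eq_zero, rootMultiplicity_eq_zero]
      · intro hc; exact hz ((mem_roots (m0 hh0)).mpr hc)
      · intro hc
        apply hz
        rw [mem_roots (m0 hh0)]
        have hc' : aeval z (derivative f) = 0 := by
          rw [← eval_map_algebraMap]; exact hc
        have := hf.2 z hc'
        rw [IsRoot, eval_map_algebraMap, hh, map_mul, map_sub, map_one, mul_eq_zero, sub_eq_zero]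
        exact this
  have hc := congrArg Multiset.card key
  rw [Multiset.card_add, card, card, hdegh] at hc
  have hd := natDegree_derivative f
  set G := UniqueFactorizationMonoid.radical h with hG
  have hG0 : G ≠ 0 := UniqueFactorizationMonoid.radical_ne_zero
  have hGsep : G.Separable :=
    (PerfectField.separable_iff_squarefree).mpr UniqueFactorizationMonoid.squarefree_radical
  have hle : (G.map φ).roots ≤ (h.map φ).roots.dedup := by
    rw [Multiset.le_iff_subset (nodup_roots hGsep.map)]
    intro z hz
    rw [Multiset.mem_dedup]
    exact Multiset.mem_of_le (roots.le_of_dvd (m0 hh0)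
      (Polynomial.map_dvd φ UniqueFactorizationMonoid.radical_dvd_self)) hz
  have := Multiset.card_le_card hle
  rw [card] at this
  have := hf.1
  omega

/-- If all roots of the separable polynomial `P` lie above `{0, 1}`, then the radical of `f (f - 1)`
is `P * W` with `W` of degree at most `D + 1 - deg P`. That `P * W` has all roots of `f (f - 1)`
is recorded by `S` and `k`. -/
theorem IsBelyi.radical_data {f P : ℚ[X]} (hf : IsBelyi f) (hP : P.Separable)
    (hPf : ∀ z : ℂ, aeval z P = 0 → aeval z f = 0 ∨ aeval z f = 1) :
    ∃ (W S : ℚ[X]) (k : ℕ), (P * W) ^ k = f * (f - 1) * S ∧ W ∣ f * (f - 1) ∧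
      P.natDegree + W.natDegree ≤ f.natDegree + 1 := by
  have hf0 : f ≠ 0 := fun h => by simpa [h] using hf.1
  have hf1 : f - 1 ≠ 0 := fun h => by
    have hdeg1 : (f - 1).natDegree = f.natDegree := by
      rw [← C_1, natDegree_sub_C]
    rw [h] at hdeg1; have := hf.1; simp at hdeg1; omega
  have hh0 : f * (f - 1) ≠ 0 := mul_ne_zero hf0 hf1
  have hle := hf.natDegree_radical_le
  have hPh : P ∣ f * (f - 1) := by
    rw [← Polynomial.map_dvd_map' (algebraMap ℚ ℂ)]
    apply (IsAlgClosed.splits _).dvd_of_roots_le_roots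
      ((Polynomial.map_ne_zero_iff (algebraMap ℚ ℂ).injective).mpr hP.ne_zero)
    rw [Multiset.le_iff_subset (nodup_roots hP.map)]
    intro z hz
    have h1 := (mem_roots'.mp hz).2
    rw [mem_roots ((Polynomial.map_ne_zero_iff (algebraMap ℚ ℂ).injective).mpr hh0), IsRoot,
      eval_map_algebraMap, map_mul, map_sub, map_one, mul_eq_zero, sub_eq_zero]
    apply hPf
    rwa [IsRoot, eval_map_algebraMap] at h1
  obtain ⟨W, hW⟩ := (UniqueFactorizationMonoid.dvd_radical_iff hP.squarefree.isRadical hh0).mpr hPh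
  obtain ⟨k, S, hS⟩ := UniqueFactorizationMonoid.exists_dvd_radical_self_pow hh0
  refine ⟨W, S, k, by rw [← hW, hS], ?_, ?_⟩
  · exact (Dvd.intro_left P hW.symm).trans UniqueFactorizationMonoid.radical_dvd_self
  · have hG0 : UniqueFactorizationMonoid.radical (f * (f - 1)) ≠ 0 :=
      UniqueFactorizationMonoid.radical_ne_zero
    rw [hW] at hG0 hle
    rwa [natDegree_mul (left_ne_zero_of_mul hG0) (right_ne_zero_of_mul hG0)] at hle

/-! ### Radicals and values of binary forms -/

theorem radNat_pos (m : ℕ) : 0 < radNat m :=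
  Finset.prod_pos fun _ hp => (Nat.prime_of_mem_primeFactors hp).pos

theorem radNat_le_self {m : ℕ} (hm : m ≠ 0) : radNat m ≤ m :=
  Nat.le_of_dvd (Nat.pos_of_ne_zero hm) (Nat.prod_primeFactors_dvd m)

/-- The factor `k` absorbs the prime factors of `m` that do not divide `n`. -/
theorem radNat_le_mul {m n k : ℕ} (hn : n ≠ 0) (hk : k ≠ 0)
    (h : ∀ p : ℕ, p.Prime → p ∣ m → p ∣ n * k) : radNat m ≤ radNat n * k := by
  by_cases hm : m = 0
  · subst hm
    have := Nat.mul_pos (radNat_pos n) (Nat.pos_of_ne_zero hk)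
    rwa [show radNat 0 = 1 by simp [radNat]]
  have hsub : m.primeFactors ⊆ n.primeFactors ∪ k.primeFactors := by
    intro p hp
    rw [Nat.mem_primeFactors] at hp
    rw [← Nat.primeFactors_mul hn hk, Nat.mem_primeFactors]
    exact ⟨hp.1, h p hp.1 hp.2.1, mul_ne_zero hn hk⟩
  have h1 : radNat m ≤ ∏ p ∈ n.primeFactors ∪ k.primeFactors, p := by
    refine Finset.prod_le_prod_of_subset_of_one_le' hsub fun p hp _ => ?_
    rcases Finset.mem_union.mp hp with hp | hp <;> exact (Nat.prime_of_mem_primeFactors hp).pos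
  have h2 : ∏ p ∈ n.primeFactors ∪ k.primeFactors, p ≤ radNat n * radNat k := by
    have h3 := Finset.prod_union_inter (s₁ := n.primeFactors) (s₂ := k.primeFactors)
      (f := fun p : ℕ => p)
    have h4 : 0 < ∏ p ∈ n.primeFactors ∩ k.primeFactors, p :=
      Finset.prod_pos fun p hp => (Nat.prime_of_mem_primeFactors (Finset.mem_inter.mp hp).1).pos
    change _ ≤ (∏ p ∈ n.primeFactors, p) * ∏ p ∈ k.primeFactors, p
    rw [← h3]
    exact Nat.le_mul_of_pos_right _ h4
  exact h1.trans (h2.trans (Nat.mul_le_mul_left _ (radNat_le_self hk)))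

/-- The abc-conjecture for integers of arbitrary signs. -/
theorem abc_int (habc : ABCConjecture) {ε : ℝ} (hε : 0 < ε) : ∃ K : ℝ, 0 < K ∧
    ∀ a b c : ℤ, a ≠ 0 → b ≠ 0 → c ≠ 0 → IsCoprime a b → a + b = c →
      ((max |a| |c| : ℤ) : ℝ) ≤ K * (radNat (a * b * c).natAbs : ℝ) ^ (1 + ε) := by
  obtain ⟨K, hK, h⟩ := habc ε hε
  refine ⟨K, hK, fun a b c ha hb hc hab habc' => ?_⟩
  have hac : IsCoprime a c := by
    rw [← habc']; simpa using hab.mul_add_left_right 1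
  have hbc : IsCoprime b c := by
    rw [← habc', add_comm]; simpa using hab.symm.mul_add_left_right 1
  have ha' := Int.natAbs_pos.mpr ha
  have hb' := Int.natAbs_pos.mpr hb
  have hc' := Int.natAbs_pos.mpr hc
  have key : ((max a.natAbs (max b.natAbs c.natAbs) : ℕ) : ℝ) ≤
      K * (radNat (a * b * c).natAbs : ℝ) ^ (1 + ε) := by
    rw [Int.natAbs_mul, Int.natAbs_mul]
    have hcases : a.natAbs + b.natAbs = c.natAbs ∨ a.natAbs + c.natAbs = b.natAbs ∨
        b.natAbs + c.natAbs = a.natAbs := by omega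
    rcases hcases with e | e | e
    · have := h _ _ _ ha' hb' hc' (Int.isCoprime_iff_gcd_eq_one.mp hab) e
      rwa [max_eq_right (by omega : b.natAbs ≤ c.natAbs), max_eq_right (by omega)]
    · have := h _ _ _ ha' hc' hb' (Int.isCoprime_iff_gcd_eq_one.mp hac) e
      rw [max_eq_left (by omega : c.natAbs ≤ b.natAbs), max_eq_right (by omega)]
      rwa [mul_right_comm] at this
    · have := h _ _ _ hb' hc' ha' (Int.isCoprime_iff_gcd_eq_one.mp hbc) e
      rw [max_eq_left (by omega : max b.natAbs c.natAbs ≤ a.natAbs)]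
      rwa [mul_comm (b.natAbs * c.natAbs), ← mul_assoc] at this
  refine le_trans ?_ key
  have : max |a| |c| ≤ ((max a.natAbs (max b.natAbs c.natAbs) : ℕ) : ℤ) := by
    rw [Int.abs_eq_natAbs, Int.abs_eq_natAbs]
    push_cast
    omega
  have h2 : ((max |a| |c| : ℤ) : ℝ) ≤ (((max a.natAbs (max b.natAbs c.natAbs) : ℕ) : ℤ) : ℝ) :=
    Int.cast_le.mpr this
  rwa [Int.cast_natCast] at h2

/-- The value at `(u, v)` of the binary form `v ^ deg p * p (u / v)`. -/
def homEval (p : ℤ[X]) (u v : ℤ) : ℤ :=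
  ∑ i ∈ Finset.range (p.natDegree + 1), p.coeff i * u ^ i * v ^ (p.natDegree - i)

theorem homEval_cast (p : ℤ[X]) (u : ℤ) {v : ℤ} (hv : v ≠ 0) :
    (homEval p u v : ℚ) = (v : ℚ) ^ p.natDegree * aeval ((u : ℚ) / v) p := by
  have hv' : (v : ℚ) ≠ 0 := by exact_mod_cast hv
  rw [homEval, aeval_eq_sum_range, Finset.mul_sum]
  push_cast
  refine Finset.sum_congr rfl fun i hi => ?_
  have hi' : i ≤ p.natDegree := by simp at hi; omega
  rw [zsmul_eq_mul, div_pow, ← pow_sub_mul_pow (v : ℚ) hi']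
  field_simp

/-- The sum of the absolute values of the coefficients. -/
def coeffSum (p : ℤ[X]) : ℤ := ∑ i ∈ Finset.range (p.natDegree + 1), |p.coeff i|

theorem coeffSum_pos {p : ℤ[X]} (hp : p ≠ 0) : 1 ≤ coeffSum p := by
  have h1 : |p.coeff p.natDegree| ≤ coeffSum p :=
    Finset.single_le_sum (f := fun i => |p.coeff i|) (fun i _ => abs_nonneg _) (by simp)
  have h2 : p.coeff p.natDegree ≠ 0 := by simpa using hp
  have := Int.one_le_abs h2
  omega

theorem homEval_abs_le (p : ℤ[X]) (u v : ℤ) :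
    |homEval p u v| ≤ coeffSum p * (max |u| |v|) ^ p.natDegree := by
  rw [homEval, coeffSum, Finset.sum_mul]
  refine (Finset.abs_sum_le_sum_abs _ _).trans (Finset.sum_le_sum fun i hi => ?_)
  have hi' : i ≤ p.natDegree := by simp at hi; omega
  rw [abs_mul, abs_mul, abs_pow, abs_pow, mul_assoc, ← pow_mul_pow_sub _ hi']
  gcongr <;> simp

/-- A homogeneous form is its leading term plus a multiple of `v`. -/
theorem homEval_sub_lead (p : ℤ[X]) (hp : 0 < p.natDegree) (u v : ℤ) : ∃ w : ℤ,
    homEval p u v = p.leadingCoeff * u ^ p.natDegree + v * w ∧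
    |w| ≤ coeffSum p * (max |u| |v|) ^ (p.natDegree - 1) := by
  refine ⟨∑ i ∈ Finset.range p.natDegree, p.coeff i * u ^ i * v ^ (p.natDegree - 1 - i), ?_, ?_⟩
  · rw [homEval, Finset.sum_range_succ, add_comm, Finset.mul_sum]
    congr 1
    · simp
    · refine Finset.sum_congr rfl fun i hi => ?_
      have hi' : i < p.natDegree := by simpa using hi
      rw [show p.natDegree - i = (p.natDegree - 1 - i) + 1 by omega, pow_succ]
      ring
  · rw [coeffSum, Finset.sum_mul, Finset.sum_range_succ]
    refine (Finset.abs_sum_le_sum_abs _ _).trans (le_add_of_le_of_nonneg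
      (Finset.sum_le_sum fun i hi => ?_) (by positivity))
    have hi' : i ≤ p.natDegree - 1 := by simp at hi; omega
    rw [abs_mul, abs_mul, abs_pow, abs_pow, mul_assoc, ← pow_mul_pow_sub _ hi']
    gcongr <;> simp

/-- One of `f(u, v)`, `v ^ deg f` has the full order of magnitude. -/
theorem homEval_lower (p : ℤ[X]) (hp : 0 < p.natDegree) (u v : ℤ) :
    (max |u| |v|) ^ p.natDegree ≤
      (2 * coeffSum p) ^ p.natDegree * max |homEval p u v| (|v| ^ p.natDegree) := by
  have hp0 : p ≠ 0 := fun h => by simp [h] at hp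
  set H := max |u| |v| with hH
  set M := coeffSum p with hM
  have hM1 : 1 ≤ M := coeffSum_pos hp0
  have hH0 : 0 ≤ H := le_max_of_le_left (abs_nonneg u)
  rcases le_or_gt H (2 * M * |v|) with h | h
  · calc H ^ p.natDegree ≤ (2 * M * |v|) ^ p.natDegree := pow_le_pow_left₀ hH0 h _
      _ = (2 * M) ^ p.natDegree * |v| ^ p.natDegree := mul_pow _ _ _
      _ ≤ _ := by gcongr; exact le_max_right _ _
  · have hu : H = |u| := by
      rcases max_choice |u| |v| with e | e
      · rw [hH, e]
      · exfalso
        rw [← hH] at e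
        have := abs_nonneg v
        nlinarith
    obtain ⟨w, hw, hwb⟩ := homEval_sub_lead p hp u v
    rw [← hH, ← hM] at hwb
    obtain ⟨D, hD⟩ : ∃ D, p.natDegree = D + 1 := ⟨p.natDegree - 1, by omega⟩
    rw [hD] at hw hwb ⊢
    rw [Nat.add_sub_cancel] at hwb
    have hl : 1 ≤ |p.leadingCoeff| := Int.one_le_abs (by simpa using hp0)
    have h1 : H ^ (D + 1) ≤ |p.leadingCoeff * u ^ (D + 1)| := by
      rw [abs_mul, abs_pow, ← hu]
      exact le_mul_of_one_le_left (by positivity) hl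
    have h2 : 2 * |v * w| ≤ H ^ (D + 1) := by
      rw [abs_mul]
      calc 2 * (|v| * |w|) ≤ 2 * (|v| * (M * H ^ D)) := by gcongr
        _ = (2 * M * |v|) * H ^ D := by ring
        _ ≤ H * H ^ D := by gcongr
        _ = H ^ (D + 1) := by ring
    have h3 : |p.leadingCoeff * u ^ (D + 1)| ≤ |homEval p u v| + |v * w| := by
      rw [hw]
      have := abs_sub (p.leadingCoeff * u ^ (D + 1) + v * w) (v * w)
      simpa using this
    have h4 : H ^ (D + 1) ≤ 2 * |homEval p u v| := by linarith
    calc H ^ (D + 1) ≤ 2 * |homEval p u v| := h4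
      _ ≤ (2 * M) ^ (D + 1) * |homEval p u v| := by
        gcongr
        calc (2 : ℤ) = 2 ^ 1 := by norm_num
          _ ≤ (2 * M) ^ 1 := by gcongr; omega
          _ ≤ (2 * M) ^ (D + 1) := pow_le_pow_right₀ (by omega) (by omega)
      _ ≤ _ := by gcongr; exact le_max_left _ _

/-- At coprime `(u, v)` the values of the forms `p(u, v)` and `v ^ deg p` have bounded common
divisors. -/
theorem dvd_const_of_dvd_homEval (p : ℤ[X]) (hp : 0 < p.natDegree) {u v g c : ℤ}
    (huv : IsCoprime u v) (h1 : g ∣ homEval p u v) (h2 : g ∣ c * v ^ p.natDegree) :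
    g ∣ c * p.leadingCoeff ^ p.natDegree := by
  obtain ⟨w, hw, -⟩ := homEval_sub_lead p hp u v
  obtain ⟨r, s, hrs⟩ := huv.pow_left (m := p.natDegree)
  set l := p.leadingCoeff
  set D := p.natDegree
  have e : l - v * (l * s - r * w) = r * homEval p u v := by
    rw [hw]; linear_combination -l * hrs
  have d1 : g ∣ l ^ D - (v * (l * s - r * w)) ^ D :=
    (e ▸ Dvd.dvd.mul_left h1 r : g ∣ l - v * (l * s - r * w)).trans (sub_dvd_pow_sub_pow _ _ _)
  have d2 : g ∣ c * (v * (l * s - r * w)) ^ D := by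
    rw [mul_pow, ← mul_assoc]; exact h2.mul_right _
  have := dvd_add (d1.mul_left c) d2
  rwa [show c * (l ^ D - (v * (l * s - r * w)) ^ D) + c * (v * (l * s - r * w)) ^ D = c * l ^ D by
    ring] at this

theorem exists_int_multiple (f : ℚ[X]) : ∃ (c : ℤ) (f1 : ℤ[X]), c ≠ 0 ∧
    f1.map (Int.castRingHom ℚ) = C (c : ℚ) * f := by
  obtain ⟨b, hb, h⟩ := IsLocalization.integerNormalization_spec (nonZeroDivisors ℤ) f
  refine ⟨b, IsLocalization.integerNormalization (nonZeroDivisors ℤ) f, nonZeroDivisors.ne_zero hb, ?_⟩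
  rw [show Int.castRingHom ℚ = algebraMap ℤ ℚ from rfl, h]
  ext i
  simp

/-! ### The abc-conjecture and radicals of values of binary forms -/

/-- The exponents in the application of abc with `ε = 1 / (2 D)`: here `m` is the degree of the
cofactor of the form in the radical, so that `N + m ≤ D + 2`. -/
theorem rpow_bound {H R K1 K2 : ℝ} {D m N : ℕ} (hH : 1 ≤ H) (hR : 0 < R) (hK1 : 0 < K1)
    (hK2 : 0 < K2) (hD : 0 < D) (hm : N + m ≤ D + 2)
    (h : H ^ D ≤ K1 * (R * (K2 * H ^ m)) ^ (1 + 1 / (2 * (D : ℝ)))) :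
    (K1 ^ (1 + 1 / (2 * (D : ℝ)))⁻¹ * K2)⁻¹ * H ^ ((N : ℝ) - 5 / 2) ≤ R := by
  have hD' : (1 : ℝ) ≤ D := by exact_mod_cast hD
  have hH0 : 0 < H := by linarith
  set θ : ℝ := 1 + 1 / (2 * (D : ℝ)) with hθ
  have hθ1 : 0 < θ := by positivity
  have hK : 0 < K1 ^ θ⁻¹ * K2 := by positivity
  rw [inv_mul_le_iff₀ hK]
  have h1 : (H ^ D) ^ θ⁻¹ ≤ K1 ^ θ⁻¹ * (R * (K2 * H ^ m)) := by
    calc (H ^ D) ^ θ⁻¹ ≤ (K1 * (R * (K2 * H ^ m)) ^ θ) ^ θ⁻¹ :=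
          Real.rpow_le_rpow (by positivity) h (by positivity)
      _ = K1 ^ θ⁻¹ * (R * (K2 * H ^ m)) := by
          rw [Real.mul_rpow hK1.le (by positivity), Real.rpow_rpow_inv (by positivity) hθ1.ne']
  have h2 : H ^ ((N : ℝ) - 5 / 2) * H ^ m ≤ (H ^ D) ^ θ⁻¹ := by
    rw [← Real.rpow_natCast H m, ← Real.rpow_natCast H D, ← Real.rpow_add hH0,
      ← Real.rpow_mul hH0.le]
    apply Real.rpow_le_rpow_of_exponent_le hH
    have hm' : (N : ℝ) + m ≤ D + 2 := by exact_mod_cast hm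
    have : (D : ℝ) - 1 / 2 ≤ D * θ⁻¹ := by
      rw [← div_eq_mul_inv, le_div_iff₀ hθ1, hθ]
      field_simp
      nlinarith
    linarith
  have h3 : H ^ ((N : ℝ) - 5 / 2) * H ^ m ≤ (K1 ^ θ⁻¹ * K2 * R) * H ^ m := by
    calc _ ≤ _ := h2
      _ ≤ _ := h1
      _ = _ := by ring
  exact le_of_mul_le_mul_right h3 (by positivity)

set_option maxHeartbeats 1600000 in
/-- Under abc, a separable binary form of degree `N` satisfies
`rad (F(u, v)) ≫ max(|u|, |v|) ^ (N - 5/2)` for coprime `u, v`: apply abc to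
`f(u, v) + (v ^ D - f(u, v)) = v ^ D`, where `f` is a Belyi polynomial of degree `D` for the roots
of the form. -/
theorem rad_lower (habc : ABCConjecture) (P : ℤ[X])
    (hsep : (P.map (Int.castRingHom ℚ)).Separable) (hN : 3 ≤ P.natDegree)
    (hnoroot : ∀ t : ℚ, aeval t P ≠ 0) :
    ∃ c : ℝ, 0 < c ∧ ∀ u v : ℤ, v ≠ 0 → IsCoprime u v →
      c * ((max |u| |v| : ℤ) : ℝ) ^ ((P.natDegree : ℝ) - 5 / 2) ≤
        radNat (homEval P u v).natAbs := by
  classical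
  obtain ⟨f, hfB, hfP⟩ := exists_belyi _ hsep.ne_zero
  obtain ⟨W, S, k, hPW, hWf, hdegs⟩ := hfB.radical_data hsep hfP
  obtain ⟨c0, f1, hc0, hf1⟩ := exists_int_multiple f
  obtain ⟨e, W1, he, hW1⟩ := exists_int_multiple W
  obtain ⟨s, S1, hs, hS1⟩ := exists_int_multiple S
  have hinj : Function.Injective (Int.castRingHom ℚ) := Int.cast_injective
  have hdeg_f1 : f1.natDegree = f.natDegree := by
    rw [← natDegree_map_eq_of_injective hinj f1, hf1, natDegree_C_mul (by exact_mod_cast hc0)]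
  have hdeg_W1 : W1.natDegree = W.natDegree := by
    rw [← natDegree_map_eq_of_injective hinj W1, hW1, natDegree_C_mul (by exact_mod_cast he)]
  rw [natDegree_map_eq_of_injective hinj] at hdegs
  have ev : ∀ (p : ℤ[X]) (q : ℚ[X]) (c : ℤ), p.map (Int.castRingHom ℚ) = C (c : ℚ) * q →
      ∀ t : ℚ, aeval t p = c * q.eval t := by
    intro p q c h t
    have : aeval t p = (p.map (Int.castRingHom ℚ)).eval t := by
      rw [eval_map, aeval_def]; rfl
    rw [this, h, eval_mul, eval_C]
  have evf := ev _ _ _ hf1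
  have evW := ev _ _ _ hW1
  have evS := ev _ _ _ hS1
  have evP : ∀ t : ℚ, (P.map (Int.castRingHom ℚ)).eval t = aeval t P := by
    intro t; rw [eval_map, aeval_def]; rfl
  set D := f1.natDegree with hD
  have hDpos : 0 < D := by rw [hdeg_f1]; exact hfB.1
  have hf10 : f1 ≠ 0 := fun h => by simp [hD, h] at hDpos
  have hf0 : f ≠ 0 := fun h => by have := hfB.1; simp [h] at this
  have hfm1 : f - 1 ≠ 0 := fun h => by
    have : f = 1 := sub_eq_zero.mp h
    have h1 := hfB.1
    simp [this] at h1
  have hW0 : W ≠ 0 := ne_zero_of_dvd_ne_zero (mul_ne_zero hf0 hfm1) hWf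
  have hW10 : W1 ≠ 0 := by
    rintro rfl
    have : C (e : ℚ) * W = 0 := by rw [← hW1]; simp
    rcases mul_eq_zero.mp this with h | h
    · exact he (by exact_mod_cast C_eq_zero.mp h)
    · exact hW0 h
  obtain ⟨K, hK, habc'⟩ := abc_int habc (ε := 1 / (2 * (D : ℝ))) (by positivity)
  -- the finitely many `t` with `f(t) ∈ {0, 1}`, for which abc says nothing
  set T : Finset ℚ := (f * (f - 1)).roots.toFinset with hT
  set H0 : ℤ := 1 + ∑ t ∈ T, (|t.num| + t.den) with hH0
  have hH01 : 1 ≤ H0 := by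
    have : 0 ≤ ∑ t ∈ T, (|t.num| + (t.den : ℤ)) := Finset.sum_nonneg fun t _ => by positivity
    omega
  set Gm : ℤ := |c0 * f1.leadingCoeff ^ D| with hGm
  have hGm0 : 0 < Gm := abs_pos.mpr (mul_ne_zero hc0 (pow_ne_zero _ (by simpa using hf10)))
  set M := coeffSum f1 with hM
  have hM1 : 1 ≤ M := coeffSum_pos hf10
  set K1 : ℝ := ((2 * M) ^ D : ℤ) * Gm * K with hK1
  have hK1pos : 0 < K1 := by
    have : (0 : ℤ) < (2 * M) ^ D := by positivity
    have h1 : (0 : ℝ) < ((2 * M) ^ D : ℤ) := by exact_mod_cast this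
    have h2 : (0 : ℝ) < Gm := by exact_mod_cast hGm0
    positivity
  set K2 : ℝ := ((|c0 * s| * coeffSum W1 : ℤ) : ℝ) with hK2
  have hK2pos : 0 < K2 := by
    have h1 : 0 < |c0 * s| := abs_pos.mpr (mul_ne_zero hc0 hs)
    have h2 := coeffSum_pos hW10
    have : 0 < |c0 * s| * coeffSum W1 := mul_pos h1 (by omega)
    exact Int.cast_pos.mpr this
  set c1 : ℝ := (K1 ^ (1 + 1 / (2 * (D : ℝ)))⁻¹ * K2)⁻¹ with hc1
  have hc1pos : 0 < c1 := by positivity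
  set c2 : ℝ := ((H0 : ℝ) ^ ((P.natDegree : ℝ) - 5 / 2))⁻¹ with hc2
  have hH0R : (1 : ℝ) ≤ H0 := by exact_mod_cast hH01
  have hc2pos : 0 < c2 := by positivity
  refine ⟨min c1 c2, lt_min hc1pos hc2pos, fun u v hv huv => ?_⟩
  have hvQ : (v : ℚ) ≠ 0 := by exact_mod_cast hv
  set H := max |u| |v| with hH
  have hvH : |v| ≤ H := le_max_right _ _
  have hH1 : 1 ≤ H := (Int.one_le_abs hv).trans hvH
  have hH1R : (1 : ℝ) ≤ H := by exact_mod_cast hH1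
  set t : ℚ := (u : ℚ) / v with ht
  set A := homEval f1 u v with hA
  set B := c0 * v ^ D - A with hB
  have hAq : (A : ℚ) = v ^ D * (c0 * f.eval t) := by rw [hA, homEval_cast _ _ hv, evf]
  have hBq : (B : ℚ) = v ^ D * (c0 * (1 - f.eval t)) := by
    rw [hB]; push_cast; rw [hAq]; ring
  have hF0 : homEval P u v ≠ 0 := by
    have : (homEval P u v : ℚ) ≠ 0 := by
      rw [homEval_cast _ _ hv]; exact mul_ne_zero (pow_ne_zero _ hvQ) (hnoroot _)
    exact_mod_cast this
  have hradpos : (1 : ℝ) ≤ radNat (homEval P u v).natAbs := by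
    exact_mod_cast radNat_pos _
  have hexp : (0 : ℝ) ≤ (P.natDegree : ℝ) - 5 / 2 := by
    have : (3 : ℝ) ≤ P.natDegree := by exact_mod_cast hN
    linarith
  by_cases hAB : A * B = 0
  · have htT : t ∈ T := by
      rw [hT, Multiset.mem_toFinset, mem_roots (mul_ne_zero hf0 hfm1), IsRoot, eval_mul, eval_sub,
        eval_one]
      have hABq : (A : ℚ) * B = 0 := by exact_mod_cast hAB
      rw [hAq, hBq] at hABq
      have hc0Q : (c0 : ℚ) ≠ 0 := by exact_mod_cast hc0
      have e1 : ((v : ℚ) ^ D * c0) ^ 2 * (f.eval t * (f.eval t - 1)) = 0 := by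
        linear_combination -hABq
      exact (mul_eq_zero.mp e1).resolve_left
        (pow_ne_zero _ (mul_ne_zero (pow_ne_zero _ hvQ) hc0Q))
    have hHle : H ≤ H0 := by
      have h1 : |t.num| + (t.den : ℤ) ≤ ∑ t ∈ T, (|t.num| + (t.den : ℤ)) :=
        Finset.single_le_sum (f := fun t : ℚ => |t.num| + (t.den : ℤ))
          (fun t _ => by positivity) htT
      have h2 : t.num.natAbs = u.natAbs ∧ t.den = v.natAbs := by
        have hg : Int.gcd u v = 1 := Int.isCoprime_iff_gcd_eq_one.mp huv
        rw [ht, ← Rat.divInt_eq_div, Rat.num_divInt, Rat.den_divInt, if_neg hv, Int.gcd_comm v u, hg]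
        simp [Int.natAbs_mul, Int.natAbs_sign_of_ne_zero hv]
      have h3 : |t.num| = |u| := by
        rw [Int.abs_eq_natAbs, Int.abs_eq_natAbs, h2.1]
      have h4 : (t.den : ℤ) = |v| := by rw [Int.abs_eq_natAbs, h2.2]
      rw [h3, h4] at h1
      have := abs_nonneg u
      have := abs_nonneg v
      have : H ≤ |u| + |v| := max_le (by omega) (by omega)
      omega
    have hHleR : (H : ℝ) ≤ H0 := by exact_mod_cast hHle
    calc min c1 c2 * (H : ℝ) ^ ((P.natDegree : ℝ) - 5 / 2)
        ≤ c2 * (H0 : ℝ) ^ ((P.natDegree : ℝ) - 5 / 2) := by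
          refine mul_le_mul (min_le_right _ _) (Real.rpow_le_rpow (by linarith) hHleR hexp)
            (Real.rpow_nonneg (by linarith) _) hc2pos.le
      _ = 1 := by rw [hc2]; exact inv_mul_cancel₀ (by positivity)
      _ ≤ _ := hradpos
  obtain ⟨hA0, hB0⟩ := mul_ne_zero_iff.mp hAB
  have hC0 : c0 * v ^ D ≠ 0 := mul_ne_zero hc0 (pow_ne_zero _ hv)
  set w1 := homEval W1 u v with hw1
  have hw1q : (w1 : ℚ) = v ^ W1.natDegree * (e * W.eval t) := by rw [hw1, homEval_cast _ _ hv, evW]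
  have hft : f.eval t * (f.eval t - 1) ≠ 0 := by
    intro h
    have h1 : (A : ℚ) * B = 0 := by
      rw [hAq, hBq]; linear_combination (-(v ^ D * c0 : ℚ) ^ 2) * h
    exact hAB (by exact_mod_cast h1)
  have hw10 : w1 ≠ 0 := by
    intro h
    have h1 : (w1 : ℚ) = 0 := by exact_mod_cast h
    rw [hw1q] at h1
    have h2 : W.eval t = 0 := by
      rcases mul_eq_zero.mp h1 with h | h
      · exact absurd h (pow_ne_zero _ hvQ)
      · exact (mul_eq_zero.mp h).resolve_left (by exact_mod_cast he)
    obtain ⟨Z, hZ⟩ := hWf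
    apply hft
    have := congrArg (eval t) hZ
    simpa [h2] using this
  -- primes dividing `A * B` divide `v * c0 * s * F * w1`
  have hrel : A * B * (homEval S1 u v * e ^ k * v ^ (k * (P.natDegree + W1.natDegree))) =
      -(v ^ (2 * D + S1.natDegree) * c0 ^ 2 * s * (homEval P u v * w1) ^ k) := by
    have h1 := congrArg (eval t) hPW
    simp only [eval_mul, eval_pow, eval_sub, eval_one, evP] at h1
    have : ((A * B * (homEval S1 u v * e ^ k * v ^ (k * (P.natDegree + W1.natDegree))) : ℤ) : ℚ) =
        ((-(v ^ (2 * D + S1.natDegree) * c0 ^ 2 * s * (homEval P u v * w1) ^ k) : ℤ) : ℚ) := by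
      push_cast
      rw [hAq, hBq, hw1q, homEval_cast P _ hv, homEval_cast S1 _ hv, evS]
      have e2 : ((v : ℚ) ^ P.natDegree * aeval t P * (v ^ W1.natDegree * (e * W.eval t))) ^ k =
          v ^ (k * (P.natDegree + W1.natDegree)) * e ^ k * (aeval t P * W.eval t) ^ k := by
        rw [mul_comm k, pow_mul, pow_add]
        simp only [mul_pow]
        ring
      rw [← ht, e2, h1]
      ring
    exact_mod_cast this
  set k0 : ℕ := (c0 * s * v * w1).natAbs with hk0
  have hk00 : k0 ≠ 0 :=
    Int.natAbs_ne_zero.mpr (mul_ne_zero (mul_ne_zero (mul_ne_zero hc0 hs) hv) hw10)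
  obtain ⟨g, a, b, hgpos, hab, hAg, hBg⟩ : ∃ g a b : ℤ, 0 < g ∧ IsCoprime a b ∧ A = a * g ∧
      B = b * g := by
    obtain ⟨a, b, hab, h1, h2⟩ := Int.exists_gcd_one (m := A) (n := B)
      (Int.gcd_pos_of_ne_zero_left _ hA0)
    exact ⟨_, a, b, by exact_mod_cast Int.gcd_pos_of_ne_zero_left _ hA0,
      Int.isCoprime_iff_gcd_eq_one.mpr hab, h1, h2⟩
  have hCg : c0 * v ^ D = (a + b) * g := by
    have : c0 * v ^ D = A + B := by rw [hB]; ring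
    rw [this, hAg, hBg]; ring
  have ha0 : a ≠ 0 := fun h => hA0 (by rw [hAg, h, zero_mul])
  have hb0 : b ≠ 0 := fun h => hB0 (by rw [hBg, h, zero_mul])
  have hab0 : a + b ≠ 0 := fun h => hC0 (by rw [hCg, h, zero_mul])
  have hrad : radNat (a * b * (a + b)).natAbs ≤ radNat (homEval P u v).natAbs * k0 := by
    apply radNat_le_mul (Int.natAbs_ne_zero.mpr hF0) hk00
    intro p hp hpd
    have hpZ : Prime (p : ℤ) := Nat.prime_iff_prime_int.mp hp
    rw [hk0, ← Int.natAbs_mul]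
    rw [← Int.natCast_dvd] at hpd ⊢
    have hcases : (p : ℤ) ∣ A * B ∨ (p : ℤ) ∣ c0 * v ^ D := by
      rcases hpZ.dvd_or_dvd hpd with h | h
      · left
        rw [hAg, hBg, show a * g * (b * g) = a * b * (g * g) by ring]
        exact h.mul_right _
      · right; rw [hCg]; exact h.mul_right _
    have hfin : (p : ℤ) ∣ v ∨ (p : ℤ) ∣ c0 ∨ (p : ℤ) ∣ s ∨ (p : ℤ) ∣ homEval P u v ∨
        (p : ℤ) ∣ w1 := by
      rcases hcases with h | h
      · have h1 := h.mul_right (homEval S1 u v * e ^ k * v ^ (k * (P.natDegree + W1.natDegree)))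
        rw [hrel, dvd_neg] at h1
        rcases hpZ.dvd_or_dvd h1 with h1 | h1
        · rcases hpZ.dvd_or_dvd h1 with h1 | h1
          · rcases hpZ.dvd_or_dvd h1 with h1 | h1
            · exact Or.inl (hpZ.dvd_of_dvd_pow h1)
            · exact Or.inr (Or.inl (hpZ.dvd_of_dvd_pow h1))
          · exact Or.inr (Or.inr (Or.inl h1))
        · rcases hpZ.dvd_or_dvd (hpZ.dvd_of_dvd_pow h1) with h1 | h1
          · exact Or.inr (Or.inr (Or.inr (Or.inl h1)))
          · exact Or.inr (Or.inr (Or.inr (Or.inr h1)))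
      · rcases hpZ.dvd_or_dvd h with h1 | h1
        · exact Or.inr (Or.inl h1)
        · exact Or.inl (hpZ.dvd_of_dvd_pow h1)
    rcases hfin with ⟨x, h⟩ | ⟨x, h⟩ | ⟨x, h⟩ | ⟨x, h⟩ | ⟨x, h⟩
    · exact ⟨homEval P u v * c0 * s * x * w1, by rw [h]; ring⟩
    · exact ⟨homEval P u v * x * s * v * w1, by rw [h]; ring⟩
    · exact ⟨homEval P u v * c0 * x * v * w1, by rw [h]; ring⟩
    · exact ⟨x * c0 * s * v * w1, by rw [h]; ring⟩
    · exact ⟨homEval P u v * c0 * s * v * x, by rw [h]; ring⟩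
  have hgle : g ≤ Gm := by
    refine Int.le_of_dvd hGm0 ((dvd_abs _ _).mpr ?_)
    exact dvd_const_of_dvd_homEval f1 hDpos huv (Dvd.intro_left a hAg.symm)
      (Dvd.intro_left (a + b) hCg.symm)
  have hHD : H ^ D ≤ (2 * M) ^ D * (Gm * max |a| |a + b|) := by
    refine (homEval_lower f1 hDpos u v).trans ?_
    have h1 : |A| ≤ Gm * max |a| |a + b| := by
      rw [hAg, abs_mul, abs_of_pos hgpos, mul_comm]
      gcongr
      exact le_max_left _ _
    have h2 : |v| ^ D ≤ Gm * max |a| |a + b| := by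
      calc |v| ^ D ≤ |c0| * |v| ^ D := le_mul_of_one_le_left (by positivity) (Int.one_le_abs hc0)
        _ = |c0 * v ^ D| := by rw [abs_mul, abs_pow]
        _ = g * |a + b| := by rw [hCg, abs_mul, abs_of_pos hgpos, mul_comm]
        _ ≤ _ := by gcongr; exact le_max_right _ _
    have hM2 : 0 ≤ (2 * M) ^ D := by positivity
    exact mul_le_mul_of_nonneg_left (max_le h1 h2) hM2
  have hk0le : (k0 : ℝ) ≤ K2 * (H : ℝ) ^ (W1.natDegree + 1) := by
    have : (k0 : ℤ) ≤ |c0 * s| * coeffSum W1 * H ^ (W1.natDegree + 1) := by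
      rw [hk0, ← Int.abs_eq_natAbs, mul_assoc, abs_mul, abs_mul v]
      calc |c0 * s| * (|v| * |w1|) ≤ |c0 * s| * (H * (coeffSum W1 * H ^ W1.natDegree)) := by
            gcongr
            exact homEval_abs_le W1 u v
        _ = |c0 * s| * coeffSum W1 * H ^ (W1.natDegree + 1) := by ring
    rw [hK2]
    exact_mod_cast this
  have hfinal : (H : ℝ) ^ D ≤ K1 * ((radNat (homEval P u v).natAbs : ℝ) *
      (K2 * (H : ℝ) ^ (W1.natDegree + 1))) ^ (1 + 1 / (2 * (D : ℝ))) := by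
    have h1 : ((H ^ D : ℤ) : ℝ) ≤ (((2 * M) ^ D * (Gm * max |a| |a + b|) : ℤ) : ℝ) :=
      Int.cast_le.mpr hHD
    rw [Int.cast_mul, Int.cast_mul] at h1
    rw [← Int.cast_pow]
    refine h1.trans ?_
    rw [hK1, mul_assoc, mul_assoc]
    have h2 := habc' a b (a + b) ha0 hb0 hab0 hab rfl
    have h0 : (0 : ℝ) ≤ ((2 * M) ^ D : ℤ) := by
      have : (0 : ℤ) ≤ (2 * M) ^ D := by positivity
      exact_mod_cast this
    have h3 : (radNat (a * b * (a + b)).natAbs : ℝ) ≤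
        (radNat (homEval P u v).natAbs : ℝ) * (K2 * (H : ℝ) ^ (W1.natDegree + 1)) := by
      calc (radNat (a * b * (a + b)).natAbs : ℝ)
          ≤ (radNat (homEval P u v).natAbs : ℝ) * k0 := by exact_mod_cast hrad
        _ ≤ _ := by gcongr
    have hGmR : (0 : ℝ) ≤ Gm := by exact_mod_cast hGm0.le
    refine mul_le_mul_of_nonneg_left (mul_le_mul_of_nonneg_left (h2.trans ?_) hGmR) h0
    exact mul_le_mul_of_nonneg_left (Real.rpow_le_rpow (by positivity) h3 (by positivity)) hK.le
  have := rpow_bound (N := P.natDegree) hH1R (by linarith) hK1pos hK2pos hDpos (by omega) hfinal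
  refine le_trans ?_ this
  exact mul_le_mul_of_nonneg_right (min_le_left _ _) (Real.rpow_nonneg (by linarith) _)

/-! ### Twists with a rational point -/

/-- Under abc, a rational point `(t, y)` on `y ^ 2 = d * P(t)` has `H(t) ^ 3 ≪ |d|`. With `t = u / v`
and `F` the form of `P`, evenness of `N` gives an integer `w` with `w ^ 2 = d * F(u, v)`; hence
`rad F(u, v) ≤ |w|` and `H ^ (2 N - 5) ≪ |d| * H ^ N`, while `N ≥ 8`. -/
theorem height_bound (habc : ABCConjecture) (P : ℤ[X])
    (hsep : (P.map (Int.castRingHom ℚ)).Separable) (hN : 8 ≤ P.natDegree)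
    (heven : Even P.natDegree) (hnoroot : ∀ t : ℚ, aeval t P ≠ 0) :
    ∃ K : ℝ, 0 < K ∧ ∀ (d : ℤ) (t y : ℚ), d ≠ 0 → y ^ 2 = (d : ℚ) * aeval t P →
      ((max |t.num| |(t.den : ℤ)| : ℤ) : ℝ) ^ 3 ≤ K * |(d : ℝ)| := by
  obtain ⟨c, hc, hrad⟩ := rad_lower habc P hsep (by omega) hnoroot
  have hP0 : P ≠ 0 := fun h => by simp [h] at hN
  have hcs : (0 : ℝ) < coeffSum P := by exact_mod_cast coeffSum_pos hP0
  refine ⟨coeffSum P / c ^ 2, by positivity, fun d t y hd hy => ?_⟩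
  set u := t.num with hu
  set v : ℤ := (t.den : ℤ) with hv
  have hv0 : v ≠ 0 := by simp [hv]
  have hcop : IsCoprime u v := by
    rw [Int.isCoprime_iff_gcd_eq_one, Int.gcd_eq_natAbs]
    simpa [hv] using t.reduced
  have ht : (u : ℚ) / v = t := by simp [hu, hv, Rat.num_div_den]
  set F := homEval P u v with hF
  have hFq : (F : ℚ) = (v : ℚ) ^ P.natDegree * aeval t P := by
    rw [hF, homEval_cast _ _ hv0, ht]
  obtain ⟨m, hm⟩ := heven
  have hw : (y * v ^ m) ^ 2 = ((d * F : ℤ) : ℚ) := by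
    push_cast
    rw [mul_pow, hy, hFq, hm]; ring
  obtain ⟨w, hwy⟩ : ∃ w : ℤ, (w : ℚ) = y * v ^ m := by
    have hIntegral : IsIntegral ℤ (y * (v : ℚ) ^ m) := by
      refine ⟨X ^ 2 - C (d * F), monic_X_pow_sub_C _ two_ne_zero, ?_⟩
      simp only [eval₂_sub, eval₂_pow, eval₂_X, eval₂_C, hw]
      simp
    obtain ⟨w, hw⟩ := IsIntegrallyClosed.isIntegral_iff.mp hIntegral
    exact ⟨w, by simpa using hw⟩
  have hw2 : w ^ 2 = d * F := by
    rw [← hwy] at hw; exact_mod_cast hw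
  have hF0 : F ≠ 0 := by
    have : (F : ℚ) ≠ 0 := by
      rw [hFq]
      exact mul_ne_zero (pow_ne_zero _ (by exact_mod_cast hv0)) (hnoroot _)
    exact_mod_cast this
  set H : ℤ := max |u| |v| with hH
  have hH1 : 1 ≤ H := (Int.one_le_abs hv0).trans (le_max_right _ _)
  have hH1R : (1 : ℝ) ≤ H := by exact_mod_cast hH1
  have hw0 : w ≠ 0 := by
    intro h
    rw [h] at hw2
    exact mul_ne_zero hd hF0 (by simpa using hw2.symm)
  have h1 : radNat F.natAbs ≤ w.natAbs := by
    refine (radNat_le_mul (n := w.natAbs) (k := 1) (by simpa using hw0) one_ne_zero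
      fun p hp hpd => ?_).trans (by simpa using radNat_le_self (by simpa using hw0))
    rw [mul_one]
    rw [← Int.natCast_dvd] at hpd ⊢
    refine (Nat.prime_iff_prime_int.mp hp).dvd_of_dvd_pow (n := 2) ?_
    rw [hw2]; exact hpd.mul_left _
  have h2 : (c * (H : ℝ) ^ ((P.natDegree : ℝ) - 5 / 2)) ^ 2 ≤ |(d : ℝ)| * (coeffSum P * (H : ℝ) ^ P.natDegree) := by
    have h3 : c * (H : ℝ) ^ ((P.natDegree : ℝ) - 5 / 2) ≤ |(w : ℝ)| := by
      refine (hrad u v hv0 hcop).trans ?_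
      have : (w.natAbs : ℝ) = |(w : ℝ)| := by
        rw [Nat.cast_natAbs, Int.cast_abs]
      rw [← this]; exact_mod_cast h1
    calc _ ≤ |(w : ℝ)| ^ 2 := by
          gcongr
      _ = |(d : ℝ)| * |(F : ℝ)| := by
          rw [← abs_pow, ← abs_mul]; congr 1; exact_mod_cast hw2
      _ ≤ _ := by
          gcongr
          exact_mod_cast homEval_abs_le P u v
  have h4 : ((H : ℝ) ^ ((P.natDegree : ℝ) - 5 / 2)) ^ 2 = (H : ℝ) ^ P.natDegree * (H : ℝ) ^ (P.natDegree - 5) := by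
    rw [← pow_add, ← Real.rpow_natCast, ← Real.rpow_mul (by linarith), ← Real.rpow_natCast]
    congr 1
    push_cast [Nat.cast_sub (by omega : 5 ≤ P.natDegree)]
    ring
  rw [mul_pow, h4] at h2
  have h5 : c ^ 2 * (H : ℝ) ^ (P.natDegree - 5) ≤ coeffSum P * |(d : ℝ)| := by
    have : 0 < (H : ℝ) ^ P.natDegree := by positivity
    refine le_of_mul_le_mul_left (a := (H : ℝ) ^ P.natDegree) ?_ this
    linarith
  rw [div_mul_eq_mul_div, le_div_iff₀ (by positivity), mul_comm]
  refine le_trans ?_ h5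
  gcongr
  omega

/-- Under abc, among the twists `d = d0 * ℓ` with `ℓ` prime and `|d| ≤ x`, only `O(x ^ (2 / 3))`
have a rational point: `t` determines `ℓ`, and `t` has height `O(x ^ (1 / 3))`. -/
theorem count_rational_points (habc : ABCConjecture) (P : ℤ[X])
    (hsep : (P.map (Int.castRingHom ℚ)).Separable) (hN : 8 ≤ P.natDegree)
    (heven : Even P.natDegree) (hnoroot : ∀ t : ℚ, aeval t P ≠ 0) {d0 : ℤ} (hd0 : d0 ≠ 0) :
    ∃ K : ℝ, 0 < K ∧ ∀ (x : ℕ) (S : Finset ℕ), (∀ ℓ ∈ S, ℓ.Prime ∧ |d0 * ℓ| ≤ (x : ℤ) ∧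
      ∃ t y : ℚ, y ^ 2 = ((d0 * ℓ : ℤ) : ℚ) * aeval t P) →
      (S.card : ℝ) ≤ K * (x : ℝ) ^ ((2 : ℝ) / 3) := by
  obtain ⟨K, hK, hb⟩ := height_bound habc P hsep hN heven hnoroot
  refine ⟨9 * (K ^ ((1 : ℝ) / 3) + 1) ^ 2, by positivity, fun x S hS => ?_⟩
  rcases S.eq_empty_or_nonempty with rfl | ⟨ℓ0, hℓ0⟩
  · simp; positivity
  have hx1 : 1 ≤ x := by
    obtain ⟨h1, h2, -⟩ := hS ℓ0 hℓ0
    have : 1 ≤ |d0 * (ℓ0 : ℤ)| := Int.one_le_abs (mul_ne_zero hd0 (by exact_mod_cast h1.ne_zero))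
    omega
  have hx1R : (1 : ℝ) ≤ x := by exact_mod_cast hx1
  choose! t y hty using fun ℓ hℓ => (hS ℓ hℓ).2.2
  set b : ℕ := ⌊(K * x) ^ ((1 : ℝ) / 3)⌋₊ with hbdef
  set box : Finset (ℤ × ℤ) := Finset.Icc (-(b : ℤ)) b ×ˢ Finset.Icc (-(b : ℤ)) b with hbox
  have hcard : S.card ≤ box.card := by
    refine Finset.card_le_card_of_injOn (fun ℓ => ((t ℓ).num, ((t ℓ).den : ℤ))) ?_ ?_
    · intro ℓ hℓ
      have hℓ : ℓ ∈ S := hℓ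
      obtain ⟨h1, h2, -⟩ := hS ℓ hℓ
      have h3 := hb (d0 * ℓ) (t ℓ) (y ℓ) (mul_ne_zero hd0 (by exact_mod_cast h1.ne_zero))
        (hty ℓ hℓ)
      have h4 : ((max |(t ℓ).num| |((t ℓ).den : ℤ)| : ℤ) : ℝ) ^ 3 ≤ K * x := by
        refine h3.trans (mul_le_mul_of_nonneg_left ?_ hK.le)
        exact_mod_cast h2
      set H : ℤ := max |(t ℓ).num| |((t ℓ).den : ℤ)| with hH
      have hH0 : 0 ≤ H := (abs_nonneg _).trans (le_max_left _ _)
      have h5 : H ≤ b := by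
        have h6 : (H : ℝ) ≤ (K * x) ^ ((1 : ℝ) / 3) := by
          have hH0R : (0 : ℝ) ≤ H := by exact_mod_cast hH0
          have := Real.rpow_le_rpow (by positivity) h4 (by norm_num : (0 : ℝ) ≤ 1 / 3)
          rwa [← Real.rpow_natCast, ← Real.rpow_mul hH0R, show ((3 : ℕ) : ℝ) * (1 / 3) = 1 by norm_num,
            Real.rpow_one] at this
        have h7 : H.toNat ≤ b := by
          rw [hbdef]
          refine Nat.le_floor ?_
          have : ((H.toNat : ℤ) : ℝ) = H := by rw [Int.toNat_of_nonneg hH0]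
          rw [Int.cast_natCast] at this
          rwa [this]
        omega
      have h8 := (le_max_left |(t ℓ).num| |((t ℓ).den : ℤ)|).trans h5
      have h9 := (le_max_right |(t ℓ).num| |((t ℓ).den : ℤ)|).trans h5
      rw [abs_le] at h8 h9
      simp only [hbox, Finset.coe_product, Set.mem_prod, Finset.coe_Icc, Set.mem_Icc]
      exact ⟨h8, h9⟩
    · intro ℓ hℓ ℓ' hℓ' he
      have hℓ : ℓ ∈ S := hℓ
      have hℓ' : ℓ' ∈ S := hℓ'
      simp only [Prod.mk.injEq, Nat.cast_inj] at he
      have hte : t ℓ = t ℓ' := Rat.ext he.1 he.2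
      have e1 := hty ℓ hℓ
      have e2 := hty ℓ' hℓ'
      rw [← hte] at e2
      have hp := (hS ℓ hℓ).1
      have hp' := (hS ℓ' hℓ').1
      set q : ℚ := d0 * aeval (t ℓ) P with hq
      have hq0 : q ≠ 0 := mul_ne_zero (by exact_mod_cast hd0) (hnoroot _)
      have hsq : IsSquare ((ℓ * ℓ' : ℕ) : ℚ) := by
        refine ⟨y ℓ * y ℓ' / q, ?_⟩
        field_simp
        push_cast at e1 e2 ⊢
        rw [e1, e2, hq]; ring
      rw [Rat.isSquare_natCast_iff] at hsq
      obtain ⟨r, hr⟩ := hsq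
      by_contra hne
      have hc : Nat.Coprime ℓ ℓ' := (Nat.coprime_primes hp hp').mpr hne
      have hsf : Squarefree (ℓ * ℓ') := (Nat.squarefree_mul hc).mpr ⟨hp.squarefree, hp'.squarefree⟩
      have hu := hsf r (hr ▸ dvd_rfl)
      rw [Nat.isUnit_iff] at hu
      rw [hu] at hr
      exact hp.one_lt.ne' (Nat.eq_one_of_mul_eq_one_right hr)
  have hboxc : (box.card : ℝ) = (2 * b + 1) ^ 2 := by
    rw [hbox, Finset.card_product, Int.card_Icc]
    have : ((b : ℤ) + 1 - -(b : ℤ)).toNat = 2 * b + 1 := by omega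
    rw [this]; push_cast; ring
  have hbR : (b : ℝ) ≤ K ^ ((1 : ℝ) / 3) * (x : ℝ) ^ ((1 : ℝ) / 3) := by
    rw [← Real.mul_rpow hK.le (by positivity)]
    exact Nat.floor_le (by positivity)
  have hx3 : 1 ≤ (x : ℝ) ^ ((1 : ℝ) / 3) := Real.one_le_rpow hx1R (by norm_num)
  have hx23 : (x : ℝ) ^ ((2 : ℝ) / 3) = ((x : ℝ) ^ ((1 : ℝ) / 3)) ^ 2 := by
    rw [← Real.rpow_natCast, ← Real.rpow_mul (by positivity)]; norm_num
  calc (S.card : ℝ) ≤ box.card := by exact_mod_cast hcard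
    _ = (2 * b + 1) ^ 2 := hboxc
    _ ≤ (3 * ((K ^ ((1 : ℝ) / 3) + 1) * (x : ℝ) ^ ((1 : ℝ) / 3))) ^ 2 := by
        have : 0 ≤ K ^ ((1 : ℝ) / 3) * (x : ℝ) ^ ((1 : ℝ) / 3) := by positivity
        gcongr
        linarith
    _ = _ := by rw [hx23]; ring

/-! ### Derivatives and independence for the method of Stepanov -/

section Stepanov
variable {F : Type*} [Field F]

/-- A squarefree non-constant polynomial is not a constant times a ratio of squares. -/
theorem eq_zero_of_sq_mul_eq {P : F[X]} (hP : Squarefree P) (hN : 1 ≤ P.natDegree) {c : F}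
    (hc : c ≠ 0) {r s : F[X]} (h : r ^ 2 * P = C c * s ^ 2) : r = 0 ∧ s = 0 := by
  have hP0 : P ≠ 0 := fun h => by simp [h] at hN
  have hPu : ¬ IsUnit P := fun h => by
    have := natDegree_eq_zero_of_isUnit h; omega
  have hCc : (C c : F[X]) ≠ 0 := by simpa using hc
  by_cases hr : r = 0
  · subst hr
    refine ⟨rfl, ?_⟩
    have : C c * s ^ 2 = 0 := by rw [← h]; simp
    simpa [hc] using this
  exfalso
  have hs : s ≠ 0 := by
    rintro rfl
    have : r ^ 2 * P = 0 := by rw [h]; simp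
    exact mul_ne_zero (pow_ne_zero 2 hr) hP0 this
  obtain ⟨π, hπ, hπP⟩ := WfDvdMonoid.exists_irreducible_factor hPu hP0
  have hπ' := hπ.prime
  have fin : ∀ f : F[X], f ≠ 0 → FiniteMultiplicity π f := fun f hf =>
    FiniteMultiplicity.of_prime_left hπ' hf
  have e := congrArg (multiplicity π) h
  rw [multiplicity_mul hπ' (fin _ (mul_ne_zero (pow_ne_zero 2 hr) hP0)),
    multiplicity_mul hπ' (fin _ (mul_ne_zero hCc (pow_ne_zero 2 hs))),
    (fin _ hr).multiplicity_pow hπ', (fin _ hs).multiplicity_pow hπ'] at e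
  have h1 : multiplicity π P = 1 := by
    have h2 : 1 ≤ multiplicity π P := (fin _ hP0).le_multiplicity_of_pow_dvd (by simpa using hπP)
    have h3 : multiplicity π P < 2 := by
      rw [(fin _ hP0).multiplicity_lt_iff_not_dvd, pow_two]
      exact fun h => hπ.not_isUnit (hP _ h)
    omega
  have h4 : multiplicity π (C c) = 0 := by
    rw [multiplicity_eq_zero]
    intro h
    exact hπ.not_isUnit (isUnit_of_dvd_unit h (isUnit_C.mpr hc.isUnit))
  omega

/-- `r ↦ c P' r + P r'`; it governs the derivative of `P ^ c * r`. -/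
noncomputable def stepOp (P : F[X]) (c : F) : F[X] →ₗ[F] F[X] :=
  c • LinearMap.mulLeft F (derivative P) + (LinearMap.mulLeft F P).comp derivative

/-- The operator with `(P ^ c * r)⁽ᵏ⁾ = P ^ (c - k) * iterOp P c k r`. -/
noncomputable def iterOp (P : F[X]) (c : F) : ℕ → F[X] →ₗ[F] F[X]
  | 0 => LinearMap.id
  | k + 1 => (stepOp P (c - k)).comp (iterOp P c k)

theorem iterate_derivative_pow_mul (P r : F[X]) {e k : ℕ} (hk : k ≤ e) :
    derivative^[k] (P ^ e * r) = P ^ (e - k) * iterOp P e k r := by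
  induction k with
  | zero => simp [iterOp]
  | succ k ih =>
    rw [Function.iterate_succ_apply', ih (by omega), iterOp]
    obtain ⟨n, hn⟩ : ∃ n, e - k = n + 1 := ⟨e - k - 1, by omega⟩
    have hn' : e - (k + 1) = n := by omega
    have hc : (e : F) - k = n + 1 := by
      rw [← Nat.cast_sub (by omega), hn]; simp
    rw [hn, hn', derivative_mul, derivative_pow_succ]
    simp only [LinearMap.comp_apply, stepOp, LinearMap.add_apply, LinearMap.smul_apply,
      LinearMap.mulLeft_apply, hc, smul_eq_C_mul]
    simp only [map_add, map_natCast, map_one]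
    ring

theorem iterate_derivative_mul_const (f : F[X]) {h : F[X]} (hh : derivative h = 0) (k : ℕ) :
    derivative^[k] (f * h) = derivative^[k] f * h := by
  induction k with
  | zero => rfl
  | succ k ih => rw [Function.iterate_succ_apply', ih, Function.iterate_succ_apply',
      derivative_mul, hh, mul_zero, add_zero]

theorem natDegree_iterOp_le (P : F[X]) (c : F) (k : ℕ) (r : F[X]) :
    (iterOp P c k r).natDegree ≤ r.natDegree + k * P.natDegree := by
  induction k with
  | zero => simp [iterOp]
  | succ k ih =>
    simp only [iterOp, LinearMap.comp_apply, stepOp, LinearMap.add_apply, LinearMap.smul_apply,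
      LinearMap.mulLeft_apply]
    have h1 : (k + 1) * P.natDegree = k * P.natDegree + P.natDegree := by ring
    have h2 := natDegree_derivative_le P
    refine (natDegree_add_le _ _).trans (max_le ?_ ?_)
    · refine (natDegree_smul_le _ _).trans (natDegree_mul_le.trans ?_)
      omega
    · refine natDegree_mul_le.trans ?_
      have := natDegree_derivative_le (iterOp P c k r)
      omega

end Stepanov

/-- Let `R = ∑ r_j X ^ (p j)` and `S = ∑ s_j X ^ (p j)` with `r_j`, `s_j` of small degree. Then
`R ^ 2 P = S ^ 2 P(X ^ p)` only if all `r_j` and `s_j` vanish: modulo `X ^ p` the identity reads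
`r_0 ^ 2 P = P(0) s_0 ^ 2`. It shows that Stepanov's auxiliary polynomial is not zero. -/
theorem eq_zero_of_expand {p : ℕ} [hp : Fact p.Prime] {P : (ZMod p)[X]} (hP : Squarefree P)
    (hN : 1 ≤ P.natDegree) (h0 : P.eval 0 ≠ 0) {A : ℕ} (hA : 2 * A + P.natDegree < p) (J : ℕ) :
    ∀ r s : ℕ → (ZMod p)[X], (∀ j, (r j).natDegree ≤ A) → (∀ j, (s j).natDegree ≤ A) →
    (∑ j ∈ Finset.range J, r j * X ^ (p * j)) ^ 2 * P =
      (∑ j ∈ Finset.range J, s j * X ^ (p * j)) ^ 2 * expand (ZMod p) p P →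
    ∀ j < J, r j = 0 ∧ s j = 0 := by
  induction J with
  | zero => intro _ _ _ _ _ j hj; omega
  | succ J ih =>
    intro r s hr hs h
    have split : ∀ r : ℕ → (ZMod p)[X], ∑ j ∈ Finset.range (J + 1), r j * X ^ (p * j) =
        r 0 + X ^ p * ∑ j ∈ Finset.range J, r (j + 1) * X ^ (p * j) := by
      intro r
      rw [Finset.sum_range_succ', Finset.mul_sum, add_comm]
      congr 1
      · simp
      · refine Finset.sum_congr rfl fun j _ => ?_
        rw [mul_add, mul_one, pow_add]; ring
    rw [split, split] at h
    set R' := ∑ j ∈ Finset.range J, r (j + 1) * X ^ (p * j)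
    set S' := ∑ j ∈ Finset.range J, s (j + 1) * X ^ (p * j)
    have hexp : ∃ E, expand (ZMod p) p P = C (P.eval 0) + X ^ p * E := by
      refine ⟨expand (ZMod p) p (divX P), ?_⟩
      conv_lhs => rw [← divX_mul_X_add P]
      rw [map_add, map_mul, expand_X, expand_C, coeff_zero_eq_eval_zero]
      ring
    obtain ⟨E, hE⟩ := hexp
    have hdvd : X ^ p ∣ (r 0) ^ 2 * P - C (P.eval 0) * (s 0) ^ 2 := by
      rw [hE] at h
      refine ⟨(s 0) ^ 2 * E + (2 * s 0 * S' + X ^ p * S' ^ 2) * (C (P.eval 0) + X ^ p * E) -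
        (2 * r 0 * R' + X ^ p * R' ^ 2) * P, ?_⟩
      linear_combination h
    have hzero : (r 0) ^ 2 * P - C (P.eval 0) * (s 0) ^ 2 = 0 := by
      refine eq_zero_of_dvd_of_natDegree_lt hdvd ?_
      rw [natDegree_X_pow]
      refine lt_of_le_of_lt (natDegree_sub_le _ _) (max_lt ?_ ?_)
      · refine lt_of_le_of_lt natDegree_mul_le ?_
        have := natDegree_pow_le (p := r 0) (n := 2)
        have := hr 0
        omega
      · refine lt_of_le_of_lt (natDegree_C_mul_le _ _) ?_
        have := natDegree_pow_le (p := s 0) (n := 2)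
        have := hs 0
        omega
    obtain ⟨hr0, hs0⟩ := eq_zero_of_sq_mul_eq hP hN h0 (sub_eq_zero.mp hzero)
    rw [hr0, hs0, zero_add, zero_add, mul_pow, mul_pow, mul_assoc, mul_assoc] at h
    have h' := mul_left_cancel₀ (pow_ne_zero 2 (pow_ne_zero p X_ne_zero)) h
    have := ih (fun j => r (j + 1)) (fun j => s (j + 1)) (fun j => hr _) (fun j => hs _) h'
    intro j hj
    rcases j with _ | j
    · exact ⟨hr0, hs0⟩
    · exact this j (by omega)

/-! ### Square values over prime fields -/

/-- Stepanov's auxiliary polynomial, in the case `P(0) ≠ 0`: the quadratic character of a squarefree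
polynomial `P` over `𝔽_p` is not constant off the roots of `P`, for `p` large in terms of the
degree. -/
theorem stepanov_aux {p : ℕ} [hp : Fact p.Prime] {P : (ZMod p)[X]} (hP : Squarefree P)
    (hN : 1 ≤ P.natDegree) (h0 : P.eval 0 ≠ 0) (hbig : 100 * (P.natDegree + 1) ^ 3 ≤ p)
    (ε : ZMod p) : ∃ t, P.eval t ≠ 0 ∧ (P.eval t) ^ (p / 2) ≠ ε := by
  classical
  by_contra! hcon
  set N := P.natDegree with hNdef
  have hP0 : P ≠ 0 := fun h => by simp [hNdef, h] at hN
  have hpos3 : 100 ≤ p := by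
    have : 1 ≤ (N + 1) ^ 3 := Nat.one_le_pow _ _ (by omega)
    omega
  set q := p / 2 with hq
  have hpq : p = 2 * q + 1 := by
    have := hp.out.eq_two_or_odd
    omega
  set m := N + 1 with hm
  set A := (p - N - 1) / 2 with hA
  have hm3 : m ≤ m ^ 3 := Nat.le_self_pow (by norm_num) _
  have hA1 : 2 * A + N < p := by omega
  have hA2 : 49 * m ^ 3 ≤ A := by omega
  set M := 2 * m with hM
  set J := m + 1 with hJ
  set B := A + M * N + J + 1 with hB
  let emb : (Fin (A + 1) → ZMod p) →ₗ[ZMod p] (ZMod p)[X] :=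
    (degreeLT (ZMod p) (A + 1)).subtype.comp (degreeLTEquiv (ZMod p) (A + 1)).symm.toLinearMap
  have hemb_inj : Function.Injective emb :=
    (Submodule.subtype_injective _).comp (degreeLTEquiv (ZMod p) (A + 1)).symm.injective
  have hemb_deg : ∀ a, (emb a).natDegree ≤ A := by
    intro a
    have : emb a ∈ degreeLT (ZMod p) (A + 1) := Subtype.mem _
    rw [mem_degreeLT] at this
    by_cases h : emb a = 0
    · simp [h]
    · exact Nat.lt_succ_iff.mp ((natDegree_lt_iff_degree_lt h).mpr this)
  let V := (Fin J → Fin (A + 1) → ZMod p) × (Fin J → Fin (A + 1) → ZMod p)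
  -- after substituting `t ^ p = t` and `P(t) ^ q = ε`, the `k`-th derivative of the auxiliary
  -- polynomial at `t` is `P(t) ^ (M - k)` times the value of `Ψ k` at `t`
  let Ψ : ℕ → V →ₗ[ZMod p] (ZMod p)[X] := fun k => ∑ j : Fin J,
    (LinearMap.mulLeft (ZMod p) (X ^ (j : ℕ))).comp
      ((iterOp P (M : ℕ) k).comp (emb.comp ((LinearMap.proj j).comp (LinearMap.fst _ _ _))) +
        ε • (iterOp P (M + q : ℕ) k).comp
          (emb.comp ((LinearMap.proj j).comp (LinearMap.snd _ _ _))))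
  have hΨ : ∀ k (a : V), Ψ k a = ∑ j : Fin J, X ^ (j : ℕ) *
      (iterOp P (M : ℕ) k (emb (a.1 j)) + C ε * iterOp P (M + q : ℕ) k (emb (a.2 j))) := by
    intro k a
    simp only [Ψ, LinearMap.sum_apply, smul_eq_C_mul, LinearMap.comp_apply, LinearMap.add_apply,
      LinearMap.smul_apply, LinearMap.mulLeft_apply]
    rfl
  let Φ : V →ₗ[ZMod p] (Fin M → Fin B → ZMod p) :=
    LinearMap.pi fun k => LinearMap.pi fun i => (lcoeff (ZMod p) (i : ℕ)).comp (Ψ k)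
  -- fewer conditions than unknowns, so that a nonzero choice of coefficients satisfies them all
  have hrank : Module.finrank (ZMod p) (Fin M → Fin B → ZMod p) < Module.finrank (ZMod p) V := by
    have e1 : Module.finrank (ZMod p) (Fin M → Fin B → ZMod p) = M * B := by
      simp [Module.finrank_pi_fintype]
    have e2 : Module.finrank (ZMod p) V = J * (A + 1) + J * (A + 1) := by
      simp [V, Module.finrank_pi_fintype]
    rw [e1, e2, hM, hB, hJ, hM]
    have : N + 1 = m := rfl
    have h1 : N ≤ m := by omega
    have h2 : m * (2 * m * N) ≤ 2 * m ^ 3 := by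
      calc m * (2 * m * N) ≤ m * (2 * m * m) := by gcongr
        _ = 2 * m ^ 3 := by ring
    have h3 : m * m ≤ m ^ 3 := by
      calc m * m ≤ m * m * m := Nat.le_mul_of_pos_right _ (by omega)
        _ = m ^ 3 := by ring
    nlinarith
  obtain ⟨a, haker, ha0⟩ := Submodule.exists_mem_ne_zero_of_ne_bot
    (LinearMap.ker_ne_bot_of_finrank_lt (f := Φ) hrank)
  have hΨ0 : ∀ k < M, Ψ k a = 0 := by
    intro k hk
    have hdeg : (Ψ k a).natDegree < B := by
      rw [hΨ, hB, Nat.lt_succ_iff]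
      refine natDegree_sum_le_of_forall_le _ _ fun j _ => ?_
      refine natDegree_mul_le.trans ?_
      rw [natDegree_X_pow]
      have hj := j.2
      have hkN : k * N ≤ M * N := Nat.mul_le_mul_right _ hk.le
      have h1 := natDegree_iterOp_le P (M : ℕ) k (emb (a.1 j))
      have h2 := natDegree_iterOp_le P (M + q : ℕ) k (emb (a.2 j))
      have h3 := hemb_deg (a.1 j)
      rw [← hNdef] at h1 h2
      have h4 := hemb_deg (a.2 j)
      have h5 := natDegree_add_le_of_degree_le (h1.trans (by omega : _ ≤ A + M * N))
        ((natDegree_C_mul_le ε _).trans (h2.trans (by omega : _ ≤ A + M * N)))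
      omega
    ext i
    rw [coeff_zero]
    by_cases hi : i < B
    · have h1 : Φ a = 0 := haker
      have := congrFun (congrFun h1 ⟨k, hk⟩) ⟨i, hi⟩
      simpa [Φ] using this
    · exact coeff_eq_zero_of_natDegree_lt (by omega)
  -- the auxiliary polynomial, vanishing to order `M` at every non-root of `P`
  set G : (ZMod p)[X] := ∑ j : Fin J,
    (P ^ M * emb (a.1 j) + P ^ (M + q) * emb (a.2 j)) * X ^ (p * (j : ℕ)) with hG
  have hder : ∀ k < M, ∀ t, P.eval t ≠ 0 → (derivative^[k] G).eval t = 0 := by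
    intro k hk t ht
    have h1 : derivative^[k] G = ∑ j : Fin J, (P ^ (M - k) * iterOp P (M : ℕ) k (emb (a.1 j)) +
        P ^ (M + q - k) * iterOp P (M + q : ℕ) k (emb (a.2 j))) * X ^ (p * (j : ℕ)) := by
      rw [hG, iterate_derivative_sum]
      refine Finset.sum_congr rfl fun j _ => ?_
      rw [iterate_derivative_mul_const _ (by simp [derivative_X_pow]), iterate_map_add,
        iterate_derivative_pow_mul _ _ (by omega), iterate_derivative_pow_mul _ _ (by omega)]
    have h2 : (derivative^[k] G).eval t = (P.eval t) ^ (M - k) * (Ψ k a).eval t := by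
      rw [h1, hΨ, eval_finsetSum, eval_finsetSum, Finset.mul_sum]
      refine Finset.sum_congr rfl fun j _ => ?_
      simp only [eval_mul, eval_add, eval_pow, eval_X, eval_C]
      rw [pow_mul, ZMod.pow_card, show M + q - k = (M - k) + q by omega, pow_add (P.eval t),
        hcon t ht]
      ring
    rw [h2, hΨ0 k hk, eval_zero, mul_zero]
  have hG0 : G = 0 := by
    by_contra hG0
    have hmult : ∀ t, P.eval t ≠ 0 → M ≤ G.rootMultiplicity t := by
      intro t ht
      have hMpos : 0 < M := by omega
      have : M - 1 < G.rootMultiplicity t := by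
        refine lt_rootMultiplicity_of_isRoot_iterate_derivative_of_mem_nonZeroDivisors hG0
          (fun k hk => hder k (by omega) t ht) ?_
        rw [mem_nonZeroDivisors_iff_ne_zero, Ne, ZMod.natCast_eq_zero_iff, hp.out.dvd_factorial]
        omega
      omega
    set T : Finset (ZMod p) := Finset.univ.filter fun t => P.eval t ≠ 0 with hT
    have hTcard : p - N ≤ T.card := by
      have h1 : (Finset.univ.filter fun t => ¬ P.eval t ≠ 0).card ≤ N := by
        refine le_trans (Finset.card_le_card (t := P.roots.toFinset) ?_)
          ((Multiset.toFinset_card_le _).trans (card_roots' P))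
        intro t ht
        simp only [Finset.mem_filter, Finset.mem_univ, true_and, not_not] at ht
        simp [hP0, ht]
      have h2 := Finset.card_filter_add_card_filter_not (s := (Finset.univ : Finset (ZMod p)))
        (fun t => P.eval t ≠ 0)
      rw [Finset.card_univ, ZMod.card, ← hT] at h2
      omega
    have h1 : T.card * M ≤ G.natDegree := by
      refine le_trans ?_ (card_roots' G)
      calc T.card * M = ∑ t ∈ T, M := by simp
        _ ≤ ∑ t ∈ T, G.roots.count t := by
            refine Finset.sum_le_sum fun t ht => ?_
            rw [count_roots]
            exact hmult t (Finset.mem_filter.mp ht).2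
        _ ≤ ∑ t ∈ (Finset.univ : Finset (ZMod p)), G.roots.count t :=
            Finset.sum_le_sum_of_subset (Finset.subset_univ _)
        _ = G.roots.card := Multiset.sum_count_eq_card (by simp)
    have h2 : G.natDegree ≤ (M + q) * N + A + p * m := by
      refine natDegree_sum_le_of_forall_le _ _ fun j _ => ?_
      refine natDegree_mul_le.trans ?_
      rw [natDegree_X_pow]
      have hj : p * (j : ℕ) ≤ p * m := Nat.mul_le_mul_left _ (Nat.lt_succ_iff.mp j.2)
      have h3 := hemb_deg (a.1 j)
      have h4 := hemb_deg (a.2 j)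
      have hMN : M * N ≤ (M + q) * N := Nat.mul_le_mul_right _ (by omega)
      have h5 : (P ^ M * emb (a.1 j)).natDegree ≤ (M + q) * N + A := by
        refine natDegree_mul_le.trans ?_
        have := natDegree_pow_le (p := P) (n := M)
        rw [← hNdef] at this
        omega
      have h6 : (P ^ (M + q) * emb (a.2 j)).natDegree ≤ (M + q) * N + A := by
        refine natDegree_mul_le.trans ?_
        have := natDegree_pow_le (p := P) (n := M + q)
        rw [← hNdef] at this
        omega
      have := natDegree_add_le_of_degree_le h5 h6
      omega
    have h3 : (p - N) * M ≤ (M + q) * N + A + p * m :=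
      (Nat.mul_le_mul_right _ hTcard).trans (h1.trans h2)
    obtain ⟨n, hn⟩ : ∃ n, p = N + n := ⟨p - N, by omega⟩
    have h4 : p - N = n := by omega
    rw [h4, hM] at h3
    have h5 : 100 * m ≤ p := by omega
    have h6 : 2 * A ≤ p := by omega
    nlinarith
  -- `G` vanishes, having more roots than its degree; cancel `P ^ M` and square, using
  -- `P ^ (2 q + 1) = P ^ p = P(X ^ p)`
  set r : ℕ → (ZMod p)[X] := fun j => if h : j < J then emb (a.1 ⟨j, h⟩) else 0 with hr
  set s : ℕ → (ZMod p)[X] := fun j => if h : j < J then emb (a.2 ⟨j, h⟩) else 0 with hs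
  have hsum : ∑ j ∈ Finset.range J, r j * X ^ (p * j) +
      P ^ q * ∑ j ∈ Finset.range J, s j * X ^ (p * j) = 0 := by
    have h1 : P ^ M * (∑ j ∈ Finset.range J, r j * X ^ (p * j) +
      P ^ q * ∑ j ∈ Finset.range J, s j * X ^ (p * j)) = G := by
      rw [Finset.sum_range, Finset.sum_range, Finset.mul_sum, ← Finset.sum_add_distrib,
        Finset.mul_sum, hG]
      refine Finset.sum_congr rfl fun j _ => ?_
      simp only [hr, hs, Fin.is_lt, dif_pos, Fin.eta]
      ring
    rw [hG0] at h1
    exact (mul_eq_zero.mp h1).resolve_left (pow_ne_zero _ hP0)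
  have hall := eq_zero_of_expand hP hN h0 hA1 J r s
    (fun j => by simp only [hr]; split_ifs <;> simp [hemb_deg])
    (fun j => by simp only [hs]; split_ifs <;> simp [hemb_deg]) (by
      rw [ZMod.expand_card]
      have hPp : P ^ p = (P ^ q) ^ 2 * P := by
        rw [← pow_mul, ← pow_succ, mul_comm q 2, ← hpq]
      rw [hPp, eq_neg_of_add_eq_zero_left hsum]
      ring)
  apply ha0
  have hz : ∀ j : Fin J, a.1 j = 0 ∧ a.2 j = 0 := by
    intro j
    obtain ⟨h1, h2⟩ := hall j j.2
    simp only [hr, hs, Fin.is_lt, dif_pos, Fin.eta] at h1 h2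
    exact ⟨hemb_inj (by rw [h1, map_zero]), hemb_inj (by rw [h2, map_zero])⟩
  exact Prod.ext (funext fun j => (hz j).1) (funext fun j => (hz j).2)

/-- For `p` large in terms of its degree, a separable polynomial over `𝔽_p` multiplied by any
nonzero constant takes a nonzero square value. -/
theorem exists_square_value {p : ℕ} [hp : Fact p.Prime] {P : (ZMod p)[X]} (hP : P.Separable)
    (hN : 1 ≤ P.natDegree) (hbig : 100 * (P.natDegree + 1) ^ 3 ≤ p) {c : ZMod p} (hc : c ≠ 0) :
    ∃ t, P.eval t ≠ 0 ∧ IsSquare (c * P.eval t) := by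
  have hP0 : P ≠ 0 := fun h => by simp [h] at hN
  obtain ⟨b, hb⟩ : ∃ b, P.eval b ≠ 0 := by
    by_contra! h
    have h1 : Fintype.card (ZMod p) ≤ P.natDegree := by
      classical
      refine le_trans (Finset.card_le_card (s := Finset.univ) (t := P.roots.toFinset) ?_)
        ((Multiset.toFinset_card_le _).trans (card_roots' P))
      intro t _
      simp [hP0, h t]
    rw [ZMod.card] at h1
    have : P.natDegree + 1 ≤ (P.natDegree + 1) ^ 3 := Nat.le_self_pow (by norm_num) _
    omega
  set R := P.comp (X + C b) with hR
  have hRsep : R.Separable := by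
    have h1 : IsCoprime (P.comp (X + C b)) ((derivative P).comp (X + C b)) :=
      IsCoprime.map hP (compRingHom (X + C b))
    rw [hR, Polynomial.Separable, derivative_comp]
    simpa using h1
  have hRdeg : R.natDegree = P.natDegree := by
    rw [hR, natDegree_comp, natDegree_X_add_C, mul_one]
  obtain ⟨t, ht0, ht⟩ := stepanov_aux hRsep.squarefree (by rw [hRdeg]; exact hN)
    (by simpa [hR] using hb) (by rw [hRdeg]; exact hbig) (-(c ^ (p / 2)))
  have he : R.eval t = P.eval (t + b) := by simp [hR]
  rw [he] at ht0 ht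
  refine ⟨t + b, ht0, ?_⟩
  rw [ZMod.euler_criterion p (mul_ne_zero hc ht0), mul_pow]
  rcases ZMod.pow_div_two_eq_neg_one_or_one p hc with h1 | h1 <;>
  rcases ZMod.pow_div_two_eq_neg_one_or_one p ht0 with h2 | h2 <;>
  simp_all

/-! ### Lifting points to `ℚ_p` -/

theorem toZMod_eq_zero_iff {p : ℕ} [Fact p.Prime] (a : ℤ_[p]) :
    PadicInt.toZMod a = 0 ↔ ‖a‖ < 1 := by
  rw [← RingHom.mem_ker, PadicInt.ker_toZMod, IsLocalRing.mem_maximalIdeal, PadicInt.mem_nonunits]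

theorem norm_eq_one_of_toZMod_ne_zero {p : ℕ} [Fact p.Prime] {a : ℤ_[p]}
    (h : PadicInt.toZMod a ≠ 0) : ‖a‖ = 1 := by
  rw [Ne, toZMod_eq_zero_iff, not_lt] at h
  exact le_antisymm (PadicInt.norm_le_one a) h

/-- A simple root modulo `p` lifts to `ℤ_p`. -/
theorem hensel_simple {p : ℕ} [Fact p.Prime] (F : ℤ_[p][X]) (a : ℤ_[p])
    (h0 : PadicInt.toZMod (F.eval a) = 0) (h1 : PadicInt.toZMod (F.derivative.eval a) ≠ 0) :
    ∃ z : ℤ_[p], F.eval z = 0 := by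
  obtain ⟨z, hz, -⟩ := hensels_lemma (F := F) (a := a) (by
    simp only [coe_aeval_eq_eval]
    rw [norm_eq_one_of_toZMod_ne_zero h1, one_pow]
    exact (toZMod_eq_zero_iff _).mp h0)
  exact ⟨z, by simpa using hz⟩

theorem toZMod_surj {p : ℕ} [Fact p.Prime] (t : ZMod p) : ∃ a : ℤ, PadicInt.toZMod (a : ℤ_[p]) = t :=
  ⟨t.cast, by rw [map_intCast]; exact ZMod.intCast_zmod_cast t⟩

theorem isSquare_padicInt {p : ℕ} [Fact p.Prime] (hp : p ≠ 2) {a : ℤ_[p]}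
    (h0 : PadicInt.toZMod a ≠ 0) (h : IsSquare (PadicInt.toZMod a)) : IsSquare a := by
  obtain ⟨s, hs⟩ := h
  obtain ⟨b, hb⟩ := toZMod_surj s
  have hs0 : s ≠ 0 := by rintro rfl; simp [hs] at h0
  have h2 : (2 : ZMod p) ≠ 0 := by
    intro h
    have : ((2 : ℕ) : ZMod p) = 0 := by exact_mod_cast h
    rw [ZMod.natCast_eq_zero_iff] at this
    exact hp ((Nat.prime_dvd_prime_iff_eq (Fact.out) Nat.prime_two).mp this)
  obtain ⟨z, hz⟩ := hensel_simple (X ^ 2 - C a) b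
    (by rw [eval_sub, eval_pow, eval_X, eval_C, map_sub, map_pow, hb, hs]; ring)
    (by
      have : (derivative (X ^ 2 - C a)).eval (b : ℤ_[p]) = 2 * b := by
        simp [one_add_one_eq_two]
      rw [this, map_mul, hb, map_ofNat]
      exact mul_ne_zero h2 hs0)
  refine ⟨z, ?_⟩
  rw [eval_sub, eval_pow, eval_X, eval_C] at hz
  rw [← pow_two]; exact (sub_eq_zero.mp hz).symm

/-- Integers congruent to `1` modulo `8 p` are squares in `ℤ_p`. -/
theorem isSquare_of_modEq_one {p : ℕ} [Fact p.Prime] {m : ℤ} (h : (8 * p : ℤ) ∣ m - 1) :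
    IsSquare (m : ℤ_[p]) := by
  by_cases hp : p = 2
  · subst hp
    obtain ⟨z, hz, -⟩ := hensels_lemma (p := 2) (F := X ^ 2 - C (m : ℤ_[2])) (a := 1) (by
      have h1 : (X ^ 2 - C (m : ℤ_[2])).aeval (1 : ℤ_[2]) = ((1 - m : ℤ) : ℤ_[2]) := by simp
      have h2 : (derivative (X ^ 2 - C (m : ℤ_[2]))).aeval (1 : ℤ_[2]) =
          ((2 : ℕ) : ℤ_[2]) := by simp [one_add_one_eq_two]
      rw [h1, h2, PadicInt.norm_p]
      have h3 : ‖((1 - m : ℤ) : ℤ_[2])‖ ≤ ((2 : ℕ) : ℝ) ^ (-(3 : ℕ) : ℤ) := by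
        rw [PadicInt.norm_int_le_pow_iff_dvd]
        have : ((2 : ℕ) ^ 3 : ℤ) ∣ m - 1 := dvd_trans ⟨2, by norm_num⟩ h
        rw [← dvd_neg, neg_sub] 
        exact_mod_cast this
      refine lt_of_le_of_lt h3 ?_
      norm_num)
    refine ⟨z, ?_⟩
    simp at hz
    rw [← pow_two]; exact (sub_eq_zero.mp hz).symm
  · have h1 : PadicInt.toZMod (m : ℤ_[p]) = 1 := by
      rw [map_intCast]
      have : ((m - 1 : ℤ) : ZMod p) = 0 := by
        rw [ZMod.intCast_zmod_eq_zero_iff_dvd]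
        exact dvd_trans (Dvd.intro_left _ rfl) h
      push_cast at this
      exact sub_eq_zero.mp this
    exact isSquare_padicInt hp (by rw [h1]; exact one_ne_zero) (by rw [h1]; exact IsSquare.one)

theorem toZMod_aeval {p : ℕ} [Fact p.Prime] (P : ℤ[X]) (a : ℤ_[p]) :
    PadicInt.toZMod (aeval a P) = (P.map (Int.castRingHom (ZMod p))).eval (PadicInt.toZMod a) := by
  rw [aeval_def, hom_eval₂, eval_map]
  congr 1
  exact RingHom.ext_int _ _

/-- A simple root of `P` modulo `p` yields a point with `y = 0` on every twist. -/
theorem padic_root {p : ℕ} [Fact p.Prime] (P : ℤ[X]) {t : ZMod p}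
    (hsep : (P.map (Int.castRingHom (ZMod p))).Separable)
    (ht : (P.map (Int.castRingHom (ZMod p))).eval t = 0) :
    ∃ z : ℚ_[p], aeval z P = 0 := by
  obtain ⟨a, ha⟩ := toZMod_surj t
  have key : ∀ (R : ℤ[X]) (b : ℤ_[p]), (R.map (algebraMap ℤ ℤ_[p])).eval b = aeval b R := by
    intro R b; rw [aeval_def, eval_map]
  obtain ⟨z, hz⟩ := hensel_simple (P.map (algebraMap ℤ ℤ_[p])) a
    (by rw [key, toZMod_aeval, ha, ht])
    (by
      rw [derivative_map, key, toZMod_aeval, ha, ← derivative_map]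
      obtain ⟨U, V, h⟩ := hsep
      intro h0
      have := congrArg (eval t) h
      rw [eval_add, eval_mul, eval_mul, ht, h0] at this
      simp at this)
  rw [key] at hz
  refine ⟨(z : ℚ_[p]), ?_⟩
  have := congrArg (algebraMap ℤ_[p] ℚ_[p]) hz
  rw [← aeval_algebraMap_apply, map_zero] at this
  exact this

/-- A nonzero square value of `d P` modulo `p` yields a point over `ℚ_p`. -/
theorem padic_point {p : ℕ} [Fact p.Prime] (hp : p ≠ 2) (P : ℤ[X]) {d : ℤ} {t : ZMod p}
    (h0 : (d : ZMod p) * (P.map (Int.castRingHom (ZMod p))).eval t ≠ 0)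
    (hsq : IsSquare ((d : ZMod p) * (P.map (Int.castRingHom (ZMod p))).eval t)) :
    ∃ z y : ℚ_[p], y ^ 2 = (d : ℚ_[p]) * aeval z P := by
  obtain ⟨a, ha⟩ := toZMod_surj t
  have e : PadicInt.toZMod ((d : ℤ_[p]) * aeval (a : ℤ_[p]) P) =
      (d : ZMod p) * (P.map (Int.castRingHom (ZMod p))).eval t := by
    rw [map_mul, toZMod_aeval, ha, map_intCast]
  obtain ⟨y, hy⟩ := isSquare_padicInt hp (a := (d : ℤ_[p]) * aeval (a : ℤ_[p]) P)
    (by rw [e]; exact h0) (by rw [e]; exact hsq)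
  refine ⟨((a : ℤ_[p]) : ℚ_[p]), (y : ℚ_[p]), ?_⟩
  have := congrArg (algebraMap ℤ_[p] ℚ_[p]) hy
  rw [map_mul, ← aeval_algebraMap_apply, map_intCast, map_mul] at this
  rw [pow_two]
  exact this.symm

/-! ### Lattice points in cubes -/

section Lattice
variable {ι : Type*} [Fintype ι] [DecidableEq ι]

/-- The cube `[-R, R]^ι` in `ℤ^ι`. -/
noncomputable def cube (ι : Type*) [Fintype ι] [DecidableEq ι] (R : ℕ) : Finset (ι → ℤ) :=
  Fintype.piFinset fun _ => Finset.Icc (-(R : ℤ)) R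

theorem mem_cube {R : ℕ} {x : ι → ℤ} : x ∈ cube ι R ↔ ∀ i, |x i| ≤ R := by
  simp [cube, abs_le]

theorem card_cube (R : ℕ) : (cube ι R).card = (2 * R + 1) ^ Fintype.card ι := by
  rw [cube, Fintype.card_piFinset]
  simp only [Int.card_Icc, Finset.prod_const, Finset.card_univ]
  congr 1
  omega

open Classical in
/-- If every class modulo `H` has a representative in the cube of radius `r`, then the points of a
coset of `H` in a cube of radius `R` are counted, up to a boundary layer of width `r`, by
volume. -/
theorem card_coset_cube (H : AddSubgroup (ι → ℤ)) {r : ℕ}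
    (hr : ∀ x : ι → ℤ, ∃ y ∈ cube ι r, x - y ∈ H) (c : ι → ℤ) (R : ℕ) :
    H.index * ((cube ι R).filter fun x => c + x ∈ H).card ≤ (2 * (R + r) + 1) ^ Fintype.card ι ∧
    (r ≤ R → (2 * (R - r) + 1) ^ Fintype.card ι ≤
      H.index * ((cube ι R).filter fun x => c + x ∈ H).card) := by
  have hsec : ∀ k : (ι → ℤ) ⧸ H, ∃ y ∈ cube ι r, (QuotientAddGroup.mk y : (ι → ℤ) ⧸ H) = k := by
    intro k
    obtain ⟨x, rfl⟩ := QuotientAddGroup.mk_surjective k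
    obtain ⟨y, hy, hxy⟩ := hr x
    exact ⟨y, hy, by rw [QuotientAddGroup.eq]; rwa [neg_add_eq_sub]⟩
  choose ρ hρ1 hρ2 using hsec
  have hfin : Finite ((ι → ℤ) ⧸ H) := by
    refine Finite.of_injective (β := cube ι r) (fun k => ⟨ρ k, hρ1 k⟩) fun k l h => ?_
    have : ρ k = ρ l := congrArg Subtype.val h
    rw [← hρ2 k, ← hρ2 l, this]
  have := Fintype.ofFinite ((ι → ℤ) ⧸ H)
  have hidx : H.index = (Finset.univ : Finset ((ι → ℤ) ⧸ H)).card := by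
    rw [AddSubgroup.index, Nat.card_eq_fintype_card, Finset.card_univ]
  have hmk : ∀ x : ι → ℤ, c + x ∈ H → ∀ k, (QuotientAddGroup.mk (c + (x + ρ k)) : (ι → ℤ) ⧸ H) = k := by
    intro x hx k
    conv_rhs => rw [← hρ2 k]
    rw [eq_comm, QuotientAddGroup.eq]
    convert hx using 1
    abel
  rw [hidx, ← Finset.card_product]
  constructor
  · rw [← card_cube]
    refine Finset.card_le_card_of_injOn (fun kx => kx.2 + ρ kx.1) ?_ ?_
    · rintro ⟨k, x⟩ h
      simp only [Finset.coe_product, Set.mem_prod, Finset.mem_coe, Finset.mem_filter] at h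
      rw [Finset.mem_coe, mem_cube]
      intro i
      have h1 := mem_cube.mp h.2.1 i
      have h2 := mem_cube.mp (hρ1 k) i
      push_cast
      exact (abs_add_le _ _).trans (add_le_add h1 h2)
    · rintro ⟨k, x⟩ h ⟨l, y⟩ h' he
      simp only [Finset.coe_product, Set.mem_prod, Finset.mem_coe, Finset.mem_filter] at h h' he
      have e1 := hmk x h.2.2 k
      have e2 := hmk y h'.2.2 l
      rw [he, e2] at e1
      subst e1
      simpa using he
  · intro hrR
    rw [← card_cube]
    refine Finset.card_le_card_of_injOn
      (fun x => ((QuotientAddGroup.mk (c + x) : (ι → ℤ) ⧸ H), x - ρ (QuotientAddGroup.mk (c + x)))) ?_ ?_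
    · intro x hx
      simp only [Finset.coe_product, Set.mem_prod, Finset.mem_coe, Finset.mem_filter, Finset.mem_univ,
        true_and]
      constructor
      · rw [mem_cube]
        intro i
        have h1 := mem_cube.mp hx i
        have h2 := mem_cube.mp (hρ1 (QuotientAddGroup.mk (c + x))) i
        have h3 := abs_sub (x i) (ρ (QuotientAddGroup.mk (c + x)) i)
        rw [Nat.cast_sub hrR] at h1
        rw [Pi.sub_apply]
        linarith
      · have := hρ2 (QuotientAddGroup.mk (c + x))
        rw [QuotientAddGroup.eq] at this
        convert this using 1
        abel
    · intro x _ y _ he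
      simp only [Prod.mk.injEq] at he
      rw [he.1] at he
      simpa using he.2

/-- Rounding: modulo the columns of a nonsingular integer matrix with entries bounded by `h`, every
integer vector is congruent to one with entries bounded by `n h`. -/
theorem exists_small_rep (A : Matrix ι ι ℤ) (hA : A.det ≠ 0) {h : ℕ} (hh : ∀ i j, |A i j| ≤ h)
    (z : ι → ℤ) : ∃ y : ι → ℤ, z - A.mulVec y ∈ cube ι (Fintype.card ι * h) := by
  set A' : Matrix ι ι ℚ := A.map (Int.cast : ℤ → ℚ) with hA'
  have hdet : IsUnit A'.det := by
    rw [isUnit_iff_ne_zero]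
    have : A'.det = (A.det : ℚ) := by
      rw [hA']; exact ((Int.castRingHom ℚ).map_det A).symm
    rw [this]; exact_mod_cast hA
  set x : ι → ℚ := A'⁻¹.mulVec (fun i => (z i : ℚ)) with hx
  have hAx : A'.mulVec x = fun i => (z i : ℚ) := by
    rw [hx, Matrix.mulVec_mulVec, Matrix.mul_nonsing_inv _ hdet, Matrix.one_mulVec]
  refine ⟨fun i => ⌊x i⌋, mem_cube.mpr fun i => ?_⟩
  have e : (((z - A.mulVec fun i => ⌊x i⌋) i : ℤ) : ℚ) = ∑ j, (A i j : ℚ) * Int.fract (x j) := by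
    have h1 := congrFun hAx i
    simp only [Matrix.mulVec, dotProduct, hA', Matrix.map_apply] at h1
    simp only [Pi.sub_apply, Matrix.mulVec, dotProduct, Int.cast_sub, Int.cast_sum, Int.cast_mul]
    rw [← h1, ← Finset.sum_sub_distrib]
    exact Finset.sum_congr rfl fun j _ => by rw [Int.fract]; ring
  have : |(((z - A.mulVec fun i => ⌊x i⌋) i : ℤ) : ℚ)| ≤ (Fintype.card ι * h : ℕ) := by
    rw [e]
    refine (Finset.abs_sum_le_sum_abs _ _).trans ?_
    calc ∑ j, |(A i j : ℚ) * Int.fract (x j)| ≤ ∑ _j : ι, (h : ℚ) := by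
          refine Finset.sum_le_sum fun j _ => ?_
          rw [abs_mul, abs_of_nonneg (Int.fract_nonneg (x j))]
          have h1 : |(A i j : ℚ)| ≤ h := by exact_mod_cast hh i j
          have h2 := (Int.fract_lt_one (x j)).le
          have h3 := Int.fract_nonneg (x j)
          calc |(A i j : ℚ)| * Int.fract (x j) ≤ |(A i j : ℚ)| * 1 := by gcongr
            _ ≤ h := by simpa using h1
      _ = _ := by simp
  exact_mod_cast this

end Lattice

theorem one_add_pow_le {x X : ℝ} (hx : 0 ≤ x) (hX : x ≤ X) (n : ℕ) :
    (1 + x) ^ n ≤ 1 + n * (1 + X) ^ n * x := by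
  induction n with
  | zero => simp
  | succ n ih =>
    have h1 : (1 + x) ^ n ≤ (1 + X) ^ n := by gcongr
    have h2 : (1 : ℝ) ≤ (1 + X) := by linarith
    have h3 : 0 ≤ (1 + X) ^ n := by positivity
    rw [pow_succ, pow_succ]
    push_cast
    have h4 : (1 + X) ^ n ≤ (1 + X) ^ n * (1 + X) := le_mul_of_one_le_right h3 h2
    have h5 : (n : ℝ) * (1 + X) ^ n * x ≤ n * ((1 + X) ^ n * (1 + X)) * x := by gcongr
    have h6 : (1 + x) ^ n * x ≤ (1 + X) ^ n * (1 + X) * x := by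
      gcongr; exact h1.trans h4
    nlinarith

/-! ### Chebyshev-type sums over rational primes -/

/-- Partial summation as a comparison principle: a sequence whose partial sums are dominated by
those of a constant may be replaced by that constant against a decreasing weight. -/
theorem sum_mul_le_of_antitone {a f : ℕ → ℝ} {C : ℝ} (hf : Antitone f) (hf0 : ∀ m, 0 ≤ f m)
    (hC : ∀ k, ∑ m ∈ Finset.range k, a m ≤ C * k) (k : ℕ) :
    ∑ m ∈ Finset.range k, a m * f m ≤ C * ∑ m ∈ Finset.range k, f m := by
  have key : ∀ k, f k * ∑ m ∈ Finset.range (k + 1), (C - a m) ≤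
      ∑ m ∈ Finset.range (k + 1), (C - a m) * f m := by
    intro k
    induction k with
    | zero => simp [mul_comm]
    | succ k ih =>
      rw [Finset.sum_range_succ _ (k + 1), Finset.sum_range_succ _ (k + 1), mul_add]
      have h0 : 0 ≤ ∑ m ∈ Finset.range (k + 1), (C - a m) := by
        have := hC (k + 1)
        rw [Finset.sum_sub_distrib, Finset.sum_const, Finset.card_range, nsmul_eq_mul]
        linarith
      have := mul_le_mul_of_nonneg_right (hf (Nat.le_succ k)) h0
      simp only [Nat.succ_eq_add_one] at this
      linarith [mul_comm (f (k + 1)) (C - a (k + 1))]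
  cases k with
  | zero => simp
  | succ k =>
    have h0 : 0 ≤ ∑ m ∈ Finset.range (k + 1), (C - a m) := by
      have := hC (k + 1)
      rw [Finset.sum_sub_distrib, Finset.sum_const, Finset.card_range, nsmul_eq_mul]
      linarith
    have h1 := (mul_nonneg (hf0 k) h0).trans (key k)
    simp only [sub_mul, Finset.sum_sub_distrib, ← Finset.mul_sum] at h1
    linarith

theorem sum_rpow_le {n : ℕ} (hn : 1 ≤ n) (k : ℕ) :
    ∑ m ∈ Finset.range k, ((m + 1 : ℕ) : ℝ) ^ ((1 : ℝ) / n - 1) ≤ n * (k : ℝ) ^ ((1 : ℝ) / n) := by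
  have hn0 : (0 : ℝ) < n := by exact_mod_cast hn
  have hs0 : (0 : ℝ) < 1 / n := by positivity
  have hs1 : (1 : ℝ) / n ≤ 1 := by
    rw [div_le_one hn0]; exact_mod_cast hn
  induction k with
  | zero => simp; positivity
  | succ k ih =>
    rw [Finset.sum_range_succ]
    have hk : (0 : ℝ) < ((k + 1 : ℕ) : ℝ) := by positivity
    set u : ℝ := ((k + 1 : ℕ) : ℝ) with hu
    have hku : (k : ℝ) = u * (1 + -(1 / u)) := by
      field_simp; rw [hu]; push_cast; ring
    have hu1 : 1 ≤ u := by rw [hu]; exact_mod_cast Nat.succ_le_succ (Nat.zero_le k)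
    have hu2 : 1 / u ≤ 1 := by rw [div_le_one hk]; exact hu1
    have hB := rpow_one_add_le_one_add_mul_self (s := -(1 / u)) (by linarith) hs0.le hs1
    have h1 : (k : ℝ) ^ ((1 : ℝ) / n) ≤ u ^ ((1 : ℝ) / n) * (1 + 1 / n * -(1 / u)) := by
      rw [hku, Real.mul_rpow hk.le (by linarith)]
      gcongr
    have h2 : u ^ ((1 : ℝ) / n - 1) = u ^ ((1 : ℝ) / n) / u := Real.rpow_sub_one hk.ne' _
    rw [h2]
    have h3 : (n : ℝ) * (u ^ ((1 : ℝ) / n) * (1 + 1 / n * -(1 / u))) =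
        n * u ^ ((1 : ℝ) / n) - u ^ ((1 : ℝ) / n) / u := by
      field_simp
      ring
    have h4 := mul_le_mul_of_nonneg_left h1 hn0.le
    linarith

theorem sum_primes_eq_sum_range (g : ℕ → ℝ) (Y : ℕ) :
    ∑ p ∈ (Finset.Icc 1 Y).filter Nat.Prime, g p =
      ∑ m ∈ Finset.range Y, if (m + 1).Prime then g (m + 1) else 0 := by
  rw [Finset.sum_filter, Finset.range_eq_Ico, Finset.sum_Ico_add' (fun m => if m.Prime then g m else 0) 0 Y 1]
  rfl

/-- Chebyshev's upper bound. -/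
theorem sum_log_primes_le (Y : ℕ) :
    ∑ p ∈ (Finset.Icc 1 Y).filter Nat.Prime, Real.log p ≤ Real.log 4 * Y := by
  have h := Chebyshev.theta_le_log4_mul_x (x := (Y : ℝ)) (by positivity)
  refine le_trans (le_of_eq ?_) h
  rw [Chebyshev.theta]
  simp only [Nat.floor_natCast]
  rfl

theorem sum_log_mul_rpow_le {n : ℕ} (hn : 1 ≤ n) (Y : ℕ) :
    ∑ p ∈ (Finset.Icc 1 Y).filter Nat.Prime, Real.log p * (p : ℝ) ^ ((1 : ℝ) / n - 1) ≤
      Real.log 4 * n * (Y : ℝ) ^ ((1 : ℝ) / n) := by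
  have hn0 : (0 : ℝ) < n := by exact_mod_cast hn
  have hs1 : (1 : ℝ) / n ≤ 1 := by
    rw [div_le_one hn0]; exact_mod_cast hn
  have h := sum_mul_le_of_antitone (C := Real.log 4)
    (a := fun m => if (m + 1).Prime then Real.log ((m + 1 : ℕ) : ℝ) else 0)
    (f := fun m => ((m + 1 : ℕ) : ℝ) ^ ((1 : ℝ) / n - 1)) ?_ (fun m => by positivity) ?_ Y
  · rw [sum_primes_eq_sum_range (fun p => Real.log p * (p : ℝ) ^ ((1 : ℝ) / n - 1))]
    simp only [ite_mul, zero_mul] at h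
    refine h.trans ?_
    rw [mul_assoc]
    exact mul_le_mul_of_nonneg_left (sum_rpow_le hn Y) (Real.log_nonneg (by norm_num))
  · intro m m' hm
    refine Real.rpow_le_rpow_of_nonpos (by positivity) ?_ (by linarith)
    exact_mod_cast Nat.succ_le_succ hm
  · intro k
    rw [← sum_primes_eq_sum_range (fun p => Real.log p)]
    exact sum_log_primes_le k

theorem sum_log_div_sq_le : ∃ C : ℝ, 0 < C ∧ ∀ Y : ℕ,
    ∑ p ∈ (Finset.Icc 1 Y).filter Nat.Prime, Real.log p / (p : ℝ) ^ 2 ≤ C := by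
  have hsum : Summable fun m : ℕ => 2 * ((m : ℝ) ^ ((3 : ℝ) / 2))⁻¹ :=
    (Real.summable_nat_rpow_inv.mpr (by norm_num)).mul_left 2
  refine ⟨∑' m : ℕ, 2 * ((m : ℝ) ^ ((3 : ℝ) / 2))⁻¹ + 1, ?_, fun Y => ?_⟩
  · have : 0 ≤ ∑' m : ℕ, 2 * ((m : ℝ) ^ ((3 : ℝ) / 2))⁻¹ := tsum_nonneg fun m => by positivity
    linarith
  · refine le_trans ?_ (le_add_of_nonneg_right zero_le_one)
    refine le_trans (Finset.sum_le_sum fun p hp => ?_)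
      (hsum.sum_le_tsum _ fun m _ => by positivity)
    have hp1 : 0 < (p : ℝ) := by exact_mod_cast (Finset.mem_filter.mp hp).2.pos
    have h1 := Real.log_le_rpow_div hp1.le (ε := 1 / 2) (by norm_num)
    have h2 : (p : ℝ) ^ 2 = (p : ℝ) ^ ((3 : ℝ) / 2) * (p : ℝ) ^ ((1 : ℝ) / 2) := by
      rw [← Real.rpow_add hp1]; norm_num
    rw [h2, div_le_iff₀ (by positivity)]
    calc Real.log p ≤ (p : ℝ) ^ ((1 : ℝ) / 2) / (1 / 2) := h1
      _ = _ := by field_simp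

/-! ### Boxes in rings of integers -/

/-- The entries of the matrix of multiplication by `z` are bounded by the coordinates of `z`. -/
theorem exists_entry_bound {O : Type*} [CommRing O] {ι : Type*} [Fintype ι] [DecidableEq ι]
    (b : Module.Basis ι ℤ O) : ∃ C : ℕ, 1 ≤ C ∧ ∀ (z : O) (h : ℕ),
    (∀ i, |b.equivFun z i| ≤ h) → ∀ i j, |Algebra.leftMulMatrix b z i j| ≤ ((C * h : ℕ) : ℤ) := by
  refine ⟨1 + ∑ k, ∑ i, ∑ j, (Algebra.leftMulMatrix b (b k) i j).natAbs, by omega, ?_⟩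
  intro z h hz i j
  have e : Algebra.leftMulMatrix b z i j =
      ∑ k, b.equivFun z k * Algebra.leftMulMatrix b (b k) i j := by
    conv_lhs => rw [← b.sum_equivFun z]
    rw [map_sum, Matrix.sum_apply]
    refine Finset.sum_congr rfl fun k _ => ?_
    rw [map_smul, Matrix.smul_apply, smul_eq_mul]
  rw [e]
  refine (Finset.abs_sum_le_sum_abs _ _).trans ?_
  push_cast
  rw [add_mul, one_mul, Finset.sum_mul]
  refine le_add_of_nonneg_of_le (by positivity) (Finset.sum_le_sum fun k _ => ?_)
  rw [abs_mul, mul_comm]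
  refine mul_le_mul ?_ (hz k) (abs_nonneg _) (by positivity)
  calc |Algebra.leftMulMatrix b (b k) i j|
      ≤ ∑ j, |Algebra.leftMulMatrix b (b k) i j| :=
        Finset.single_le_sum (f := fun j => |Algebra.leftMulMatrix b (b k) i j|)
          (fun _ _ => abs_nonneg _) (Finset.mem_univ j)
    _ ≤ _ := Finset.single_le_sum
          (f := fun i => ∑ j, |Algebra.leftMulMatrix b (b k) i j|)
          (fun _ _ => Finset.sum_nonneg fun _ _ => abs_nonneg _) (Finset.mem_univ i)

section Boxes
variable {O : Type*} [CommRing O] [IsDedekindDomain O] [Module.Free ℤ O]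
  [Module.Finite ℤ O] {ι : Type*} [Fintype ι] [DecidableEq ι]

theorem exists_det_bound (ι : Type*) [Fintype ι] [DecidableEq ι] : ∃ δ : ℝ, 0 < δ ∧
    ∀ E : Matrix ι ι ℝ, (∀ i j, |E i j| ≤ δ) → 1 / 2 ≤ (1 + E).det ∧ (1 + E).det ≤ 2 := by
  have hc : Continuous fun E : ι → ι → ℝ => (1 + Matrix.of E).det := by
    refine Continuous.matrix_det ?_
    exact continuous_const.add (by fun_prop)
  have hc0 := hc.tendsto 0
  have h0 : (1 + Matrix.of (0 : ι → ι → ℝ)).det = 1 := by simp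
  rw [h0, Metric.tendsto_nhds_nhds] at hc0
  obtain ⟨δ, hδ, h⟩ := hc0 (1 / 2) (by norm_num)
  refine ⟨δ / 2, by positivity, fun E hE => ?_⟩
  have h1 : dist (fun i j => E i j : ι → ι → ℝ) 0 < δ := by
    refine (dist_pi_lt_iff hδ).mpr fun i => (dist_pi_lt_iff hδ).mpr fun j => ?_
    rw [Pi.zero_apply, Pi.zero_apply, Real.dist_eq, sub_zero]
    linarith [hE i j]
  have h2 := h h1
  rw [Real.dist_eq, abs_lt] at h2
  have h3 : Matrix.of (fun i j => E i j) = E := rfl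
  rw [h3] at h2
  constructor <;> linarith

/-- Elements `T + x` with `T` a large multiple of the size of `x` have norm comparable
to `T ^ n`. -/
theorem exists_norm_bound (b : Module.Basis ι ℤ O) : ∃ k : ℕ, 1 ≤ k ∧ ∀ (R : ℕ), 1 ≤ R →
    ∀ x ∈ cube ι R, ((k * R : ℕ) : ℝ) ^ Fintype.card ι / 2 ≤
        (Ideal.absNorm (Ideal.span {((k * R : ℕ) : O) + b.equivFun.symm x}) : ℝ) ∧
      (Ideal.absNorm (Ideal.span {((k * R : ℕ) : O) + b.equivFun.symm x}) : ℝ) ≤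
        2 * ((k * R : ℕ) : ℝ) ^ Fintype.card ι := by
  obtain ⟨C, hC1, hC⟩ := exists_entry_bound b
  obtain ⟨δ, hδ, hdet⟩ := exists_det_bound ι
  obtain ⟨k, hk⟩ := exists_nat_gt (C / δ)
  have hk0 : (0 : ℝ) < k := lt_of_le_of_lt (by positivity) hk
  have hk1 : 1 ≤ k := by exact_mod_cast hk0
  refine ⟨k, hk1, fun R hR x hx => ?_⟩
  have hR0 : (0 : ℝ) < R := by exact_mod_cast hR
  set T : ℕ := k * R with hT
  have hT0 : (0 : ℝ) < T := by rw [hT]; push_cast; positivity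
  set M := Algebra.leftMulMatrix b (b.equivFun.symm x) with hM
  have hMb : ∀ i j, |M i j| ≤ ((C * R : ℕ) : ℤ) := by
    refine hC _ R ?_
    intro i
    rw [LinearEquiv.apply_symm_apply]
    exact mem_cube.mp hx i
  set E : Matrix ι ι ℝ := (T : ℝ)⁻¹ • M.map (Int.cast : ℤ → ℝ) with hE
  have hEb := hdet E (fun i j => by
    have h1 : |(M i j : ℝ)| ≤ C * R := by exact_mod_cast hMb i j
    simp only [hE, Matrix.smul_apply, Matrix.map_apply, smul_eq_mul, abs_mul, abs_inv, abs_of_pos hT0]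
    rw [inv_mul_le_iff₀ hT0]
    refine h1.trans ?_
    have : (C : ℝ) ≤ k * δ := by
      rw [div_lt_iff₀ hδ] at hk; exact hk.le
    rw [hT]; push_cast
    nlinarith)
  have hN : (Ideal.absNorm (Ideal.span {(T : O) + b.equivFun.symm x}) : ℝ) =
      |(T : ℝ) ^ Fintype.card ι * (1 + E).det| := by
    have e1 : (1 + E) = (T : ℝ)⁻¹ • ((Algebra.leftMulMatrix b ((T : O) + b.equivFun.symm x)).map
        (Int.cast : ℤ → ℝ)) := by
      ext i j
      simp only [hE, map_add, map_natCast, Matrix.add_apply, Matrix.smul_apply, Matrix.map_apply,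
        smul_eq_mul, ← hM, Int.cast_add, mul_add]
      congr 1
      rw [Matrix.one_apply]
      rw [← Matrix.diagonal_natCast, Matrix.diagonal_apply]
      split_ifs
      · simp [hT0.ne']
      · simp
    rw [e1, Matrix.det_smul, ← mul_assoc, ← mul_pow, mul_inv_cancel₀ hT0.ne', one_pow, one_mul,
      Ideal.absNorm_span_singleton, Algebra.norm_eq_matrix_det b]
    rw [Nat.cast_natAbs, Int.cast_abs]
    congr 1
    exact (RingHom.map_det (Int.castRingHom ℝ) _)
  have hTn : (0 : ℝ) < (T : ℝ) ^ Fintype.card ι := by positivity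
  rw [hN, abs_of_nonneg (mul_nonneg hTn.le (by linarith))]
  constructor <;> nlinarith

/-- A nonzero ideal of norm `q` contains a nonzero element with coordinates at most `q ^ (1/n)`,
by the pigeonhole principle. -/
theorem exists_small_mem (b : Module.Basis ι ℤ O) (I : Ideal O) (hI : I ≠ ⊥) {h : ℕ}
    (hh : Ideal.absNorm I < (h + 1) ^ Fintype.card ι) :
    ∃ z ∈ I, z ≠ 0 ∧ ∀ i, |b.equivFun z i| ≤ h := by
  have hfin : Finite (O ⧸ I) := Ideal.finiteQuotientOfFreeOfNeBot I hI
  have := Fintype.ofFinite (O ⧸ I)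
  let f : (ι → Fin (h + 1)) → O ⧸ I := fun v =>
    Ideal.Quotient.mk I (b.equivFun.symm fun i => ((v i : ℕ) : ℤ))
  have hcard : Fintype.card (O ⧸ I) < Fintype.card (ι → Fin (h + 1)) := by
    have e : Ideal.absNorm I = Fintype.card (O ⧸ I) := by
      rw [Ideal.absNorm_apply, Submodule.cardQuot_apply, Nat.card_eq_fintype_card]
    rw [← e]
    simpa using hh
  obtain ⟨v, w, hvw, hf⟩ := Fintype.exists_ne_map_eq_of_card_lt f hcard
  refine ⟨b.equivFun.symm (fun i => ((v i : ℕ) : ℤ)) - b.equivFun.symm (fun i => ((w i : ℕ) : ℤ)),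
    Ideal.Quotient.eq.mp hf, ?_, ?_⟩
  · intro h0
    apply hvw
    have := b.equivFun.symm.injective (sub_eq_zero.mp h0)
    ext i
    have := congrFun this i
    exact_mod_cast this
  · intro i
    rw [map_sub, LinearEquiv.apply_symm_apply, LinearEquiv.apply_symm_apply, Pi.sub_apply, abs_le]
    have := (v i).2
    have := (w i).2
    constructor <;> omega

open Classical in
/-- Counting the elements of an ideal in a translated cube of coordinates. -/
theorem card_ideal_cube (b : Module.Basis ι ℤ O) : ∃ C : ℕ, 1 ≤ C ∧
    ∀ (I : Ideal O), I ≠ ⊥ → ∀ (h : ℕ), Ideal.absNorm I < (h + 1) ^ Fintype.card ι →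
    ∀ (c : O) (R : ℕ),
      Ideal.absNorm I * ((cube ι R).filter fun x => c + b.equivFun.symm x ∈ I).card ≤
        (2 * (R + C * h) + 1) ^ Fintype.card ι ∧
      (C * h ≤ R → (2 * (R - C * h) + 1) ^ Fintype.card ι ≤
        Ideal.absNorm I * ((cube ι R).filter fun x => c + b.equivFun.symm x ∈ I).card) := by
  obtain ⟨C, hC1, hC⟩ := exists_entry_bound b
  have hne : Nonempty ι := b.index_nonempty
  refine ⟨Fintype.card ι * C, Nat.mul_pos Fintype.card_pos hC1, ?_⟩
  intro I hI h hh c R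
  obtain ⟨z, hzI, hz0, hz⟩ := exists_small_mem b I hI hh
  let H : AddSubgroup (ι → ℤ) :=
    (Submodule.toAddSubgroup I).comap (b.equivFun.symm : (ι → ℤ) →+ O)
  have hmem : ∀ x, x ∈ H ↔ b.equivFun.symm x ∈ I := fun x => Iff.rfl
  have hidx : H.index = Ideal.absNorm I := by
    rw [Ideal.absNorm_apply, Submodule.cardQuot]
    exact AddSubgroup.index_comap_of_surjective _ b.equivFun.symm.surjective
  have hdet : (Algebra.leftMulMatrix b z).det ≠ 0 := by
    rw [← Algebra.norm_eq_matrix_det]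
    exact Algebra.norm_ne_zero_iff.mpr hz0
  have hr : ∀ x : ι → ℤ, ∃ y ∈ cube ι (Fintype.card ι * (C * h)), x - y ∈ H := by
    intro x
    obtain ⟨y, hy⟩ := exists_small_rep _ hdet (hC z h hz) x
    refine ⟨_, hy, ?_⟩
    rw [sub_sub_cancel, hmem]
    have e : (Algebra.leftMulMatrix b z).mulVec y = b.equivFun (z * b.equivFun.symm y) := by
      rw [Algebra.leftMulMatrix_apply]
      have := LinearMap.toMatrix_mulVec_repr b b (Algebra.lmul ℤ O z) (b.equivFun.symm y)
      have h2 : (⇑(b.repr (b.equivFun.symm y)) : ι → ℤ) = y := b.equivFun.apply_symm_apply y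
      rw [h2] at this
      exact this
    rw [e, LinearEquiv.symm_apply_apply]
    exact I.mul_mem_right _ hzI
  have key := card_coset_cube H hr (b.equivFun c) R
  have hf : (cube ι R).filter (fun x => b.equivFun c + x ∈ H) =
      (cube ι R).filter fun x => c + b.equivFun.symm x ∈ I := by
    refine Finset.filter_congr fun x _ => ?_
    rw [hmem, map_add, LinearEquiv.symm_apply_apply]
  rw [hf, hidx] at key
  simpa only [mul_assoc] using key

set_option maxHeartbeats 1000000 in
open Classical in
/-- Boxes `B R` in a ring of integers of rank `n`: all elements have norm of exact order `R ^ n`, and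
every nonzero ideal of norm `q` contains the expected proportion `1 / q` of the box, with
relative error `O(q ^ (1/n) / R)`; for the upper bound `q = O(R ^ n)` is required. -/
theorem exists_boxes (b : Module.Basis ι ℤ O) : ∃ D : ℕ, 1 ≤ D ∧ ∃ D' : ℝ, 0 < D' ∧
    ∃ B : ℕ → Finset O, ∀ R : ℕ, 1 ≤ R → (B R).Nonempty ∧
      (∀ z ∈ B R, (R : ℝ) ^ Fintype.card ι / D ≤ (Ideal.absNorm (Ideal.span {z}) : ℝ) ∧
        Ideal.absNorm (Ideal.span {z}) ≤ D * R ^ Fintype.card ι) ∧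
      ∀ I : Ideal O, I ≠ ⊥ →
        ((B R).card : ℝ) * (1 - D' * (Ideal.absNorm I : ℝ) ^ ((1 : ℝ) / Fintype.card ι) / R) ≤
          Ideal.absNorm I * ((B R).filter fun z => z ∈ I).card ∧
        (Ideal.absNorm I ≤ D * R ^ Fintype.card ι →
          (Ideal.absNorm I : ℝ) * ((B R).filter fun z => z ∈ I).card ≤ ((B R).card : ℝ) *
            (1 + D' * (Ideal.absNorm I : ℝ) ^ ((1 : ℝ) / Fintype.card ι) / R)) := by
  obtain ⟨C, hC1, hC⟩ := card_ideal_cube b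
  obtain ⟨k, hk1, hk⟩ := exists_norm_bound b
  have hne : Nonempty ι := b.index_nonempty
  set n := Fintype.card ι with hn
  have hn1 : 1 ≤ n := Fintype.card_pos
  have hn0 : (0 : ℝ) < n := by exact_mod_cast hn1
  have hC0 : (0 : ℝ) < C := by exact_mod_cast hC1
  have hk0 : (0 : ℝ) < k := by exact_mod_cast hk1
  have hk1' : (1 : ℝ) ≤ k := by exact_mod_cast hk1
  set D : ℕ := 2 * k ^ n with hD
  have hD1 : 1 ≤ D := by rw [hD]; have := Nat.one_le_pow n k hk1; omega
  have hD1' : (1 : ℝ) ≤ D := by exact_mod_cast hD1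
  set X : ℝ := C * D with hX
  have hX0 : 0 < X := by positivity
  have hXn : (1 : ℝ) ≤ (1 + X) ^ n := one_le_pow₀ (by linarith)
  have hinj : ∀ R, Function.Injective fun x : ι → ℤ => ((k * R : ℕ) : O) + b.equivFun.symm x :=
    fun R x y h => b.equivFun.symm.injective (add_left_cancel h)
  refine ⟨D, hD1, n * (1 + X) ^ n * C, by positivity,
    fun R => (cube ι R).image fun x => ((k * R : ℕ) : O) + b.equivFun.symm x, fun R hR => ?_⟩
  have hR0 : (0 : ℝ) < R := by exact_mod_cast hR
  have hV : (((cube ι R).image fun x => ((k * R : ℕ) : O) + b.equivFun.symm x).card : ℝ) =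
      (2 * R + 1 : ℝ) ^ n := by
    rw [Finset.card_image_of_injective _ (hinj R), card_cube]
    push_cast; rfl
  refine ⟨?_, ?_, ?_⟩
  · rw [Finset.image_nonempty]
    exact ⟨0, mem_cube.mpr fun i => by simp⟩
  · intro z hz
    obtain ⟨x, hx, rfl⟩ := Finset.mem_image.mp hz
    obtain ⟨h1, h2⟩ := hk R hR x hx
    constructor
    · refine le_trans ?_ h1
      rw [div_le_div_iff₀ (by linarith) (by norm_num)]
      have e1 : (1 : ℝ) ≤ (k : ℝ) ^ n := one_le_pow₀ hk1'
      have e2 : (0 : ℝ) < (R : ℝ) ^ n := by positivity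
      rw [hD]; push_cast
      rw [mul_pow]
      nlinarith [mul_pos e2 (by positivity : (0:ℝ) < (k : ℝ) ^ n), mul_le_mul_of_nonneg_left e1 e2.le,
        mul_le_mul_of_nonneg_left e1 (mul_pos e2 (by positivity : (0:ℝ) < (k : ℝ) ^ n)).le]
    · have h3 : 2 * ((k * R : ℕ) : ℝ) ^ n = ((D * R ^ n : ℕ) : ℝ) := by
        rw [hD]; push_cast; ring
      rw [h3] at h2
      exact_mod_cast h2
  · intro I hI
    set q := Ideal.absNorm I with hq
    have hq1 : 1 ≤ q := Nat.one_le_iff_ne_zero.mpr (by rwa [hq, Ne, Ideal.absNorm_eq_zero_iff])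
    have hq0 : (0 : ℝ) < q := by exact_mod_cast hq1
    set s : ℝ := (q : ℝ) ^ ((1 : ℝ) / n) with hs
    have hs0 : 0 < s := by positivity
    have hsn : s ^ n = q := by
      rw [hs, ← Real.rpow_natCast, ← Real.rpow_mul hq0.le, one_div_mul_cancel hn0.ne', Real.rpow_one]
    set h := ⌊s⌋₊ with hh
    have hhs : (h : ℝ) ≤ s := Nat.floor_le hs0.le
    have hlt : q < (h + 1) ^ n := by
      have : (q : ℝ) < ((h + 1 : ℕ) : ℝ) ^ n := by
        rw [← hsn]
        refine pow_lt_pow_left₀ ?_ hs0.le (by omega)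
        push_cast; exact Nat.lt_floor_add_one s
      exact_mod_cast this
    obtain ⟨h1, h2⟩ := hC I hI h hlt ((k * R : ℕ) : O) R
    have hcard : (((cube ι R).image fun x => ((k * R : ℕ) : O) + b.equivFun.symm x).filter
        fun z => z ∈ I).card =
        ((cube ι R).filter fun x => ((k * R : ℕ) : O) + b.equivFun.symm x ∈ I).card := by
      rw [Finset.filter_image, Finset.card_image_of_injective _ (hinj R)]
    rw [hV, hcard]
    set m := ((cube ι R).filter fun x => ((k * R : ℕ) : O) + b.equivFun.symm x ∈ I).card with hm
    have hW : (0 : ℝ) < 2 * R + 1 := by positivity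
    constructor
    · by_cases hr : C * h ≤ R
      · have h3 : ((2 * (R - C * h : ℝ) + 1)) ^ n ≤ q * m := by
          have := h2 hr
          have e : (((2 * (R - C * h) + 1) ^ n : ℕ) : ℝ) ≤ ((q * m : ℕ) : ℝ) := by exact_mod_cast this
          push_cast [Nat.cast_sub hr] at e
          exact e
        refine le_trans ?_ h3
        have hr' : (C : ℝ) * h ≤ R := by exact_mod_cast hr
        have e1 : 2 * (R - C * h : ℝ) + 1 = (2 * R + 1) * (1 + -(2 * (C * h) / (2 * R + 1))) := by
          field_simp; ring
        rw [e1, mul_pow]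
        have hx1 : 2 * (C * h : ℝ) / (2 * R + 1) ≤ 1 := by
          rw [div_le_one hW]; linarith
        have hB := one_add_mul_le_pow (a := -(2 * (C * h : ℝ) / (2 * R + 1))) (by linarith) n
        refine mul_le_mul_of_nonneg_left (le_trans ?_ hB) (by positivity)
        have e2 : 2 * (C * h : ℝ) / (2 * R + 1) ≤ C * s / R := by
          rw [div_le_div_iff₀ hW hR0]
          have : (C : ℝ) * h ≤ C * s := by gcongr
          have h0 : (0 : ℝ) ≤ C * h := by positivity
          nlinarith
        have e3 : (n : ℝ) * (C * s / R) ≤ n * (1 + X) ^ n * C * s / R := by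
          rw [← mul_div_assoc]
          refine div_le_div_of_nonneg_right ?_ hR0.le
          have : (0 : ℝ) ≤ n * (C * s) := by positivity
          nlinarith
        have e4 := mul_le_mul_of_nonneg_left e2 hn0.le
        linarith
      · push Not at hr
        have hr' : (R : ℝ) < C * h := by exact_mod_cast hr
        refine le_trans ?_ (by positivity : (0 : ℝ) ≤ q * m)
        refine mul_nonpos_of_nonneg_of_nonpos (by positivity) ?_
        rw [sub_nonpos, one_le_div hR0]
        have e1 : (R : ℝ) ≤ C * s := hr'.le.trans (by gcongr)
        have e2 : (1 : ℝ) ≤ n * (1 + X) ^ n := by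
          have : (1 : ℝ) ≤ n := by exact_mod_cast hn1
          nlinarith
        have : (0 : ℝ) ≤ C * s := by positivity
        nlinarith
    · intro hqD
      have h3 : (q : ℝ) * m ≤ (2 * (R + C * h : ℝ) + 1) ^ n := by exact_mod_cast h1
      refine h3.trans ?_
      have e1 : 2 * (R + C * h : ℝ) + 1 = (2 * R + 1) * (1 + 2 * (C * h) / (2 * R + 1)) := by
        field_simp; ring
      rw [e1, mul_pow]
      refine mul_le_mul_of_nonneg_left ?_ (by positivity)
      have e2 : 2 * (C * h : ℝ) / (2 * R + 1) ≤ C * s / R := by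
        rw [div_le_div_iff₀ hW hR0]
        have : (C : ℝ) * h ≤ C * s := by gcongr
        have h0 : (0 : ℝ) ≤ C * h := by positivity
        nlinarith
      have hsD : s ≤ D * R := by
        refine le_of_pow_le_pow_left₀ (n := n) (by omega) (by positivity) ?_
        rw [hsn, mul_pow]
        have e5 : (q : ℝ) ≤ D * (R : ℝ) ^ n := by exact_mod_cast hqD
        refine e5.trans ?_
        gcongr
        exact le_self_pow₀ hD1' (by omega)
      have e3 : C * s / R ≤ X := by
        rw [div_le_iff₀ hR0, hX]
        calc (C : ℝ) * s ≤ C * (D * R) := by gcongr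
          _ = _ := by ring
      have e4 := one_add_pow_le (by positivity : (0 : ℝ) ≤ 2 * (C * h : ℝ) / (2 * R + 1)) (e2.trans e3) n
      refine e4.trans ?_
      have e6 : (n : ℝ) * (1 + X) ^ n * (2 * (C * h : ℝ) / (2 * R + 1)) ≤
          n * (1 + X) ^ n * (C * s / R) := by gcongr
      have e7 : (n : ℝ) * (1 + X) ^ n * C * s / R = n * (1 + X) ^ n * (C * s / R) := by ring
      rw [e7]; linarith

end Boxes

/-! ### Prime ideals and rational primes -/

section Primes
set_option linter.unusedSectionVars false
variable {O : Type*} [CommRing O] [IsDedekindDomain O] [Module.Free ℤ O] [Module.Finite ℤ O]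
  [CharZero O]

/-- The norm of a nonzero prime ideal is a power of the rational prime below it, which is recovered
as the least prime factor of the norm. -/
theorem prime_norm {𝔭 : Ideal O} (h𝔭 : Prime 𝔭) :
    (Ideal.absNorm 𝔭).minFac.Prime ∧ (((Ideal.absNorm 𝔭).minFac : ℕ) : O) ∈ 𝔭 ∧
      ∃ f : ℕ, 1 ≤ f ∧ f ≤ Module.finrank ℤ O ∧
        Ideal.absNorm 𝔭 = (Ideal.absNorm 𝔭).minFac ^ f := by
  have hprime : 𝔭.IsPrime := Ideal.isPrime_of_prime h𝔭
  have hmax : 𝔭.IsMaximal := hprime.isMaximal h𝔭.ne_zero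
  have h1 : Ideal.absNorm 𝔭 ≠ 1 := by
    rw [Ne, Ideal.absNorm_eq_one_iff]; exact hprime.ne_top
  obtain ⟨p, f, hp, hf, e⟩ : ∃ p f : ℕ, p.Prime ∧ f ≠ 0 ∧ Ideal.absNorm 𝔭 = p ^ f := by
    obtain ⟨p, f, hf, -, hp, he⟩ := Ideal.exists_prime_and_absNorm_eq_pow 𝔭
    exact ⟨p, f, hp, hf.ne', he⟩
  have hmin : (Ideal.absNorm 𝔭).minFac = p := by
    rw [e, Nat.pow_minFac hf, hp.minFac_eq]
  have hmem : (p : O) ∈ 𝔭 := by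
    have := Ideal.absNorm_mem 𝔭
    rw [e, Nat.cast_pow] at this
    exact hprime.mem_of_pow_mem _ this
  rw [hmin]
  refine ⟨hp, hmem, f, by omega, ?_, e⟩
  have hd : Ideal.absNorm 𝔭 ∣ p ^ Module.finrank ℤ O := by
    rw [← Ideal.absNorm_span_natCast (S := O)]
    exact Ideal.absNorm_dvd_absNorm_of_le ((Ideal.span_singleton_le_iff_mem _).mpr hmem)
  rw [e] at hd
  exact (Nat.pow_dvd_pow_iff_le_right hp.one_lt).mp hd

theorem two_le_absNorm {𝔭 : Ideal O} (h𝔭 : Prime 𝔭) : 2 ≤ Ideal.absNorm 𝔭 := by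
  obtain ⟨hp, -, f, hf, -, e⟩ := prime_norm h𝔭
  rw [e]
  exact hp.two_le.trans (Nat.le_self_pow (by omega) _)

theorem prod_absNorm_dvd {T : Finset (Ideal O)} (hT : ∀ 𝔭 ∈ T, Prime 𝔭) {z : O}
    (hz : ∀ 𝔭 ∈ T, z ∈ 𝔭) : ∏ 𝔭 ∈ T, Ideal.absNorm 𝔭 ∣ Ideal.absNorm (Ideal.span {z}) := by
  rw [← map_prod]
  refine map_dvd _ (Finset.prod_primes_dvd _ hT fun 𝔭 h => ?_)
  rw [Ideal.dvd_span_singleton]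
  exact hz 𝔭 h

/-- At most `n` prime ideals lie above a rational prime. -/
theorem card_primes_above_le {T : Finset (Ideal O)} (hT : ∀ 𝔭 ∈ T, Prime 𝔭) {p : ℕ} (hp : p.Prime)
    (h : ∀ 𝔭 ∈ T, (Ideal.absNorm 𝔭).minFac = p) : T.card ≤ Module.finrank ℤ O := by
  have h1 := prod_absNorm_dvd hT (z := (p : O)) fun 𝔭 h𝔭 => by
    rw [← h 𝔭 h𝔭]; exact (prime_norm (hT 𝔭 h𝔭)).2.1
  rw [Ideal.absNorm_span_natCast] at h1
  have h2 : p ^ T.card ≤ ∏ 𝔭 ∈ T, Ideal.absNorm 𝔭 := by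
    rw [← Finset.prod_const]
    refine Finset.prod_le_prod' fun 𝔭 h𝔭 => ?_
    rw [← h 𝔭 h𝔭]
    exact Nat.minFac_le (by have := two_le_absNorm (hT 𝔭 h𝔭); omega)
  have h3 := h2.trans (Nat.le_of_dvd (pow_pos hp.pos _) h1)
  exact (Nat.pow_le_pow_iff_right hp.one_lt).mp h3

/-- Sums over prime ideals of a function of the rational prime below are at most `n` times the sum
over rational primes. -/
theorem sum_primes_le {T : Finset (Ideal O)} (hT : ∀ 𝔭 ∈ T, Prime 𝔭) {Y : ℕ}
    (hY : ∀ 𝔭 ∈ T, Ideal.absNorm 𝔭 ≤ Y) {g : ℕ → ℝ} (hg : ∀ p : ℕ, 0 ≤ g p) :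
    ∑ 𝔭 ∈ T, g (Ideal.absNorm 𝔭).minFac ≤
      Module.finrank ℤ O * ∑ p ∈ (Finset.Icc 1 Y).filter Nat.Prime, g p := by
  classical
  have hmap : ∀ 𝔭 ∈ T, (Ideal.absNorm 𝔭).minFac ∈ (Finset.Icc 1 Y).filter Nat.Prime := by
    intro 𝔭 h𝔭
    have hp := (prime_norm (hT 𝔭 h𝔭)).1
    refine Finset.mem_filter.mpr ⟨Finset.mem_Icc.mpr ⟨hp.pos, ?_⟩, hp⟩
    exact (Nat.minFac_le (by have := two_le_absNorm (hT 𝔭 h𝔭); omega)).trans (hY 𝔭 h𝔭)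
  rw [← Finset.sum_fiberwise_of_maps_to hmap, Finset.mul_sum]
  refine Finset.sum_le_sum fun p hp => ?_
  have hc := card_primes_above_le (T := T.filter fun 𝔭 => (Ideal.absNorm 𝔭).minFac = p)
    (fun 𝔭 h => hT 𝔭 (Finset.mem_filter.mp h).1) (Finset.mem_filter.mp hp).2
    (fun 𝔭 h => (Finset.mem_filter.mp h).2)
  rw [Finset.sum_congr rfl (g := fun _ => g p) fun 𝔭 h => by rw [(Finset.mem_filter.mp h).2],
    Finset.sum_const, nsmul_eq_mul]
  exact mul_le_mul_of_nonneg_right (by exact_mod_cast hc) (hg p)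

open Classical in
/-- The nonzero prime ideals of norm at most `Y`. -/
noncomputable def primesUpTo (O : Type*) [CommRing O] [IsDedekindDomain O] [Module.Free ℤ O]
    [Module.Finite ℤ O] [CharZero O] (Y : ℕ) : Finset (Ideal O) :=
  (Ideal.finite_setOfPred_absNorm_le (S := O) Y).toFinset.filter Prime

theorem mem_primesUpTo {Y : ℕ} {𝔭 : Ideal O} :
    𝔭 ∈ primesUpTo O Y ↔ Ideal.absNorm 𝔭 ≤ Y ∧ Prime 𝔭 := by
  simp [primesUpTo]

/-- The prime ideals of degree one, that is, of prime norm, of norm at most `Y`. -/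
noncomputable def degOne (O : Type*) [CommRing O] [IsDedekindDomain O] [Module.Free ℤ O]
    [Module.Finite ℤ O] [CharZero O] (Y : ℕ) : Finset (Ideal O) :=
  (primesUpTo O Y).filter fun 𝔭 => (Ideal.absNorm 𝔭).Prime

theorem mem_degOne {Y : ℕ} {𝔭 : Ideal O} :
    𝔭 ∈ degOne O Y ↔ (Ideal.absNorm 𝔭 ≤ Y ∧ Prime 𝔭) ∧ (Ideal.absNorm 𝔭).Prime := by
  rw [degOne, Finset.mem_filter, mem_primesUpTo]

open Classical in
/-- The factorization of `log |N z|` over the prime powers containing `z`. -/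
theorem log_norm_le {Y : ℕ} {z : O} (hz : z ≠ 0) (hY : Ideal.absNorm (Ideal.span {z}) ≤ Y) :
    Real.log (Ideal.absNorm (Ideal.span {z})) ≤ ∑ 𝔭 ∈ primesUpTo O Y, ∑ k ∈ Finset.Icc 1 Y,
      if z ∈ 𝔭 ^ k then Real.log (Ideal.absNorm 𝔭) else 0 := by
  have hI : Ideal.span {z} ≠ ⊥ := by simpa [Ideal.span_singleton_eq_bot] using hz
  set F := UniqueFactorizationMonoid.normalizedFactors (Ideal.span {z}) with hF
  have hprod : F.prod = Ideal.span {z} := Ideal.prod_normalizedFactors_eq_self hI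
  have hprime : ∀ 𝔭 ∈ F, Prime 𝔭 := fun 𝔭 h => UniqueFactorizationMonoid.prime_of_normalized_factor 𝔭 h
  have hpos : 0 < Ideal.absNorm (Ideal.span {z}) :=
    Nat.pos_of_ne_zero (by rwa [Ne, Ideal.absNorm_eq_zero_iff])
  have hdvd : ∀ 𝔭 : Ideal O, ∀ k ≤ F.count 𝔭, 𝔭 ^ k ∣ Ideal.span {z} := by
    intro 𝔭 k hk
    rw [← hprod, ← Multiset.prod_replicate]
    exact Multiset.prod_dvd_prod_of_le (Multiset.le_count_iff_replicate_le.mp hk)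
  have hle : ∀ 𝔭 : Ideal O, ∀ k ≤ F.count 𝔭, Ideal.absNorm 𝔭 ^ k ≤ Y := by
    intro 𝔭 k hk
    rw [← map_pow]
    exact (Nat.le_of_dvd hpos (map_dvd _ (hdvd 𝔭 k hk))).trans hY
  have e1 : Ideal.absNorm (Ideal.span {z}) = ∏ 𝔭 ∈ F.toFinset, Ideal.absNorm 𝔭 ^ F.count 𝔭 := by
    conv_lhs => rw [← hprod, Finset.prod_multiset_count, map_prod]
    simp
  have e2 : Real.log (Ideal.absNorm (Ideal.span {z})) =
      ∑ 𝔭 ∈ F.toFinset, F.count 𝔭 * Real.log (Ideal.absNorm 𝔭) := by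
    rw [e1, Nat.cast_prod, Real.log_prod]
    · simp
    · intro 𝔭 h
      have := two_le_absNorm (hprime 𝔭 (Multiset.mem_toFinset.mp h))
      positivity
  rw [e2]
  have hsub : F.toFinset ⊆ primesUpTo O Y := by
    intro 𝔭 h
    have h' := Multiset.mem_toFinset.mp h
    refine mem_primesUpTo.mpr ⟨?_, hprime 𝔭 h'⟩
    have := hle 𝔭 1 (Multiset.one_le_count_iff_mem.mpr h')
    simpa using this
  have hlog : ∀ 𝔭 : Ideal O, 0 ≤ Real.log (Ideal.absNorm 𝔭) := fun 𝔭 => Real.log_natCast_nonneg _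
  refine le_trans (Finset.sum_le_sum fun 𝔭 h => ?_)
    (Finset.sum_le_sum_of_subset_of_nonneg hsub fun 𝔭 _ _ =>
      Finset.sum_nonneg fun k _ => by split_ifs <;> simp [hlog])
  have h2 := two_le_absNorm (hprime 𝔭 (Multiset.mem_toFinset.mp h))
  have hcY : F.count 𝔭 ≤ Y :=
    (Nat.lt_pow_self (by omega : 1 < Ideal.absNorm 𝔭)).le.trans (hle 𝔭 _ le_rfl)
  rw [← Finset.sum_filter, Finset.sum_const, nsmul_eq_mul]
  refine mul_le_mul_of_nonneg_right ?_ (hlog 𝔭)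
  have : (Finset.Icc 1 (F.count 𝔭)).card ≤ ((Finset.Icc 1 Y).filter fun k => z ∈ 𝔭 ^ k).card := by
    refine Finset.card_le_card fun k hk => ?_
    rw [Finset.mem_Icc] at hk
    refine Finset.mem_filter.mpr ⟨Finset.mem_Icc.mpr ⟨hk.1, hk.2.trans hcY⟩, ?_⟩
    exact Ideal.dvd_span_singleton.mp (hdvd 𝔭 k hk.2)
  rw [Nat.card_Icc, Nat.add_sub_cancel] at this
  exact_mod_cast this

end Primes

/-! ### A Mertens estimate for degree-one primes -/

section Mertens
set_option linter.unusedSectionVars false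
variable (O : Type*) [CommRing O] [IsDedekindDomain O] [Module.Free ℤ O] [Module.Finite ℤ O]
  [CharZero O]

theorem finrank_pos' : 1 ≤ Module.finrank ℤ O := Module.finrank_pos

theorem sum_degOne_rpow_le (Y : ℕ) :
    ∑ 𝔭 ∈ degOne O Y, Real.log (Ideal.absNorm 𝔭) *
      (Ideal.absNorm 𝔭 : ℝ) ^ ((1 : ℝ) / Module.finrank ℤ O - 1) ≤
    Module.finrank ℤ O * (Real.log 4 * Module.finrank ℤ O *
      (Y : ℝ) ^ ((1 : ℝ) / Module.finrank ℤ O)) := by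
  have h := sum_primes_le (O := O) (T := degOne O Y) (Y := Y) (fun 𝔭 h => (mem_degOne.mp h).1.2)
    (fun 𝔭 h => (mem_degOne.mp h).1.1)
    (g := fun p => Real.log p * (p : ℝ) ^ ((1 : ℝ) / Module.finrank ℤ O - 1))
    (fun p => mul_nonneg (Real.log_natCast_nonneg p) (by positivity))
  refine le_trans (le_of_eq ?_) (h.trans ?_)
  · refine Finset.sum_congr rfl fun 𝔭 h => ?_
    rw [(mem_degOne.mp h).2.minFac_eq]
  · exact mul_le_mul_of_nonneg_left (sum_log_mul_rpow_le (finrank_pos' O) Y) (by positivity)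

theorem nat_rpow_le {n D R Y : ℕ} (hn : 1 ≤ n) (hD : 1 ≤ D) (h : Y ≤ D * R ^ n) :
    (Y : ℝ) ^ ((1 : ℝ) / n) ≤ D * R := by
  have hn0 : (0 : ℝ) < n := by exact_mod_cast hn
  have hD1 : (1 : ℝ) ≤ D := by exact_mod_cast hD
  refine le_of_pow_le_pow_left₀ (n := n) (by omega) (by positivity) ?_
  rw [← Real.rpow_natCast ((Y : ℝ) ^ ((1 : ℝ) / n)), ← Real.rpow_mul (by positivity),
    one_div_mul_cancel hn0.ne', Real.rpow_one, mul_pow]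
  have e5 : (Y : ℝ) ≤ D * (R : ℝ) ^ n := by exact_mod_cast h
  refine e5.trans ?_
  gcongr
  exact le_self_pow₀ hD1 (by omega)

theorem sum_geom_le {N : ℝ} (hN : 2 ≤ N) (j Y : ℕ) :
    ∑ k ∈ Finset.Icc j Y, (N ^ k)⁻¹ ≤ 2 * (N ^ j)⁻¹ := by
  have hN0 : (0 : ℝ) < N := by linarith
  have key : ∀ m, ∑ i ∈ Finset.range m, (N ^ (j + i))⁻¹ ≤ 2 * (N ^ j)⁻¹ - 2 * (N ^ (j + m))⁻¹ := by
    intro m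
    induction m with
    | zero => simp
    | succ m ih =>
      rw [Finset.sum_range_succ]
      have h1 : (N ^ (j + (m + 1)))⁻¹ * N = (N ^ (j + m))⁻¹ := by
        rw [← add_assoc, pow_succ]; field_simp
      have h2 : 0 < (N ^ (j + (m + 1)))⁻¹ := by positivity
      nlinarith
  have h := key (Y + 1 - j)
  rw [Finset.range_eq_Ico, Finset.sum_Ico_add (fun k => (N ^ k)⁻¹)] at h
  refine le_trans (Finset.sum_le_sum_of_subset_of_nonneg ?_ fun _ _ _ => by positivity)
    (h.trans (sub_le_self _ (by positivity)))
  intro k hk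
  rw [Finset.mem_Icc] at hk
  rw [Finset.mem_Ico]
  omega

set_option maxHeartbeats 2000000 in
/-- Mertens' estimate for degree-one primes: upper and lower bounds. The box `B R` plays the role of
a factorial: the product of its norms is computed from its prime factorization. -/
theorem mertens : ∃ (C : ℝ) (D : ℕ), 1 ≤ D ∧ ∀ R : ℕ, 1 ≤ R →
    (∑ 𝔭 ∈ degOne O (R ^ Module.finrank ℤ O),
      Real.log (Ideal.absNorm 𝔭) / (Ideal.absNorm 𝔭 : ℝ) ≤ Module.finrank ℤ O * Real.log R + C) ∧
    (Module.finrank ℤ O * Real.log R - C ≤ ∑ 𝔭 ∈ degOne O (D * R ^ Module.finrank ℤ O),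
      Real.log (Ideal.absNorm 𝔭) / (Ideal.absNorm 𝔭 : ℝ)) := by
  classical
  have hbox := exists_boxes (Module.Free.chooseBasis ℤ O)
  rw [← Module.finrank_eq_card_chooseBasisIndex] at hbox
  obtain ⟨D, hD1, D', hD'0, B, hB⟩ := hbox
  obtain ⟨C₂, hC₂, hsq⟩ := sum_log_div_sq_le
  set n := Module.finrank ℤ O with hn
  have hn1 : 1 ≤ n := finrank_pos' O
  have hn0 : (0 : ℝ) < n := by exact_mod_cast hn1
  have hD0 : (1 : ℝ) ≤ D := by exact_mod_cast hD1
  set M : ℝ := 1 + D' * D with hM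
  have hM0 : 0 < M := by positivity
  have hlog4 : 0 < Real.log 4 := Real.log_pos (by norm_num)
  have hlogD : 0 ≤ Real.log D := Real.log_nonneg hD0
  -- the three error terms: norms, boundary effects, and prime ideals of higher degree or powers
  set C : ℝ := Real.log D + D' * (n * (Real.log 4 * n * D)) + n * (2 * n * M * C₂) with hC
  have hCs : 0 ≤ n * (2 * n * M * C₂) := by positivity
  refine ⟨C, D, hD1, fun R hR => ?_⟩
  have hR0 : (0 : ℝ) < R := by exact_mod_cast hR
  obtain ⟨hne, hnorm, hcount⟩ := hB R hR
  have hV : (0 : ℝ) < (B R).card := by exact_mod_cast hne.card_pos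
  set V : ℝ := ((B R).card : ℝ) with hVdef
  have hRn : (0 : ℝ) < (R : ℝ) ^ n := by positivity
  have hDR : (1 : ℝ) ≤ R := by exact_mod_cast hR
  -- boundary effects
  have hbd : ∀ Y : ℕ, Y ≤ D * R ^ n → D' / R * ∑ 𝔭 ∈ degOne O Y, Real.log (Ideal.absNorm 𝔭) *
      (Ideal.absNorm 𝔭 : ℝ) ^ ((1 : ℝ) / n - 1) ≤ D' * (n * (Real.log 4 * n * D)) := by
    intro Y hY
    have h1 := sum_degOne_rpow_le O Y
    rw [← hn] at h1
    have h2 := nat_rpow_le hn1 hD1 hY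
    calc D' / R * _ ≤ D' / R * (n * (Real.log 4 * n * (D * R))) := by
          refine mul_le_mul_of_nonneg_left (h1.trans ?_) (by positivity)
          gcongr
      _ = _ := by field_simp
  have hlogN : ∀ 𝔭 : Ideal O, 0 ≤ Real.log (Ideal.absNorm 𝔭) := fun 𝔭 => Real.log_natCast_nonneg _
  have hrp : ∀ 𝔭 : Ideal O, Prime 𝔭 → (Ideal.absNorm 𝔭 : ℝ) ^ ((1 : ℝ) / n - 1) =
      (Ideal.absNorm 𝔭 : ℝ) ^ ((1 : ℝ) / n) / Ideal.absNorm 𝔭 := by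
    intro 𝔭 h𝔭
    have := two_le_absNorm h𝔭
    exact Real.rpow_sub_one (by positivity) _
  constructor
  · -- upper bound
    set S := degOne O (R ^ n) with hS
    have hz : ∀ z ∈ B R, (∑ 𝔭 ∈ S, if z ∈ 𝔭 then Real.log (Ideal.absNorm 𝔭) else 0) ≤
        Real.log D + n * Real.log R := by
      intro z hz
      obtain ⟨h1, h2⟩ := hnorm z hz
      have hpos : 0 < Ideal.absNorm (Ideal.span {z}) := by
        have : (0 : ℝ) < Ideal.absNorm (Ideal.span {z}) := lt_of_lt_of_le (by positivity) h1
        exact_mod_cast this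
      rw [← Finset.sum_filter]
      have h3 := Nat.le_of_dvd hpos (prod_absNorm_dvd (T := S.filter fun 𝔭 => z ∈ 𝔭) (z := z)
        (fun 𝔭 h => (mem_degOne.mp (Finset.mem_filter.mp h).1).1.2)
        (fun 𝔭 h => (Finset.mem_filter.mp h).2))
      have h4 : ∀ 𝔭 ∈ S.filter (fun 𝔭 => z ∈ 𝔭), (Ideal.absNorm 𝔭 : ℝ) ≠ 0 := by
        intro 𝔭 h
        have := (mem_degOne.mp (Finset.mem_filter.mp h).1).2.pos
        positivity
      rw [← Real.log_prod h4]
      have e : Real.log D + n * Real.log R = Real.log (D * (R : ℝ) ^ n) := by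
        rw [Real.log_mul (by positivity) (by positivity), Real.log_pow]
      rw [e]
      refine Real.log_le_log (Finset.prod_pos fun 𝔭 h => lt_of_le_of_ne (by positivity) (h4 𝔭 h).symm) ?_
      exact_mod_cast h3.trans h2
    have hsum := Finset.sum_le_sum hz
    rw [Finset.sum_comm, Finset.sum_const, nsmul_eq_mul] at hsum
    have hin : ∀ 𝔭 ∈ S, V * (Real.log (Ideal.absNorm 𝔭) / (Ideal.absNorm 𝔭 : ℝ) -
        D' / R * (Real.log (Ideal.absNorm 𝔭) * (Ideal.absNorm 𝔭 : ℝ) ^ ((1 : ℝ) / n - 1))) ≤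
        ∑ z ∈ B R, if z ∈ 𝔭 then Real.log (Ideal.absNorm 𝔭) else 0 := by
      intro 𝔭 h
      obtain ⟨⟨-, hpr⟩, hq⟩ := mem_degOne.mp h
      have hq0 : (0 : ℝ) < Ideal.absNorm 𝔭 := by exact_mod_cast hq.pos
      rw [← Finset.sum_filter, Finset.sum_const, nsmul_eq_mul, hrp 𝔭 hpr]
      have h1 := (hcount 𝔭 hpr.ne_zero).1
      have h2 := mul_le_mul_of_nonneg_left h1 (div_nonneg (hlogN 𝔭) hq0.le)
      refine le_trans (le_of_eq ?_) (h2.trans (le_of_eq ?_))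
      · field_simp
      · field_simp
    have h5 := (Finset.sum_le_sum hin).trans hsum
    rw [← Finset.mul_sum, ← hVdef] at h5
    have h6 := le_of_mul_le_mul_left h5 hV
    rw [Finset.sum_sub_distrib, ← Finset.mul_sum] at h6
    have h7 := hbd (R ^ n) (Nat.le_mul_of_pos_left _ hD1)
    rw [← hS] at h7
    linarith
  · -- lower bound
    set Y := D * R ^ n with hY
    have hz : ∀ z ∈ B R, n * Real.log R - Real.log D ≤
        ∑ 𝔭 ∈ primesUpTo O Y, ∑ k ∈ Finset.Icc 1 Y,
          if z ∈ 𝔭 ^ k then Real.log (Ideal.absNorm 𝔭) else 0 := by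
      intro z hz
      obtain ⟨h1, h2⟩ := hnorm z hz
      have hpos : (0 : ℝ) < Ideal.absNorm (Ideal.span {z}) := lt_of_lt_of_le (by positivity) h1
      have hz0 : z ≠ 0 := by
        rintro rfl
        simp at hpos
      refine le_trans ?_ (log_norm_le hz0 h2)
      have e : n * Real.log R - Real.log D = Real.log ((R : ℝ) ^ n / D) := by
        rw [Real.log_div (by positivity) (by positivity), Real.log_pow]
      rw [e]
      exact Real.log_le_log (by positivity) h1
    have hsum := Finset.sum_le_sum hz
    rw [Finset.sum_comm, Finset.sum_const, nsmul_eq_mul, ← hVdef] at hsum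
    -- crude count for all prime powers
    have hcrude : ∀ 𝔭 : Ideal O, Prime 𝔭 → ∀ k : ℕ,
        (((B R).filter fun z => z ∈ 𝔭 ^ k).card : ℝ) ≤ V * M * ((Ideal.absNorm 𝔭 : ℝ) ^ k)⁻¹ := by
      intro 𝔭 hpr k
      have h2 := two_le_absNorm hpr
      have hq0 : (0 : ℝ) < (Ideal.absNorm 𝔭 : ℝ) ^ k := by positivity
      rcases ((B R).filter fun z => z ∈ 𝔭 ^ k).eq_empty_or_nonempty with he | ⟨z, hzk⟩
      · rw [he]; simp; positivity
      · obtain ⟨hzB, hzk⟩ := Finset.mem_filter.mp hzk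
        obtain ⟨h1, h3⟩ := hnorm z hzB
        have hpos : 0 < Ideal.absNorm (Ideal.span {z}) := by
          have : (0 : ℝ) < Ideal.absNorm (Ideal.span {z}) := lt_of_lt_of_le (by positivity) h1
          exact_mod_cast this
        have hle : Ideal.absNorm (𝔭 ^ k) ≤ D * R ^ n :=
          (Nat.le_of_dvd hpos (map_dvd _ (Ideal.dvd_span_singleton.mpr hzk))).trans h3
        have h4 := (hcount (𝔭 ^ k) (pow_ne_zero k hpr.ne_zero)).2 hle
        have h5 := nat_rpow_le hn1 hD1 hle
        rw [← div_eq_mul_inv, le_div_iff₀ hq0, mul_comm]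
        have e : (Ideal.absNorm (𝔭 ^ k) : ℝ) = (Ideal.absNorm 𝔭 : ℝ) ^ k := by
          rw [map_pow, Nat.cast_pow]
        rw [← e]
        refine h4.trans (mul_le_mul_of_nonneg_left ?_ hV.le)
        rw [hM]
        have : D' * (Ideal.absNorm (𝔭 ^ k) : ℝ) ^ ((1 : ℝ) / n) / R ≤ D' * D := by
          rw [div_le_iff₀ hR0, mul_assoc]
          gcongr
        linarith
    have hin : ∀ 𝔭 ∈ primesUpTo O Y, (∑ z ∈ B R, ∑ k ∈ Finset.Icc 1 Y,
        if z ∈ 𝔭 ^ k then Real.log (Ideal.absNorm 𝔭) else 0) ≤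
        V * ((if (Ideal.absNorm 𝔭).Prime then Real.log (Ideal.absNorm 𝔭) / (Ideal.absNorm 𝔭 : ℝ) +
        D' / R * (Real.log (Ideal.absNorm 𝔭) * (Ideal.absNorm 𝔭 : ℝ) ^ ((1 : ℝ) / n - 1)) else 0) +
        2 * n * M * (Real.log (Ideal.absNorm 𝔭).minFac / ((Ideal.absNorm 𝔭).minFac : ℝ) ^ 2)) := by
      intro 𝔭 h
      obtain ⟨hqY, hpr⟩ := mem_primesUpTo.mp h
      obtain ⟨hp, -, f, hf1, hfn, hfe⟩ := prime_norm hpr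
      have h2 := two_le_absNorm hpr
      have h2' : (2 : ℝ) ≤ Ideal.absNorm 𝔭 := by exact_mod_cast h2
      have hq0 : (0 : ℝ) < Ideal.absNorm 𝔭 := by positivity
      have e1 : (∑ z ∈ B R, ∑ k ∈ Finset.Icc 1 Y,
          if z ∈ 𝔭 ^ k then Real.log (Ideal.absNorm 𝔭) else 0) =
          ∑ k ∈ Finset.Icc 1 Y, (((B R).filter fun z => z ∈ 𝔭 ^ k).card : ℝ) *
            Real.log (Ideal.absNorm 𝔭) := by
        rw [Finset.sum_comm]
        refine Finset.sum_congr rfl fun k _ => ?_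
        rw [← Finset.sum_filter, Finset.sum_const, nsmul_eq_mul]
      have htail : ∀ j, ∑ k ∈ Finset.Icc j Y, (((B R).filter fun z => z ∈ 𝔭 ^ k).card : ℝ) *
          Real.log (Ideal.absNorm 𝔭) ≤
          V * (2 * M * (Real.log (Ideal.absNorm 𝔭) * ((Ideal.absNorm 𝔭 : ℝ) ^ j)⁻¹)) := by
        intro j
        calc _ ≤ ∑ k ∈ Finset.Icc j Y, V * M * ((Ideal.absNorm 𝔭 : ℝ) ^ k)⁻¹ *
              Real.log (Ideal.absNorm 𝔭) :=
              Finset.sum_le_sum fun k _ => mul_le_mul_of_nonneg_right (hcrude 𝔭 hpr k) (hlogN 𝔭)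
          _ = V * M * (∑ k ∈ Finset.Icc j Y, ((Ideal.absNorm 𝔭 : ℝ) ^ k)⁻¹) *
              Real.log (Ideal.absNorm 𝔭) := by rw [Finset.mul_sum, Finset.sum_mul]
          _ ≤ V * M * (2 * ((Ideal.absNorm 𝔭 : ℝ) ^ j)⁻¹) * Real.log (Ideal.absNorm 𝔭) := by
              exact mul_le_mul_of_nonneg_right (mul_le_mul_of_nonneg_left (sum_geom_le h2' j Y)
                (mul_pos hV hM0).le) (hlogN 𝔭)
          _ = _ := by ring
      rw [e1]
      have hlp : 0 ≤ Real.log (Ideal.absNorm 𝔭).minFac := Real.log_natCast_nonneg _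
      have hp0 : (0 : ℝ) < (Ideal.absNorm 𝔭).minFac := by exact_mod_cast hp.pos
      split_ifs with hqp
      · rw [hqp.minFac_eq]
        have hIcc : Finset.Icc 1 Y = insert 1 (Finset.Icc 2 Y) := by
          ext k; simp only [Finset.mem_Icc, Finset.mem_insert]; omega
        rw [hIcc, Finset.sum_insert (by simp), mul_add]
        refine add_le_add ?_ ((htail 2).trans ?_)
        · rw [pow_one, hrp 𝔭 hpr]
          have h3 := (hcount 𝔭 hpr.ne_zero).2 hqY
          have h4 := mul_le_mul_of_nonneg_left h3 (div_nonneg (hlogN 𝔭) hq0.le)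
          refine le_trans (le_of_eq ?_) (h4.trans (le_of_eq ?_))
          · rw [← mul_assoc, div_mul_cancel₀ _ hq0.ne', mul_comm]
          · field_simp
        · refine mul_le_mul_of_nonneg_left ?_ hV.le
          rw [← div_eq_mul_inv]
          have h5 : (1 : ℝ) ≤ n := by exact_mod_cast hn1
          have h6 := div_nonneg (hlogN 𝔭) (by positivity : (0 : ℝ) ≤ (Ideal.absNorm 𝔭 : ℝ) ^ 2)
          have h7 : 2 * M ≤ 2 * n * M := by nlinarith
          exact mul_le_mul_of_nonneg_right h7 h6
      · rw [zero_add]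
        refine (htail 1).trans (mul_le_mul_of_nonneg_left ?_ hV.le)
        have hf2 : 2 ≤ f := by
          rcases Nat.lt_or_ge f 2 with hlt | hge
          · exfalso
            have : f = 1 := by omega
            rw [this, pow_one] at hfe
            rw [hfe] at hqp
            exact hqp hp
          · exact hge
        have h3 : Real.log (Ideal.absNorm 𝔭) ≤ n * Real.log (Ideal.absNorm 𝔭).minFac := by
          conv_lhs => rw [hfe]
          rw [Nat.cast_pow, Real.log_pow]
          gcongr
        have h4 : (((Ideal.absNorm 𝔭).minFac : ℝ)) ^ 2 ≤ Ideal.absNorm 𝔭 := by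
          conv_rhs => rw [hfe]
          rw [Nat.cast_pow]
          exact pow_le_pow_right₀ (by exact_mod_cast hp.one_lt.le) hf2
        rw [pow_one]
        calc 2 * M * (Real.log (Ideal.absNorm 𝔭) * (Ideal.absNorm 𝔭 : ℝ)⁻¹)
            ≤ 2 * M * ((n * Real.log (Ideal.absNorm 𝔭).minFac) *
              (((Ideal.absNorm 𝔭).minFac : ℝ) ^ 2)⁻¹) := by
              gcongr
          _ = _ := by rw [div_eq_mul_inv]; ring
    have h5 := hsum.trans (Finset.sum_le_sum hin)
    rw [← Finset.mul_sum] at h5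
    have h6 := le_of_mul_le_mul_left h5 hV
    rw [Finset.sum_add_distrib, ← Finset.sum_filter, ← Finset.mul_sum] at h6
    change _ ≤ ∑ 𝔭 ∈ degOne O Y, _ + _ at h6
    rw [Finset.sum_add_distrib, ← Finset.mul_sum] at h6
    have h7 := hbd Y le_rfl
    have h8 := sum_primes_le (O := O) (T := primesUpTo O Y) (Y := Y)
      (fun 𝔭 h => (mem_primesUpTo.mp h).2) (fun 𝔭 h => (mem_primesUpTo.mp h).1)
      (g := fun p => Real.log p / (p : ℝ) ^ 2)
      (fun p => div_nonneg (Real.log_natCast_nonneg p) (by positivity))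
    rw [← hn] at h8
    have h9 : 2 * n * M * ∑ 𝔭 ∈ primesUpTo O Y, (Real.log (Ideal.absNorm 𝔭).minFac /
        ((Ideal.absNorm 𝔭).minFac : ℝ) ^ 2) ≤ n * (2 * n * M * C₂) := by
      calc _ ≤ 2 * n * M * (n * C₂) := by
            refine mul_le_mul_of_nonneg_left (h8.trans ?_) (by positivity)
            exact mul_le_mul_of_nonneg_left (hsq Y) hn0.le
        _ = _ := by ring
    linarith

end Mertens

/-! ### Counting degree-one primes -/

section Count
variable (O : Type*) [CommRing O] [IsDedekindDomain O] [Module.Free ℤ O] [Module.Finite ℤ O]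
  [CharZero O]

open Classical in
/-- At least `c * x / log x` rational primes up to `x` are the norm of an ideal. By Mertens'
estimate, the sum of `log q / q` over degree-one primes of norm `q` in an interval `(Y, A * Y]` is at
least `1` for a suitable constant `A`. -/
theorem count_degOne (m : ℕ) : ∃ c : ℝ, 0 < c ∧ ∃ x₀ : ℕ, ∀ x : ℕ, x₀ ≤ x →
    c * x / Real.log x ≤ (((Finset.Icc 1 x).filter fun p => p.Prime ∧ m < p ∧
      ∃ 𝔭 : Ideal O, Ideal.absNorm 𝔭 = p).card : ℝ) := by
  obtain ⟨C, D, hD1, hmert⟩ := mertens O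
  set n := Module.finrank ℤ O with hn
  have hn1 : 1 ≤ n := finrank_pos' O
  have hn0 : (0 : ℝ) < n := by exact_mod_cast hn1
  obtain ⟨M, hM⟩ := exists_nat_gt (Real.exp ((2 * C + 1) / n))
  have hM0 : (0 : ℝ) < M := (Real.exp_pos _).trans hM
  have hM1 : 1 ≤ M := by exact_mod_cast hM0
  have hlogM : 2 * C + 1 ≤ n * Real.log M := by
    have := Real.log_le_log (Real.exp_pos _) hM.le
    rw [Real.log_exp, div_le_iff₀ hn0] at this
    linarith
  set A : ℕ := D * M ^ n with hA
  have hA1 : 1 ≤ A := Nat.mul_pos hD1 (pow_pos hM1 n)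
  have hA0 : (0 : ℝ) < A := by exact_mod_cast hA1
  refine ⟨1 / (A * 2 ^ n * n), by positivity, (m + 1) * A * 2 ^ n + 2, fun x hx => ?_⟩
  set Z := (Finset.Icc 1 x).filter fun p => p.Prime ∧ m < p ∧
      ∃ 𝔭 : Ideal O, Ideal.absNorm 𝔭 = p with hZ
  have hx2 : (2 : ℝ) ≤ x := by
    have : 2 ≤ x := by omega
    exact_mod_cast this
  have hxm : ((m : ℝ) + 1) * A * 2 ^ n ≤ x := by
    have : (m + 1) * A * 2 ^ n ≤ x := by omega
    exact_mod_cast this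
  have hlogx : 0 < Real.log x := Real.log_pos (by linarith)
  set u : ℝ := ((x : ℝ) / A) ^ ((1 : ℝ) / n) with hu
  have hu0 : 0 ≤ u := by positivity
  have hun : u ^ n = x / A := by
    rw [hu, ← Real.rpow_natCast, ← Real.rpow_mul (by positivity), one_div_mul_cancel hn0.ne',
      Real.rpow_one]
  have hu1 : 1 ≤ u := by
    refine Real.one_le_rpow ?_ (by positivity)
    rw [one_le_div hA0]
    refine le_trans ?_ hxm
    have h2 : (1 : ℝ) ≤ 2 ^ n := one_le_pow₀ (by norm_num)
    have hm1 : (1 : ℝ) ≤ (m : ℝ) + 1 := by have : (0 : ℝ) ≤ m := by positivity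
                                           linarith
    calc (A : ℝ) = 1 * A * 1 := by ring
      _ ≤ _ := by gcongr
  set R := ⌊u⌋₊ with hR
  have hR1 : 1 ≤ R := Nat.one_le_floor_iff _ |>.mpr hu1
  have hR1' : (1 : ℝ) ≤ R := by exact_mod_cast hR1
  have hRu : (R : ℝ) ≤ u := Nat.floor_le hu0
  have huR : u ≤ 2 * R := by
    have := Nat.lt_floor_add_one u
    rw [← hR] at this
    linarith
  have hARx : A * R ^ n ≤ x := by
    have : (A : ℝ) * (R : ℝ) ^ n ≤ x := by
      calc (A : ℝ) * (R : ℝ) ^ n ≤ A * u ^ n := by gcongr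
        _ = x := by rw [hun]; field_simp
    exact_mod_cast this
  have hxR : (x : ℝ) / A ≤ 2 ^ n * (R : ℝ) ^ n := by
    rw [← hun, ← mul_pow]; gcongr
  have hRm : m < R ^ n := by
    have : ((m : ℝ) + 1) * 2 ^ n ≤ 2 ^ n * (R : ℝ) ^ n := by
      refine le_trans ?_ hxR
      rw [le_div_iff₀ hA0]
      linarith
    have h2 : (0 : ℝ) < 2 ^ n := by positivity
    have h3 : (m : ℝ) + 1 ≤ (R : ℝ) ^ n := by nlinarith
    have h4 : m + 1 ≤ R ^ n := by exact_mod_cast h3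
    omega
  -- Mertens on the interval from `R ^ n` to `A * R ^ n`
  have h1 := (hmert R hR1).1
  have h2 := (hmert (M * R) (Nat.mul_pos hM1 hR1)).2
  have e : D * (M * R) ^ n = A * R ^ n := by rw [hA, mul_pow]; ring
  rw [e, Nat.cast_mul, Real.log_mul hM0.ne' (by positivity)] at h2
  have hsub : degOne O (R ^ n) ⊆ degOne O (A * R ^ n) := by
    intro 𝔭 h
    rw [mem_degOne] at h ⊢
    exact ⟨⟨h.1.1.trans (Nat.le_mul_of_pos_left _ hA1), h.1.2⟩, h.2⟩
  rw [← Finset.sum_sdiff hsub] at h2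
  set S := degOne O (A * R ^ n) \ degOne O (R ^ n) with hS
  have hone : 1 ≤ ∑ 𝔭 ∈ S, Real.log (Ideal.absNorm 𝔭) / (Ideal.absNorm 𝔭 : ℝ) := by
    linarith
  set g : ℕ → ℝ := fun p => if p ∈ Z then Real.log x / (R : ℝ) ^ n else 0 with hg
  have hg0 : ∀ p, 0 ≤ g p := fun p => by
    rw [hg]; dsimp only; split_ifs <;> positivity
  have hSg : ∀ 𝔭 ∈ S, Real.log (Ideal.absNorm 𝔭) / (Ideal.absNorm 𝔭 : ℝ) ≤
      g (Ideal.absNorm 𝔭).minFac := by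
    intro 𝔭 h
    obtain ⟨ha, hb⟩ := Finset.mem_sdiff.mp h
    obtain ⟨⟨hle, hpr⟩, hq⟩ := mem_degOne.mp ha
    have hgt : R ^ n < Ideal.absNorm 𝔭 := by
      by_contra hcon
      exact hb (mem_degOne.mpr ⟨⟨not_lt.mp hcon, hpr⟩, hq⟩)
    rw [hq.minFac_eq]
    have hmem : Ideal.absNorm 𝔭 ∈ Z :=
      Finset.mem_filter.mpr ⟨Finset.mem_Icc.mpr ⟨hq.pos, hle.trans hARx⟩, hq, hRm.trans hgt, 𝔭, rfl⟩
    rw [hg]; dsimp only; rw [if_pos hmem]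
    have hq0 : (0 : ℝ) < Ideal.absNorm 𝔭 := by exact_mod_cast hq.pos
    have h3 : (Ideal.absNorm 𝔭 : ℝ) ≤ x := by exact_mod_cast hle.trans hARx
    have h4 : (R : ℝ) ^ n ≤ Ideal.absNorm 𝔭 := by exact_mod_cast hgt.le
    gcongr
  have h3 := sum_primes_le (O := O) (T := S) (Y := x)
    (fun 𝔭 h => (mem_degOne.mp (Finset.mem_sdiff.mp h).1).1.2)
    (fun 𝔭 h => (mem_degOne.mp (Finset.mem_sdiff.mp h).1).1.1.trans hARx) hg0
  have h4 : ∑ p ∈ (Finset.Icc 1 x).filter Nat.Prime, g p ≤ Z.card * (Real.log x / (R : ℝ) ^ n) := by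
    rw [hg, ← Finset.sum_filter, Finset.sum_const, nsmul_eq_mul]
    have hc : (((Finset.Icc 1 x).filter Nat.Prime).filter fun p => p ∈ Z).card ≤ Z.card :=
      Finset.card_le_card fun p h => (Finset.mem_filter.mp h).2
    gcongr
  rw [← hn] at h3
  have h5 : 1 ≤ n * (Z.card * (Real.log x / (R : ℝ) ^ n)) :=
    hone.trans ((Finset.sum_le_sum hSg).trans (h3.trans (mul_le_mul_of_nonneg_left h4 hn0.le)))
  have hRn : (0 : ℝ) < (R : ℝ) ^ n := by positivity
  have h6 : (R : ℝ) ^ n ≤ n * Z.card * Real.log x := by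
    have := mul_le_mul_of_nonneg_right h5 hRn.le
    calc (R : ℝ) ^ n = 1 * (R : ℝ) ^ n := by ring
      _ ≤ _ := this
      _ = _ := by field_simp
  rw [div_le_iff₀ hlogx, one_div_mul_eq_div, div_le_iff₀ (by positivity)]
  rw [div_le_iff₀ hA0] at hxR
  calc (x : ℝ) ≤ 2 ^ n * (R : ℝ) ^ n * A := hxR
    _ ≤ 2 ^ n * (n * Z.card * Real.log x) * A := by gcongr
    _ = _ := by ring

end Count

/-! ### Primes modulo which a polynomial has a root -/

/-- A prime ideal of degree one over `p` in a field where `P` has a root and which contains the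
`Q`-th roots of unity gives a root of `P` modulo `p` and forces `p ≡ 1` modulo `Q`. -/
theorem root_and_congr_of_degOne {K : Type*} [Field K] [NumberField K] (P : ℤ[X]) {α : K}
    (hα : aeval α P = 0) {Q : ℕ} {ζ : K} (hζ : IsPrimitiveRoot ζ Q) {p : ℕ}
    (hp : p.Prime) (ha : (P.leadingCoeff : ZMod p) ≠ 0) (hQ : (Q : ZMod p) ≠ 0)
    {𝔭 : Ideal (NumberField.RingOfIntegers K)} (h𝔭 : Ideal.absNorm 𝔭 = p) :
    Q ∣ p - 1 ∧ ∃ t : ZMod p, (P.map (Int.castRingHom (ZMod p))).eval t = 0 := by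
  have : Fact p.Prime := ⟨hp⟩
  have hfin : Finite (NumberField.RingOfIntegers K ⧸ 𝔭) := by
    rw [← Ideal.absNorm_ne_zero_iff, h𝔭]; exact hp.ne_zero
  have := Fintype.ofFinite (NumberField.RingOfIntegers K ⧸ 𝔭)
  have hcard : Fintype.card (NumberField.RingOfIntegers K ⧸ 𝔭) = p := by
    rw [← h𝔭, Ideal.absNorm_apply, Submodule.cardQuot_apply, Nat.card_eq_fintype_card]
  let φ : NumberField.RingOfIntegers K →+* ZMod p :=
    ((ZMod.ringEquivOfPrime _ hp hcard).symm : _ →+* ZMod p).comp (Ideal.Quotient.mk 𝔭)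
  have hinj : Function.Injective (algebraMap (NumberField.RingOfIntegers K) K) :=
    NumberField.RingOfIntegers.coe_injective
  constructor
  · have hQ0 : 0 < Q := Nat.pos_of_ne_zero (by rintro rfl; simp at hQ)
    have : NeZero Q := ⟨hQ0.ne'⟩
    let z : NumberField.RingOfIntegers K := ⟨ζ, hζ.isIntegral hQ0⟩
    have hz : IsPrimitiveRoot z Q :=
      IsPrimitiveRoot.of_map_of_injective (f := algebraMap (NumberField.RingOfIntegers K) K)
        (by exact hζ) hinj
    have hroot : IsRoot (cyclotomic Q (NumberField.RingOfIntegers K)) z :=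
      hz.isRoot_cyclotomic hQ0
    have hroot' : IsRoot (cyclotomic Q (ZMod p)) (φ z) := by
      have := hroot.map (f := φ)
      rwa [map_cyclotomic] at this
    have : NeZero (Q : ZMod p) := ⟨hQ⟩
    have hprim := isRoot_cyclotomic_iff.mp hroot'
    refine hprim.dvd_of_pow_eq_one _ (ZMod.pow_card_sub_one_eq_one ?_)
    exact hprim.ne_zero hQ0.ne'
  · have hIntegral : IsIntegral ℤ ((P.leadingCoeff : ℤ) • α) := isIntegral_leadingCoeff_smul P α hα
    let β : NumberField.RingOfIntegers K := ⟨P.leadingCoeff • α, hIntegral⟩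
    have hβ : aeval β (P.scaleRoots P.leadingCoeff) = 0 := by
      apply hinj
      rw [map_zero, ← aeval_algebraMap_apply]
      have e : algebraMap (NumberField.RingOfIntegers K) K β = algebraMap ℤ K P.leadingCoeff * α := by
        rw [← Algebra.smul_def]; rfl
      rw [e]
      exact scaleRoots_aeval_eq_zero hα
    have h1 : eval₂ (Int.castRingHom (ZMod p)) (φ β) (P.scaleRoots P.leadingCoeff) = 0 := by
      have h2 := congrArg φ hβ
      rw [map_zero, aeval_def, hom_eval₂] at h2
      rwa [RingHom.ext_int (Int.castRingHom (ZMod p)) (φ.comp (algebraMap ℤ _))]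
    refine ⟨(P.leadingCoeff : ZMod p)⁻¹ * φ β, ?_⟩
    have h3 := P.scaleRoots_eval₂_mul (Int.castRingHom (ZMod p))
      ((P.leadingCoeff : ZMod p)⁻¹ * φ β) P.leadingCoeff
    rw [eq_intCast, mul_inv_cancel_left₀ ha, h1] at h3
    rw [eval_map]
    exact (mul_eq_zero.mp h3.symm).resolve_left (pow_ne_zero _ ha)

/-- At least `c * x / log x` primes up to `x` are `1` modulo `Q` and such that `P` has a root modulo them: take
degree-one primes in the splitting field of `P` times the `Q`-th cyclotomic polynomial. -/
theorem count_good_primes (P : ℤ[X]) (hN : 1 ≤ P.natDegree) {Q : ℕ} (hQ : 1 ≤ Q) (m : ℕ) :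
    ∃ c : ℝ, 0 < c ∧ ∃ x₀ : ℕ, ∀ x : ℕ, x₀ ≤ x → ∃ S : Finset ℕ,
      (∀ p ∈ S, p ≤ x ∧ p.Prime ∧ m < p ∧ Q ∣ p - 1 ∧
        ∃ t : ZMod p, (P.map (Int.castRingHom (ZMod p))).eval t = 0) ∧
      c * x / Real.log x ≤ (S.card : ℝ) := by
  classical
  have hP0 : P ≠ 0 := by rintro rfl; simp at hN
  set F : ℚ[X] := P.map (Int.castRingHom ℚ) * cyclotomic Q ℚ with hF
  have hmap0 : P.map (Int.castRingHom ℚ) ≠ 0 :=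
    (Polynomial.map_ne_zero_iff (RingHom.injective_int _)).mpr hP0
  have hF0 : F ≠ 0 := mul_ne_zero hmap0 (cyclotomic_ne_zero Q ℚ)
  let K := F.SplittingField
  have hnf : NumberField K := { to_charZero := inferInstance, to_finiteDimensional := inferInstance }
  have hsplit := SplittingField.splits F
  have hF0' : F.map (algebraMap ℚ K) ≠ 0 := Polynomial.map_ne_zero hF0
  obtain ⟨α, hα⟩ : ∃ α : K, aeval α P = 0 := by
    have h1 : (P.map (Int.castRingHom ℚ)).degree ≠ 0 := by
      rw [degree_map_eq_of_injective (RingHom.injective_int _)]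
      intro h
      have : P.natDegree = 0 := natDegree_eq_of_degree_eq_some h
      omega
    obtain ⟨α, hα⟩ := Splits.exists_eval_eq_zero (f := (P.map (Int.castRingHom ℚ)).map (algebraMap ℚ K))
      (hsplit.of_dvd hF0' (Polynomial.map_dvd _ ⟨_, hF⟩)) (by rwa [degree_map])
    refine ⟨α, ?_⟩
    rw [map_map, eval_map] at hα
    rw [aeval_def, ← hα]
    congr 1
  obtain ⟨ζ, hζ⟩ : ∃ ζ : K, IsPrimitiveRoot ζ Q := by
    obtain ⟨ζ, hζ⟩ := Splits.exists_eval_eq_zero (f := (cyclotomic Q ℚ).map (algebraMap ℚ K))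
      (hsplit.of_dvd hF0' (Polynomial.map_dvd _ ⟨_, by rw [hF, mul_comm]⟩)) (by
        rw [degree_map]; exact (degree_cyclotomic_pos Q ℚ hQ).ne')
    rw [map_cyclotomic] at hζ
    exact ⟨ζ, (isRoot_cyclotomic_iff_charZero hQ).mp hζ⟩
  obtain ⟨c, hc, x₀, hx⟩ := count_degOne (NumberField.RingOfIntegers K)
    (m + Q + P.leadingCoeff.natAbs)
  refine ⟨c, hc, x₀, fun x hxx => ⟨_, ?_, hx x hxx⟩⟩
  intro p hp
  obtain ⟨hpx, hpp, hpm, 𝔭, h𝔭⟩ := Finset.mem_filter.mp hp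
  have hlc : P.leadingCoeff ≠ 0 := leadingCoeff_ne_zero.mpr hP0
  have h := root_and_congr_of_degOne P hα hζ hpp (by
      rw [Ne, ZMod.intCast_zmod_eq_zero_iff_dvd]
      intro hd
      have := Nat.le_of_dvd (Int.natAbs_pos.mpr hlc) (Int.natCast_dvd.mp hd)
      omega) (by
      rw [Ne, ZMod.natCast_eq_zero_iff]
      intro hd
      have := Nat.le_of_dvd hQ hd
      omega) h𝔭
  exact ⟨(Finset.mem_Icc.mp hpx).2, hpp, by omega, h.1, h.2⟩

/-! ### Local solubility and the final count -/

/-- A Bézout identity for `P` and `P'` with integral coefficients shows that `P` stays separable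
modulo all large primes. -/
theorem exists_bound_separable (P : ℤ[X]) (hsep : (P.map (Int.castRingHom ℚ)).Separable) :
    ∃ M : ℕ, ∀ p : ℕ, p.Prime → M < p → (P.map (Int.castRingHom (ZMod p))).Separable := by
  obtain ⟨a, b, hab⟩ := hsep
  obtain ⟨c₁, A, hc₁, hA⟩ := exists_int_multiple a
  obtain ⟨c₂, B, hc₂, hB⟩ := exists_int_multiple b
  have key : C c₂ * A * P + C c₁ * B * derivative P = C (c₁ * c₂) := by
    apply map_injective (Int.castRingHom ℚ) (RingHom.injective_int _)
    rw [derivative_map] at hab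
    rw [Polynomial.map_add, Polynomial.map_mul, Polynomial.map_mul, Polynomial.map_mul,
      Polynomial.map_mul, map_C, map_C, map_C, hA, hB, map_mul, C_mul]
    simp only [Int.coe_castRingHom]
    linear_combination C (c₁ : ℚ) * C (c₂ : ℚ) * hab
  refine ⟨(c₁ * c₂).natAbs, fun p hp hM => ?_⟩
  have : Fact p.Prime := ⟨hp⟩
  have hD : ((c₁ * c₂ : ℤ) : ZMod p) ≠ 0 := by
    rw [Ne, ZMod.intCast_zmod_eq_zero_iff_dvd]
    intro h
    have := Int.natAbs_dvd_natAbs.2 h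
    rw [Int.natAbs_natCast] at this
    exact absurd (Nat.le_of_dvd (Int.natAbs_pos.2 (mul_ne_zero hc₁ hc₂)) this) (by omega)
  have key2 := congrArg (Polynomial.map (Int.castRingHom (ZMod p))) key
  rw [Polynomial.map_add, Polynomial.map_mul, Polynomial.map_mul, Polynomial.map_mul,
    Polynomial.map_mul, map_C, map_C, map_C] at key2
  simp only [Int.coe_castRingHom] at key2
  have hinv : C (((c₁ * c₂ : ℤ) : ZMod p)⁻¹) * C (((c₁ * c₂ : ℤ) : ZMod p)) = 1 := by
    rw [← C_mul, inv_mul_cancel₀ hD, C_1]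
  refine ⟨C (((c₁ * c₂ : ℤ) : ZMod p)⁻¹) * (C (c₂ : ZMod p) * A.map (Int.castRingHom (ZMod p))),
    C (((c₁ * c₂ : ℤ) : ZMod p)⁻¹) * (C (c₁ : ZMod p) * B.map (Int.castRingHom (ZMod p))), ?_⟩
  rw [derivative_map]
  linear_combination C (((c₁ * c₂ : ℤ) : ZMod p)⁻¹) * key2 + hinv

/-- The signed squarefree part `d₀` of a nonzero integer `a`. -/
theorem exists_squarefree_part {a : ℤ} (ha : a ≠ 0) :
    ∃ d₀ w : ℤ, d₀ ≠ 0 ∧ w ≠ 0 ∧ Squarefree d₀.natAbs ∧ d₀ * a = w ^ 2 := by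
  obtain ⟨u, v, huv, hu⟩ := Nat.sq_mul_squarefree a.natAbs
  have ha' : a.natAbs ≠ 0 := Int.natAbs_ne_zero.2 ha
  have hu0 : u ≠ 0 := by rintro rfl; simp at huv; omega
  have hv0 : v ≠ 0 := by rintro rfl; simp at huv; omega
  have hs : a.sign ^ 2 = 1 := by
    rcases lt_or_gt_of_ne ha with h | h
    · rw [Int.sign_eq_neg_one_of_neg h]; norm_num
    · rw [Int.sign_eq_one_of_pos h]; norm_num
  refine ⟨a.sign * u, u * v, mul_ne_zero (by simpa using ha) (by exact_mod_cast hu0),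
    mul_ne_zero (by exact_mod_cast hu0) (by exact_mod_cast hv0), ?_, ?_⟩
  · rw [Int.natAbs_mul, Int.natAbs_sign_of_ne_zero ha]; simpa using hu
  · have h1 : a = a.sign * ((v : ℤ) ^ 2 * u) := by
      have : ((v ^ 2 * u : ℕ) : ℤ) = (a.natAbs : ℤ) := by rw [huv]
      rw [Nat.cast_mul, Nat.cast_pow] at this
      rw [this]; exact (Int.sign_mul_natAbs a).symm
    calc a.sign * u * a = a.sign * u * (a.sign * ((v : ℤ) ^ 2 * u)) := by rw [← h1]
      _ = a.sign ^ 2 * (u * v) ^ 2 := by ring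
      _ = _ := by rw [hs, one_mul]

theorem intCast_ne_zero_of_natAbs_lt {p : ℕ} {n : ℤ} (hn : n ≠ 0) (h : n.natAbs < p) :
    (n : ZMod p) ≠ 0 := by
  rw [Ne, ZMod.intCast_zmod_eq_zero_iff_dvd]
  intro hd
  have := Int.natAbs_dvd_natAbs.2 hd
  rw [Int.natAbs_natCast] at this
  exact absurd (Nat.le_of_dvd (Int.natAbs_pos.2 hn) this) (by omega)

/-- Local solubility of the twist by `d₀ * ℓ` at every prime `p`. For `p ≤ M` the congruence on
`ℓ` makes the points at infinity rational, for `p = ℓ` a root of `P` modulo `ℓ` lifts, and for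
the remaining `p > M` there is a nonzero square value modulo `p`. -/
theorem locally_soluble (P : ℤ[X]) (hN : 1 ≤ P.natDegree) {M : ℕ}
    (hMsep : ∀ p : ℕ, p.Prime → M < p → (P.map (Int.castRingHom (ZMod p))).Separable)
    (hMN : 100 * (P.natDegree + 1) ^ 3 ≤ M) (hMa : P.leadingCoeff.natAbs ≤ M)
    {d₀ w : ℤ} (hd₀ : d₀ ≠ 0) (hMd : d₀.natAbs ≤ M) (hw : d₀ * P.leadingCoeff = w ^ 2)
    {ℓ : ℕ} (hℓ : ℓ.Prime) (hMℓ : M < ℓ) (hQ : 8 * M.factorial ∣ ℓ - 1)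
    (hroot : ∃ t : ZMod ℓ, (P.map (Int.castRingHom (ZMod ℓ))).eval t = 0)
    (p : ℕ) [hp : Fact p.Prime] :
    (∃ t y : ℚ_[p], y ^ 2 = ((d₀ * ℓ : ℤ) : ℚ_[p]) * aeval t P) ∨
      (∃ y : ℚ_[p], ((d₀ * ℓ * P.leadingCoeff : ℤ) : ℚ_[p]) = y ^ 2) := by
  by_cases hpM : p ≤ M
  · right
    have h1 : (8 * p : ℤ) ∣ (ℓ : ℤ) - 1 := by
      have h2 : 8 * p ∣ ℓ - 1 :=
        (mul_dvd_mul_left 8 (Nat.dvd_factorial hp.out.pos hpM)).trans hQ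
      have h3 := Int.natCast_dvd_natCast.2 h2
      rwa [Nat.cast_sub hℓ.one_lt.le, Nat.cast_mul, Nat.cast_one] at h3
    obtain ⟨r, hr⟩ := isSquare_of_modEq_one h1
    refine ⟨(w : ℚ_[p]) * (r : ℚ_[p]), ?_⟩
    have hr' : ((ℓ : ℤ) : ℚ_[p]) = (r : ℚ_[p]) * r := by
      have := congrArg (fun z : ℤ_[p] => (z : ℚ_[p])) hr
      simpa using this
    rw [show d₀ * ℓ * P.leadingCoeff = w ^ 2 * ℓ by rw [← hw]; ring, Int.cast_mul, hr']
    push_cast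
    ring
  · left
    push Not at hpM
    by_cases hpl : p = ℓ
    · subst hpl
      obtain ⟨t, ht⟩ := hroot
      obtain ⟨z, hz⟩ := padic_root P (hMsep p hℓ hMℓ) ht
      exact ⟨z, 0, by rw [hz]; simp⟩
    · have hlc : P.leadingCoeff ≠ 0 := by
        rw [Ne, leadingCoeff_eq_zero]; rintro rfl; simp at hN
      have hdegp : (P.map (Int.castRingHom (ZMod p))).natDegree = P.natDegree :=
        natDegree_map_of_leadingCoeff_ne_zero _
          (intCast_ne_zero_of_natAbs_lt hlc (by omega))
      have hd : ((d₀ * ℓ : ℤ) : ZMod p) ≠ 0 := by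
        push_cast
        refine mul_ne_zero (intCast_ne_zero_of_natAbs_lt hd₀ (by omega)) ?_
        rw [Ne, ZMod.natCast_eq_zero_iff]
        intro h
        exact hpl ((Nat.prime_dvd_prime_iff_eq hp.out hℓ).1 h)
      obtain ⟨t, ht, hsq⟩ := exists_square_value (hMsep p hp.out hpM) (by omega)
        (by rw [hdegp]; omega) hd
      refine padic_point ?_ P (mul_ne_zero hd ht) hsq
      have : 1 ≤ (P.natDegree + 1) ^ 3 := Nat.one_le_pow _ _ (by omega)
      omega

theorem sqfInt_mul_prime {d₀ : ℤ} (hd₀ : d₀ ≠ 0) (hsq : Squarefree d₀.natAbs) {ℓ : ℕ}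
    (hℓ : ℓ.Prime) (hlt : d₀.natAbs < ℓ) : SqfInt (d₀ * ℓ) := by
  have hcop : Nat.Coprime d₀.natAbs ℓ :=
    ((hℓ.coprime_iff_not_dvd).2 fun h =>
      absurd (Nat.le_of_dvd (Int.natAbs_pos.2 hd₀) h) (by omega)).symm
  refine ⟨mul_ne_zero hd₀ (by exact_mod_cast hℓ.ne_zero), fun h => ?_, fun p hp h => ?_⟩
  · have := congrArg Int.natAbs h
    rw [Int.natAbs_mul, Int.natAbs_natCast, Int.natAbs_one] at this
    exact hℓ.one_lt.ne' (Nat.eq_one_of_mul_eq_one_left this)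
  · have h1 := Int.natAbs_dvd_natAbs.2 h
    rw [Int.natAbs_mul, Int.natAbs_pow, Int.natAbs_natCast, Int.natAbs_natCast, sq] at h1
    have h2 : Squarefree (d₀.natAbs * ℓ) :=
      (Nat.squarefree_mul hcop).2 ⟨hsq, hℓ.prime.squarefree⟩
    exact hp.one_lt.ne' (Nat.isUnit_iff.1 (h2 p h1))

theorem not_square_at_infinity {d₀ a w : ℤ} (hw0 : w ≠ 0) (hw : d₀ * a = w ^ 2) {ℓ : ℕ}
    (hℓ : ℓ.Prime) : ¬ ∃ y : ℚ, ((d₀ * ℓ * a : ℤ) : ℚ) = y ^ 2 := by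
  rintro ⟨y, hy⟩
  have hw0' : (w : ℚ) ≠ 0 := by exact_mod_cast hw0
  rw [show d₀ * ℓ * a = w ^ 2 * ℓ by rw [← hw]; ring] at hy
  have h1 : IsSquare (((ℓ : ℕ) : ℚ)) := by
    refine ⟨y / w, ?_⟩
    push_cast at hy
    field_simp
    linarith
  rw [Rat.isSquare_natCast_iff] at h1
  exact hℓ.prime.irreducible.not_isSquare h1

/-- A main term of order `x / log x`, evaluated at `x / k`, dominates `x ^ (2 / 3)`. -/
theorem main_term_dominates {c K : ℝ} (hc : 0 < c) (hK : 0 < K) {k : ℕ} (hk : 1 ≤ k) :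
    ∃ x₀ : ℕ, ∀ x : ℕ, x₀ ≤ x →
      c / (4 * k) * x / Real.log x + K * (x : ℝ) ^ ((2 : ℝ) / 3) ≤
        c * (x / k : ℕ) / Real.log (x / k : ℕ) := by
  have hk0 : (0 : ℝ) < k := by exact_mod_cast hk
  have hlo := (isLittleO_log_rpow_atTop (r := 1 / 3) (by norm_num)).bound
    (c := c / (4 * k * K)) (by positivity)
  have hev := tendsto_natCast_atTop_atTop (R := ℝ) |>.eventually hlo
  obtain ⟨x₁, hx₁⟩ := Filter.eventually_atTop.1 hev
  refine ⟨max x₁ (2 * k + 2), fun x hx => ?_⟩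
  have hx1 := hx₁ x (le_trans (le_max_left _ _) hx)
  have hx2 : 2 * k + 2 ≤ x := le_trans (le_max_right _ _) hx
  have hxpos : (0 : ℝ) < x := by exact_mod_cast (by omega : 0 < x)
  have hlog : 0 < Real.log x := Real.log_pos (by exact_mod_cast (by omega : 1 < x))
  rw [Real.norm_of_nonneg hlog.le, Real.norm_of_nonneg (by positivity)] at hx1
  have hq2 : 2 ≤ x / k := (Nat.le_div_iff_mul_le (by omega)).2 (by omega)
  have hqle : x / k ≤ x := Nat.div_le_self _ _
  have hlogq : 0 < Real.log (x / k : ℕ) :=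
    Real.log_pos (by exact_mod_cast (by omega : 1 < x / k))
  have hlogle : Real.log (x / k : ℕ) ≤ Real.log x :=
    Real.log_le_log (by exact_mod_cast (by omega : 0 < x / k)) (by exact_mod_cast hqle)
  have hqlow : (x : ℝ) / (2 * k) ≤ (x / k : ℕ) := by
    have h1 : x < (x / k + 1) * k := by
      rw [mul_comm]; exact Nat.lt_mul_div_succ x (by omega)
    have h2 : x ≤ (x / k) * (2 * k) := by nlinarith
    rw [div_le_iff₀ (by positivity)]
    exact_mod_cast h2
  have h3 : c * (x / (2 * k)) / Real.log x ≤ c * (x / k : ℕ) / Real.log (x / k : ℕ) := by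
    gcongr
  refine le_trans ?_ h3
  have h4 : K * (x : ℝ) ^ ((2 : ℝ) / 3) * Real.log x ≤ c / (4 * k) * x := by
    calc K * (x : ℝ) ^ ((2 : ℝ) / 3) * Real.log x
        ≤ K * (x : ℝ) ^ ((2 : ℝ) / 3) * (c / (4 * k * K) * (x : ℝ) ^ ((1 : ℝ) / 3)) := by gcongr
      _ = c / (4 * k) * ((x : ℝ) ^ ((2 : ℝ) / 3) * (x : ℝ) ^ ((1 : ℝ) / 3)) := by
        field_simp
      _ = c / (4 * k) * x := by
        rw [← Real.rpow_add hxpos]; norm_num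
  have h5 : K * (x : ℝ) ^ ((2 : ℝ) / 3) ≤ c / (4 * k) * x / Real.log x := by
    rwa [le_div_iff₀ hlog]
  calc c / (4 * k) * x / Real.log x + K * (x : ℝ) ^ ((2 : ℝ) / 3)
      ≤ c / (4 * k) * x / Real.log x + c / (4 * k) * x / Real.log x := by gcongr
    _ = c * (x / (2 * k)) / Real.log x := by field_simp; ring

end HasseTwist

theorem stmt4 (habc : ABCConjecture) (P : Polynomial ℤ)
    (hsep : (P.map (Int.castRingHom ℚ)).Separable)
    (hdeg : 8 ≤ P.natDegree) (heven : Even P.natDegree)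
    (hnoroot : ∀ t : ℚ, Polynomial.aeval t P ≠ 0) :
    ∃ C : ℝ, 0 < C ∧ ∃ x₀ : ℕ, ∀ x : ℕ, x₀ ≤ x →
      C * x / Real.log x ≤
        ({d : ℤ | SqfInt d ∧ |d| ≤ (x : ℤ) ∧
          (∀ (p : ℕ) [Fact p.Prime],
            (∃ t y : ℚ_[p], y ^ 2 = (d : ℚ_[p]) * Polynomial.aeval t P) ∨
            (∃ y : ℚ_[p], ((d * P.leadingCoeff : ℤ) : ℚ_[p]) = y ^ 2)) ∧
          ((∃ t y : ℝ, y ^ 2 = (d : ℝ) * Polynomial.aeval t P) ∨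
            0 < d * P.leadingCoeff) ∧
          (¬ ∃ t y : ℚ, y ^ 2 = (d : ℚ) * Polynomial.aeval t P) ∧
          (¬ ∃ y : ℚ, ((d * P.leadingCoeff : ℤ) : ℚ) = y ^ 2)}.ncard : ℝ) := by
  classical
  have hlc : P.leadingCoeff ≠ 0 := by
    rw [Ne, leadingCoeff_eq_zero]; rintro rfl; simp at hdeg
  obtain ⟨d₀, w, hd₀, hw0, hsq, hw⟩ := HasseTwist.exists_squarefree_part hlc
  obtain ⟨M₀, hM₀⟩ := HasseTwist.exists_bound_separable P hsep
  -- Primes up to `M` are handled by the congruence on `ℓ`, all larger ones are primes of good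
  -- reduction large enough for point counting.
  obtain ⟨M, hM1, hM2, hM3, hM4⟩ : ∃ M : ℕ, M₀ ≤ M ∧ 100 * (P.natDegree + 1) ^ 3 ≤ M ∧
      P.leadingCoeff.natAbs ≤ M ∧ d₀.natAbs ≤ M :=
    ⟨M₀ + 100 * (P.natDegree + 1) ^ 3 + P.leadingCoeff.natAbs + d₀.natAbs,
      by omega, by omega, by omega, by omega⟩
  have hMsep : ∀ p : ℕ, p.Prime → M < p → (P.map (Int.castRingHom (ZMod p))).Separable :=
    fun p hp h => hM₀ p hp (by omega)
  obtain ⟨K, hK, hcount⟩ :=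
    HasseTwist.count_rational_points habc P hsep hdeg heven hnoroot hd₀
  obtain ⟨c, hc, x₁, hgood⟩ := HasseTwist.count_good_primes P (by omega) (Q := 8 * M.factorial)
    (Nat.mul_pos (by norm_num) M.factorial_pos) M
  have hk : 1 ≤ d₀.natAbs := Int.natAbs_pos.2 hd₀
  have hk0 : (0 : ℝ) < d₀.natAbs := by exact_mod_cast hk
  obtain ⟨x₂, hdom⟩ := HasseTwist.main_term_dominates hc hK hk
  refine ⟨c / (4 * d₀.natAbs), by positivity, max x₂ (x₁ * d₀.natAbs), fun x hx => ?_⟩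
  have hxq : x₁ ≤ x / d₀.natAbs :=
    (Nat.le_div_iff_mul_le hk).2 (le_trans (le_max_right _ _) hx)
  obtain ⟨S, hS, hScard⟩ := hgood _ hxq
  have habs : ∀ ℓ ∈ S, |d₀ * (ℓ : ℤ)| ≤ (x : ℤ) := by
    intro ℓ hℓ
    have h1 := (Nat.le_div_iff_mul_le hk).1 (hS ℓ hℓ).1
    rw [abs_mul, Int.abs_eq_natAbs d₀, Nat.abs_cast, mul_comm]
    exact_mod_cast h1
  let bad : ℕ → Prop := fun ℓ => ∃ t y : ℚ, y ^ 2 = ((d₀ * ℓ : ℤ) : ℚ) * aeval t P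
  have hbad : ((S.filter bad).card : ℝ) ≤ K * (x : ℝ) ^ ((2 : ℝ) / 3) := by
    refine hcount x _ fun ℓ hℓ => ?_
    rw [Finset.mem_filter] at hℓ
    exact ⟨(hS ℓ hℓ.1).2.1, habs ℓ hℓ.1, hℓ.2⟩
  have hsplit : ((S.filter bad).card : ℝ) + ((S.filter fun ℓ => ¬ bad ℓ).card : ℝ) = S.card := by
    exact_mod_cast Finset.card_filter_add_card_filter_not (s := S) bad
  have hinj : Function.Injective fun ℓ : ℕ => d₀ * (ℓ : ℤ) := by
    intro a b hab
    exact_mod_cast mul_left_cancel₀ hd₀ hab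
  have hmain := hdom x (le_trans (le_max_left _ _) hx)
  refine le_trans (by linarith : _ ≤ ((S.filter fun ℓ => ¬ bad ℓ).card : ℝ)) ?_
  rw [← Finset.card_image_of_injective _ hinj, ← Set.ncard_coe_finset]
  refine Nat.cast_le.2 (Set.ncard_le_ncard ?_ ?_)
  · intro d hd
    rw [Finset.mem_coe, Finset.mem_image] at hd
    obtain ⟨ℓ, hℓ, rfl⟩ := hd
    rw [Finset.mem_filter] at hℓ
    obtain ⟨hℓS, hnb⟩ := hℓ
    obtain ⟨-, hprime, hMl, hQ, hroot⟩ := hS ℓ hℓS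
    refine ⟨HasseTwist.sqfInt_mul_prime hd₀ hsq hprime (by omega), habs ℓ hℓS, ?_, ?_, hnb,
      HasseTwist.not_square_at_infinity hw0 hw hprime⟩
    · intro p _
      exact HasseTwist.locally_soluble P (by omega) hMsep hM2 hM3 hd₀ hM4 hw hprime hMl hQ hroot p
    · right
      rw [show d₀ * ℓ * P.leadingCoeff = w ^ 2 * ℓ by rw [← hw]; ring]
      have : 0 < w ^ 2 := by positivity
      exact mul_pos this (by exact_mod_cast hprime.pos)
  · refine (Set.finite_Icc (-(x : ℤ)) x).subset fun d hd => ?_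
    exact abs_le.1 hd.2.1
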